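/- arXiv:1701.02083 — 2 statements merged into one kernel-verified Lean document; each statement's English description precedes it below -/
import Mathlib

section
/- Let X be a connected finite graph (a compact connected 1-dimensional CW complex) with first Betti number b_1(X) > 1. Then TC(X) = 3. -/
/-!
The upper bound does not use the Betti number. The complement `N` of the edge midpoints deforms to
the vertices, and the complement `M` of the vertices deforms to the midpoints, along paths whose
endpoints are locally constant. A pair of such deformations gives a motion planner over any subset
of the product of their domains (`IsDeformation.hasMotionPlanner`). With `ρ` the distance to the
vertices, the sets `N × N`, `M × M` and `{ρ x < ρ y} ∪ {ρ y < ρ x}` cover `X × X`; the two parts of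
the third set are disjoint and lie in `N × M` and `M × N`.

For the lower bound let two open sets `U`, `V` with motion planners cover `X × X`. For maps
`u, v : X → ℝ / ℤ` the difference `u(y) - u(x)` lifts to a real function over `U`, and the one of `v`
does over `V`; on the torus of a pair of loops `a`, `b` the product of the two pulled back classes
therefore vanishes. This says `w_u(a) w_v(b) = w_u(b) w_v(a)` for the winding numbers, and it is
proved by a discrete summation on a grid subordinate to the cover (`grid_periods`,
`not_two_motionPlanners`).

It remains to detect homology by winding numbers. Each edge `e` defines a map `edgeCircle e` to the
circle, collapsing all other edges. A path in `X` is homologous, up to terms depending only on its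
endpoints, to the sum over `e` of `e` times the signed number of passages through `e`
(`FinGraph.chord_formula`). This is proved locally, using the same deformations of `N` and `M`, and spreads
along the path by connectedness of the line. So the class of a singular 1-cycle is determined by its
vector of crossing numbers, and these are combinations of winding numbers of loops at a base point
(`FinGraph.sum_eq_totalCrossings`, `totalCrossings_eq`). If the first Betti number exceeds one there
are two independent classes, whose crossing vectors are not proportional; but the identity for
winding numbers makes any two crossing vectors proportional.
-/

open unitInterval

/-- A continuous motion-planning section of the path fibration `π : PX → X × X`,
`π γ = (γ 0, γ 1)`, over a subset `U ⊆ X × X`.  Here `PX = C(I, X)` is the space of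
paths in `X` with the compact–open topology. -/
def HasMotionPlanner {X : Type*} [TopologicalSpace X] (U : Set (X × X)) : Prop :=
  ∃ s : C(U, C(unitInterval, X)), ∀ p : U, s p 0 = (p : X × X).1 ∧ s p 1 = (p : X × X).2

/-- The topological complexity of a space `X`: the minimal number `k` such that `X × X`
can be covered by `k` open subsets, each admitting a continuous section of the path
fibration; `⊤` (infinity) if no such `k` exists. -/
noncomputable def topologicalComplexity (X : Type*) [TopologicalSpace X] : ℕ∞ :=
  sInf {c : ℕ∞ | ∃ k : ℕ, c = k ∧ ∃ U : Fin k → Set (X × X),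
    (∀ i, IsOpen (U i)) ∧ (⋃ i, U i) = Set.univ ∧ ∀ i, HasMotionPlanner (U i)}

/-- A finite (multi-)graph: finitely many vertices and edges, each edge having a
source and a target vertex. -/
structure FinGraph where
  V : Type
  E : Type
  [fintypeV : Fintype V]
  [fintypeE : Fintype E]
  s : E → V
  t : E → V

attribute [instance] FinGraph.fintypeV FinGraph.fintypeE

namespace FinGraph

variable (G : FinGraph)

instance : TopologicalSpace G.V := ⊥
instance : TopologicalSpace G.E := ⊥

/-- The gluing relation of the geometric realization: the endpoints of each edge
(a copy of `[0,1]`) are identified with its source and target vertices. -/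
inductive GlueRel (G : FinGraph) :
    (G.E × unitInterval ⊕ G.V) → (G.E × unitInterval ⊕ G.V) → Prop
  | src (e : G.E) : GlueRel G (Sum.inl (e, 0)) (Sum.inr (G.s e))
  | tgt (e : G.E) : GlueRel G (Sum.inl (e, 1)) (Sum.inr (G.t e))

/-- The geometric realization of a finite graph: a compact 1-dimensional CW complex. -/
def Space (G : FinGraph) : Type := Quot (GlueRel G)

instance : TopologicalSpace G.Space := inferInstanceAs (TopologicalSpace (Quot _))

/-- The point of the realization corresponding to a vertex. -/
def vtx (v : G.V) : G.Space := Quot.mk _ (Sum.inr v)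

/-- The point of the realization at parameter `x` along the edge `e`. -/
def edgePt (e : G.E) (x : unitInterval) : G.Space := Quot.mk _ (Sum.inl (e, x))

/-- The degree `η(v)` of a vertex: the number of edge-ends incident to it
(a loop counts twice). -/
noncomputable def degree (v : G.V) : ℕ :=
  Nat.card {e : G.E // G.s e = v} + Nat.card {e : G.E // G.t e = v}

end FinGraph



open CategoryTheory

/-- The singular chain complex functor with coefficients in a ring `R`. -/
noncomputable def singularChainComplexFunctor (R : Type) [Ring R] :
    TopCat.{0} ⥤ ChainComplex (ModuleCat R) ℕ :=
  TopCat.toSSet ⋙ ((SimplicialObject.whiskering _ _).obj (ModuleCat.free R)) ⋙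
    AlgebraicTopology.alternatingFaceMapComplex (ModuleCat R)

/-- The `n`-th singular homology functor with coefficients in `R`. -/
noncomputable def singularHomologyFunctor (R : Type) [Ring R] (n : ℕ) :
    TopCat.{0} ⥤ ModuleCat R :=
  singularChainComplexFunctor R ⋙ HomologicalComplex.homologyFunctor _ _ n

/-- The first Betti number: the rank of `H₁(X; ℚ)`. -/
noncomputable def firstBetti (X : Type) [TopologicalSpace X] : Cardinal :=
  Module.rank ℚ ((singularHomologyFunctor ℚ 1).obj (TopCat.of X))

section

open Topology Filter

/-! ### Two motion planners and maps to the circle -/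

/-- Over a set with a motion planner the difference `u p.2 - u p.1` of a circle-valued map has
a continuous real-valued lift: follow the angle `u` along the planned path and lift from `0`. -/
theorem HasMotionPlanner.exists_continuousOn {X : Type*} [TopologicalSpace X] {U : Set (X × X)}
    (h : HasMotionPlanner U) (u : C(X, UnitAddCircle)) :
    ∃ φ : X × X → ℝ, ContinuousOn φ U ∧
      ∀ p ∈ U, (φ p : UnitAddCircle) = u p.2 - u p.1 := by
  classical
  obtain ⟨s, hs⟩ := h
  let H : C(I × U, UnitAddCircle) :=
    ⟨fun x => u (s x.2 x.1) - u (s x.2 0), by fun_prop⟩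
  have h0 : ∀ p : U, H (0, p) = (((0 : C(U, ℝ)) p : ℝ) : UnitAddCircle) := by
    intro p; simp [H]
  let L := (AddCircle.isCoveringMap_coe (1 : ℝ)).liftHomotopy H 0 h0
  have hL := (AddCircle.isCoveringMap_coe (1 : ℝ)).liftHomotopy_lifts H 0 h0
  refine ⟨fun p => if hp : p ∈ U then L (1, ⟨p, hp⟩) else 0, ?_, ?_⟩
  · rw [continuousOn_iff_continuous_domRestrict]
    have : U.domRestrict (fun p => if hp : p ∈ U then L (1, ⟨p, hp⟩) else 0) =
        fun p : U => L (1, p) := by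
      ext p; simp [Set.domRestrict]
    rw [this]; fun_prop
  · intro p hp
    have := congrFun hL (1, ⟨p, hp⟩)
    simp only [hp, dif_pos]
    refine this.trans ?_
    simp [H, (hs ⟨p, hp⟩).1, (hs ⟨p, hp⟩).2]

/-- Two functions on a square grid, periodic up to the constants `(c, p)` and `(d, q)`, have
proportional periods if on every square either `F` is constant along the two edges issuing from the
lower left corner or `G` is constant along the two edges ending at the upper right corner. This is
the vanishing of a cup product: the cochain product of the differentials of `F` and `G` is zero on
each square, and its sum over the torus is `c * q - p * d`. -/
theorem grid_periods {N : ℕ} (F G : ℕ → ℕ → ℝ) (c d p q : ℝ)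
    (hFx : ∀ j, F N j = F 0 j + c) (hGx : ∀ j, G N j = G 0 j + d)
    (hFy : ∀ i, F i N = F i 0 + p) (hGy : ∀ i, G i N = G i 0 + q)
    (h : ∀ i < N, ∀ j < N,
      (F (i + 1) j = F i j ∧ F i (j + 1) = F i j) ∨
      (G (i + 1) (j + 1) = G (i + 1) j ∧ G (i + 1) (j + 1) = G i (j + 1))) :
    c * q = p * d := by
  have key : ∑ i ∈ Finset.range N, ∑ j ∈ Finset.range N,
      ((F i j * (G (i + 1) j - G i j) - F i (j + 1) * (G (i + 1) (j + 1) - G i (j + 1))) +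
       (F (i + 1) j * (G (i + 1) (j + 1) - G (i + 1) j) - F i j * (G i (j + 1) - G i j))) = 0 := by
    refine Finset.sum_eq_zero fun i hi => Finset.sum_eq_zero fun j hj => ?_
    rcases h i (Finset.mem_range.1 hi) j (Finset.mem_range.1 hj) with ⟨h1, h2⟩ | ⟨h1, h2⟩
    · rw [h1, h2]; ring
    · linear_combination (F (i + 1) j - F i j) * h1 - (F i (j + 1) - F i j) * h2
  simp only [Finset.sum_add_distrib] at key
  have e1 : ∑ i ∈ Finset.range N, ∑ j ∈ Finset.range N,
      (F i j * (G (i + 1) j - G i j) - F i (j + 1) * (G (i + 1) (j + 1) - G i (j + 1))) =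
      - p * d := by
    have : ∀ i, ∑ j ∈ Finset.range N,
      (F i j * (G (i + 1) j - G i j) - F i (j + 1) * (G (i + 1) (j + 1) - G i (j + 1))) =
      - p * (G (i + 1) 0 - G i 0) := by
      intro i
      rw [Finset.sum_range_sub' (fun j => F i j * (G (i + 1) j - G i j)), hFy, hGy, hGy]; ring
    simp only [this]
    rw [← Finset.mul_sum, Finset.sum_range_sub (fun i => G i 0), hGx]; ring
  have e2 : ∑ i ∈ Finset.range N, ∑ j ∈ Finset.range N,
      (F (i + 1) j * (G (i + 1) (j + 1) - G (i + 1) j) - F i j * (G i (j + 1) - G i j)) =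
      c * q := by
    rw [Finset.sum_comm]
    have : ∀ j, ∑ i ∈ Finset.range N,
      (F (i + 1) j * (G (i + 1) (j + 1) - G (i + 1) j) - F i j * (G i (j + 1) - G i j)) =
      c * (G 0 (j + 1) - G 0 j) := by
      intro j
      rw [Finset.sum_range_sub (fun i => F i j * (G i (j + 1) - G i j)), hFx, hGx, hGx]; ring
    simp only [this]
    rw [← Finset.mul_sum, Finset.sum_range_sub (fun j => G 0 j), hGy]; ring
  rw [e1, e2] at key
  linarith

/-- A continuous real function that is integer-valued on a preconnected set is constant there. -/
theorem eq_of_coe_eq_zero {Y : Type*} [TopologicalSpace Y] {S : Set Y} (hS : _root_.IsPreconnected S)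
    {f : Y → ℝ} (hf : ContinuousOn f S) (h0 : ∀ x ∈ S, (f x : UnitAddCircle) = 0)
    {x y : Y} (hx : x ∈ S) (hy : y ∈ S) : f x = f y := by
  have hint : ∀ x ∈ S, ∃ n : ℤ, (n : ℝ) = f x := by
    intro x hx
    obtain ⟨n, hn⟩ := (AddCircle.coe_eq_zero_iff (1 : ℝ)).1 (h0 x hx)
    exact ⟨n, by simpa using hn⟩
  have : DiscreteTopology (Set.range ((↑) : ℤ → ℝ)) := by
    have := Int.isClosedEmbedding_coe_real.isEmbedding.toHomeomorph
    exact this.symm.isEmbedding.discreteTopology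
  exact hS.constant_of_mapsTo (T := Set.range ((↑) : ℤ → ℝ)) ⟨this⟩ hf (fun x hx => hint x hx) hx hy

/-- If two open sets with motion planners cover `X × X`, then for loops `a`, `b` and circle-valued
maps `u`, `v` the winding numbers satisfy `w_u(a) w_v(b) = w_u(b) w_v(a)`. The maps `Au`, `Av`, `Bu`,
`Bv` are real lifts of `u` and `v` along the loops, and only `[0, 1]` matters in the parameter. -/
theorem not_two_motionPlanners {X : Type*} [TopologicalSpace X] (u v : C(X, UnitAddCircle))
    (a b : C(ℝ, X)) (ha : a 1 = a 0) (hb : b 1 = b 0) (Au Av Bu Bv : C(ℝ, ℝ))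
    (hAu : ∀ t, (Au t : UnitAddCircle) = u (a t)) (hAv : ∀ t, (Av t : UnitAddCircle) = v (a t))
    (hBu : ∀ t, (Bu t : UnitAddCircle) = u (b t)) (hBv : ∀ t, (Bv t : UnitAddCircle) = v (b t))
    (hdet : (Au 1 - Au 0) * (Bv 1 - Bv 0) ≠ (Bu 1 - Bu 0) * (Av 1 - Av 0))
    (U V : Set (X × X)) (hU : IsOpen U) (hV : IsOpen V) (hUV : U ∪ V = Set.univ)
    (mU : HasMotionPlanner U) (mV : HasMotionPlanner V) : False := by
  classical
  obtain ⟨φ, hφc, hφ⟩ := mU.exists_continuousOn u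
  obtain ⟨ψ, hψc, hψ⟩ := mV.exists_continuousOn v
  let m : ℝ × ℝ → X × X := fun z => (a z.1, b z.2)
  have hm : Continuous m := by fun_prop
  -- The two real lifts of `u ∘ b - u ∘ a`, one available everywhere and one only over `U`, differ
  -- by a function `F` that is integer-valued over `U`; similarly `G` for `v` and `V`.
  let F : ℝ × ℝ → ℝ := fun z => Bu z.2 - Au z.1 - φ (m z)
  let G : ℝ × ℝ → ℝ := fun z => Bv z.2 - Av z.1 - ψ (m z)
  have hFc : ContinuousOn F (m ⁻¹' U) := by
    refine ContinuousOn.sub (by fun_prop) (hφc.comp hm.continuousOn fun _ h => h)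
  have hGc : ContinuousOn G (m ⁻¹' V) := by
    refine ContinuousOn.sub (by fun_prop) (hψc.comp hm.continuousOn fun _ h => h)
  have hF0 : ∀ z ∈ m ⁻¹' U, (F z : UnitAddCircle) = 0 := by
    intro z hz
    simp [F, hφ _ hz, hBu, hAu, m]
  have hG0 : ∀ z ∈ m ⁻¹' V, (G z : UnitAddCircle) = 0 := by
    intro z hz
    simp [G, hψ _ hz, hBv, hAv, m]
  let W : Bool → Set (ℝ × ℝ) := fun i => if i then m ⁻¹' U else m ⁻¹' V
  have hW : ∀ i, IsOpen (W i) := by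
    intro i; cases i
    · exact hV.preimage hm
    · exact hU.preimage hm
  -- By compactness the unit square has a grid each of whose squares lies over `U` or over `V`.
  obtain ⟨δ, hδ, hleb⟩ := lebesgue_number_lemma_of_metric (s := Set.Icc (0 : ℝ × ℝ) 1) isCompact_Icc
    hW (by
      intro z _
      have : m z ∈ U ∪ V := hUV ▸ Set.mem_univ _
      rcases this with h | h
      · exact Set.mem_iUnion.2 ⟨true, h⟩
      · exact Set.mem_iUnion.2 ⟨false, h⟩)
  obtain ⟨n, hn⟩ := exists_nat_one_div_lt hδ
  let N : ℕ := n + 1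
  have hN : (0 : ℝ) < N := by positivity
  have hNδ : (1 : ℝ) / N < δ := by simpa [N] using hn
  let P : ℕ → ℕ → ℝ × ℝ := fun i j => ((i : ℝ) / N, (j : ℝ) / N)
  have hNN : (N : ℝ) / N = 1 := div_self hN.ne'
  refine hdet ?_
  have := grid_periods (N := N) (fun i j => F (P i j)) (fun i j => G (P i j))
    (-(Au 1 - Au 0)) (-(Av 1 - Av 0)) (Bu 1 - Bu 0) (Bv 1 - Bv 0)
    (by intro j; simp only [F, P, m, hNN, Nat.cast_zero, zero_div, ha]; ring)
    (by intro j; simp only [G, P, m, hNN, Nat.cast_zero, zero_div, ha]; ring)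
    (by intro j; simp only [F, P, m, hNN, Nat.cast_zero, zero_div, hb]; ring)
    (by intro j; simp only [G, P, m, hNN, Nat.cast_zero, zero_div, hb]; ring)
    ?_
  · linarith
  intro i hi j hj
  have hmono : ∀ k : ℕ, (k : ℝ) / N ≤ ((k + 1 : ℕ) : ℝ) / N := by
    intro k; push_cast; gcongr; linarith
  have hle1 : ∀ k < N, (k : ℝ) / N ≤ 1 := by
    intro k hk; rw [div_le_one hN]; exact_mod_cast hk.le
  obtain ⟨w, hw⟩ := hleb (P i j) ⟨⟨by positivity, by positivity⟩, hle1 i hi, hle1 j hj⟩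
  have hsq : Set.Icc (P i j) (P (i + 1) (j + 1)) ⊆ W w := by
    refine Set.Subset.trans ?_ hw
    rintro ⟨x, y⟩ ⟨⟨h1, h2⟩, h3, h4⟩
    simp only [P] at h1 h2 h3 h4
    have hs : ∀ k : ℕ, ((k + 1 : ℕ) : ℝ) / N = (k : ℝ) / N + 1 / N := by
      intro k; push_cast; ring
    rw [hs] at h3 h4
    rw [Metric.mem_ball, Prod.dist_eq, max_lt_iff, Real.dist_eq, Real.dist_eq, abs_lt, abs_lt]
    simp only [P]
    refine ⟨⟨?_, ?_⟩, ?_, ?_⟩ <;> linarith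
  have hpre : _root_.IsPreconnected (Set.Icc (P i j) (P (i + 1) (j + 1))) :=
    (convex_Icc _ _).isPreconnected
  have m00 : P i j ∈ Set.Icc (P i j) (P (i + 1) (j + 1)) := ⟨le_rfl, hmono i, hmono j⟩
  have m10 : P (i + 1) j ∈ Set.Icc (P i j) (P (i + 1) (j + 1)) :=
    ⟨⟨hmono i, le_rfl⟩, le_rfl, hmono j⟩
  have m01 : P i (j + 1) ∈ Set.Icc (P i j) (P (i + 1) (j + 1)) :=
    ⟨⟨le_rfl, hmono j⟩, hmono i, le_rfl⟩
  have m11 : P (i + 1) (j + 1) ∈ Set.Icc (P i j) (P (i + 1) (j + 1)) :=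
    ⟨⟨hmono i, hmono j⟩, le_rfl⟩
  cases w
  · right
    have : ∀ {x y}, _ → _ → G x = G y := fun {x y} hx hy =>
      eq_of_coe_eq_zero hpre (hGc.mono hsq) (fun z hz => hG0 z (hsq hz)) (x := x) (y := y) hx hy
    exact ⟨this m11 m10, this m11 m01⟩
  · left
    have : ∀ {x y}, _ → _ → F x = F y := fun {x y} hx hy =>
      eq_of_coe_eq_zero hpre (hFc.mono hsq) (fun z hz => hF0 z (hsq hz)) (x := x) (y := y) hx hy
    exact ⟨this m10 m00, this m01 m00⟩

/-! ### Motion planners from deformations -/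

/-- `Γ` assigns to each point of `X` a path starting there; over the open set `O` it is continuous
and its endpoint is locally constant. Outside `O` nothing is required of `Γ` beyond `Γ x 0 = x`. -/
structure IsDeformation {X : Type*} [TopologicalSpace X] (O : Set X) (Γ : X → C(I, X)) : Prop where
  isOpen : IsOpen O
  continuousOn : ContinuousOn Γ O
  zero : ∀ x, Γ x 0 = x
  one : ∀ x ∈ O, ∀ᶠ y in 𝓝 x, Γ y 1 = Γ x 1

/-- The planner runs along `Γ`, then along a chosen path between the two endpoints, then backwards
along `Γ'`. The middle path depends on the endpoints only, hence is locally constant. -/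
theorem IsDeformation.hasMotionPlanner {X : Type*} [TopologicalSpace X] [PathConnectedSpace X]
    {O O' : Set X} {Γ Γ' : X → C(I, X)} (h : IsDeformation O Γ) (h' : IsDeformation O' Γ')
    {U : Set (X × X)} (hU : U ⊆ O ×ˢ O') : HasMotionPlanner U := by
  have c1 : Continuous fun p : U => Γ (p : X × X).1 :=
    h.continuousOn.comp_continuous (by fun_prop) fun p => (hU p.2).1
  have c2 : Continuous fun p : U => Γ' (p : X × X).2 :=
    h'.continuousOn.comp_continuous (by fun_prop) fun p => (hU p.2).2
  let γ₁ : ∀ p : U, Path (p : X × X).1 (Γ (p : X × X).1 1) := fun p =>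
    ⟨Γ (p : X × X).1, h.zero _, rfl⟩
  let γ₃ : ∀ p : U, Path (p : X × X).2 (Γ' (p : X × X).2 1) := fun p =>
    ⟨Γ' (p : X × X).2, h'.zero _, rfl⟩
  let γ₂ : ∀ p : U, Path (Γ (p : X × X).1 1) (Γ' (p : X × X).2 1) := fun p =>
    PathConnectedSpace.somePath _ _
  have d1 : Continuous ↿γ₁ := by
    change Continuous fun x : U × I => Γ (x.1 : X × X).1 x.2
    exact continuous_eval.comp ((c1.comp continuous_fst).prodMk continuous_snd)
  have d3 : Continuous ↿γ₃ := by
    change Continuous fun x : U × I => Γ' (x.1 : X × X).2 x.2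
    exact continuous_eval.comp ((c2.comp continuous_fst).prodMk continuous_snd)
  have d2 : Continuous ↿γ₂ := by
    rw [continuous_iff_continuousAt]
    rintro ⟨p, t⟩
    let q : C(I, X) := (γ₂ p : C(I, X))
    have hq : Continuous fun x : U × I => q x.2 := by fun_prop
    refine hq.continuousAt.congr ?_
    have e1 : ∀ᶠ x : U × I in 𝓝 (p, t), Γ (x.1 : X × X).1 1 = Γ (p : X × X).1 1 :=
      (show Continuous fun x : U × I => (x.1 : X × X).1 by fun_prop).continuousAt.eventually
        (h.one _ (hU p.2).1)
    have e2 : ∀ᶠ x : U × I in 𝓝 (p, t), Γ' (x.1 : X × X).2 1 = Γ' (p : X × X).2 1 :=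
      (show Continuous fun x : U × I => (x.1 : X × X).2 by fun_prop).continuousAt.eventually
        (h'.one _ (hU p.2).2)
    filter_upwards [e1, e2] with x h1 h2
    change PathConnectedSpace.somePath _ _ _ = PathConnectedSpace.somePath _ _ _
    congr! 2
    · exact h1.symm
    · exact h2.symm
    · exact h1.symm
    · exact h2.symm
    · exact h1.symm
    · exact h2.symm
  have d := Path.trans_continuous_family _ (Path.trans_continuous_family γ₁ d1 γ₂ d2) _
    (Path.symm_continuous_family γ₃ d3)
  refine ⟨⟨fun p => (((γ₁ p).trans (γ₂ p)).trans (γ₃ p).symm : C(I, X)), ?_⟩, ?_⟩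
  · exact ContinuousMap.continuous_of_continuous_uncurry _ d
  · intro p
    simp

theorem HasMotionPlanner.union {X : Type*} [TopologicalSpace X] {U V : Set (X × X)}
    (hU : IsOpen U) (hV : IsOpen V) (hd : Disjoint U V) (mU : HasMotionPlanner U)
    (mV : HasMotionPlanner V) : HasMotionPlanner (U ∪ V) := by
  classical
  obtain ⟨s, hs⟩ := mU
  obtain ⟨r, hr⟩ := mV
  by_cases hne : Nonempty (U ∪ V : Set (X × X))
  swap
  · have : IsEmpty (U ∪ V : Set (X × X)) := not_nonempty_iff.1 hne
    exact ⟨⟨isEmptyElim, continuous_of_const fun x => isEmptyElim x⟩, isEmptyElim⟩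
  obtain ⟨p0, _⟩ := hne
  let f : X × X → C(I, X) := fun p =>
    if h : p ∈ U then s ⟨p, h⟩ else if h : p ∈ V then r ⟨p, h⟩ else .const _ p0.1
  have fU : ContinuousOn f U := by
    rw [continuousOn_iff_continuous_domRestrict]
    convert s.continuous
    ext p; simp [f]
  have fV : ContinuousOn f V := by
    rw [continuousOn_iff_continuous_domRestrict]
    convert r.continuous
    ext p : 1
    have : (p : X × X) ∉ U := fun h => hd.ne_of_mem h p.2 rfl
    simp [f, this]
  refine ⟨⟨fun p => f p, (fU.union_of_isOpen fV hU hV).comp_continuous (by fun_prop) fun p => p.2⟩, ?_⟩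
  rintro ⟨p, hp⟩
  by_cases h : p ∈ U
  · simpa [f, h] using hs ⟨p, h⟩
  · have h' : p ∈ V := hp.resolve_left h
    simpa [f, h, h'] using hr ⟨p, h'⟩

/-! ### Topology of the realization -/

namespace FinGraph

variable {G : FinGraph}

instance : DiscreteTopology G.V := ⟨rfl⟩
instance : DiscreteTopology G.E := ⟨rfl⟩

theorem edgePt_zero (e : G.E) : G.edgePt e 0 = G.vtx (G.s e) := Quot.sound (.src e)
theorem edgePt_one (e : G.E) : G.edgePt e 1 = G.vtx (G.t e) := Quot.sound (.tgt e)

theorem continuous_edgePt (e : G.E) : Continuous (G.edgePt e) :=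
  continuous_quot_mk.comp (by fun_prop : Continuous fun x : I => (Sum.inl (e, x) : G.E × I ⊕ G.V))

theorem space_cases (x : G.Space) : (∃ e t, x = G.edgePt e t) ∨ ∃ v, x = G.vtx v := by
  obtain ⟨⟨e, t⟩ | v⟩ := x
  · exact .inl ⟨e, t, rfl⟩
  · exact .inr ⟨v, rfl⟩

/-- Openness in the realization can be tested on the edges alone, because every
set of vertices is open before gluing. -/
theorem isOpen_of_edgePt {S : Set G.Space} (h : ∀ e, IsOpen (G.edgePt e ⁻¹' S)) : IsOpen S := by
  have hq : IsQuotientMap (Quot.mk (GlueRel G) : _ → G.Space) := isQuotientMap_quot_mk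
  refine hq.isOpen_preimage.1 ?_
  rw [isOpen_sum_iff]
  refine ⟨?_, isOpen_discrete _⟩
  have : Sum.inl ⁻¹' (Quot.mk (GlueRel G) ⁻¹' S) = ⋃ e : G.E, {e} ×ˢ (G.edgePt e ⁻¹' S) := by
    ext ⟨e, t⟩
    simp [edgePt]; rfl
  rw [this]
  exact isOpen_iUnion fun e => (isOpen_discrete _).prod (h e)

theorem continuousOn_of_edgePt {Y : Type*} [TopologicalSpace Y] {O : Set G.Space} (hO : IsOpen O)
    {f : G.Space → Y} (h : ∀ e, ContinuousOn (fun t => f (G.edgePt e t)) (G.edgePt e ⁻¹' O)) :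
    ContinuousOn f O := by
  rw [continuousOn_open_iff hO]
  intro T hT
  refine isOpen_of_edgePt fun e => ?_
  exact (continuousOn_open_iff (hO.preimage (continuous_edgePt e))).1 (h e) T hT

theorem continuous_of_edgePt {Y : Type*} [TopologicalSpace Y]
    {f : G.Space → Y} (h : ∀ e, Continuous (fun t => f (G.edgePt e t))) : Continuous f := by
  rw [← continuousOn_univ]
  exact continuousOn_of_edgePt isOpen_univ fun e => (h e).continuousOn

theorem eventually_eq_of_edgePt {T : Type*} {O : Set G.Space} (hO : IsOpen O) (Z : G.Space → T)
    (h : ∀ e t, G.edgePt e t ∈ O → ∀ᶠ t' in 𝓝 t, Z (G.edgePt e t') = Z (G.edgePt e t))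
    {x : G.Space} (hx : x ∈ O) : ∀ᶠ y in 𝓝 x, Z y = Z x := by
  have : IsOpen {y | y ∈ O ∧ Z y = Z x} := by
    refine isOpen_of_edgePt fun e => ?_
    rw [isOpen_iff_mem_nhds]
    rintro t ⟨h1, h2⟩
    filter_upwards [h e t h1, (hO.preimage (continuous_edgePt e)).mem_nhds h1] with t' h3 h4
    exact ⟨h4, h3.trans h2⟩
  filter_upwards [this.mem_nhds ⟨hx, rfl⟩] with y hy using hy.2

/-- The function on the realization given by `f` on the edges and `g` on the vertices. -/
def Space.lift {T : Type*} (f : G.E → I → T) (g : G.V → T) (h0 : ∀ e, f e 0 = g (G.s e))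
    (h1 : ∀ e, f e 1 = g (G.t e)) : G.Space → T :=
  Quot.lift (Sum.elim (fun p => f p.1 p.2) g) (by rintro _ _ (e | e); exacts [h0 e, h1 e])

/-! ### Neighbourhoods of the vertices and of the open edges -/

/-- The edge `e` as a map on the whole line, constant outside `[0, 1]`. -/
noncomputable def edgeLine (e : G.E) : C(ℝ, G.Space) :=
  ⟨fun t => G.edgePt e (Set.projIcc 0 1 zero_le_one t),
    (continuous_edgePt e).comp continuous_projIcc⟩

theorem edgeLine_coe (e : G.E) (t : I) : edgeLine e t = G.edgePt e t := by
  simp [edgeLine]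

/-- The point at parameter `t` of an edge moves along that edge, at constant speed, to the point at
parameter `c t`. Vertices stay fixed. No continuity in `t` is assumed of `c`. -/
noncomputable def contract (c : I → ℝ) (h0 : c 0 = 0) (h1 : c 1 = 1) : G.Space → C(I, G.Space) :=
  Space.lift (fun e t => (edgeLine e).comp ⟨fun s : I => (t : ℝ) + s * (c t - t), by fun_prop⟩)
    (fun v => .const _ (G.vtx v))
    (by intro e; ext s; simpa [h0, edgePt_zero] using edgeLine_coe e 0)
    (by intro e; ext s; simpa [h1, edgePt_one] using edgeLine_coe e 1)

theorem contract_edgePt (c : I → ℝ) (h0 : c 0 = 0) (h1 : c 1 = 1) (e : G.E) (t : I) :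
    contract c h0 h1 (G.edgePt e t) =
      (edgeLine e).comp ⟨fun s : I => (t : ℝ) + s * (c t - t), by fun_prop⟩ := rfl

theorem contract_vtx (c : I → ℝ) (h0 : c 0 = 0) (h1 : c 1 = 1) (v : G.V) :
    contract c h0 h1 (G.vtx v) = .const _ (G.vtx v) := rfl

theorem isDeformation_contract {c : I → ℝ} (h0 : c 0 = 0) (h1 : c 1 = 1) {O : Set G.Space}
    (hO : IsOpen O) (hc : ∀ e t, G.edgePt e t ∈ O → ∀ᶠ t' in 𝓝 t, c t' = c t) :
    IsDeformation O (contract (G := G) c h0 h1) where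
  isOpen := hO
  continuousOn := by
    refine continuousOn_of_edgePt hO fun e t ht => ContinuousAt.continuousWithinAt ?_
    have : Continuous fun t' : I => (edgeLine e).comp
        (⟨fun s : I => (t' : ℝ) + s * (c t - t'), by fun_prop⟩ : C(I, ℝ)) :=
      ContinuousMap.continuous_of_continuous_uncurry _ (by
        change Continuous fun x : I × I => edgeLine e ((x.1 : ℝ) + x.2 * (c t - x.1))
        fun_prop)
    refine this.continuousAt.congr ?_
    filter_upwards [hc e t ht] with t' ht'
    rw [contract_edgePt]; simp only [ht']
  zero := by
    intro x
    rcases space_cases x with ⟨e, t, rfl⟩ | ⟨v, rfl⟩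
    · simp [contract_edgePt, edgeLine_coe]
    · simp [contract_vtx]
  one := by
    intro x hx
    refine eventually_eq_of_edgePt hO (fun x => contract c h0 h1 x 1) (fun e t ht => ?_) hx
    filter_upwards [hc e t ht] with t' ht'
    simp [contract_edgePt, ht']

/-- The distance to the vertex set, each edge having length `1`. -/
noncomputable def rho : G.Space → ℝ :=
  Space.lift (fun _ t => min (t : ℝ) (1 - t)) (fun _ => 0) (by simp) (by simp)

theorem rho_edgePt (e : G.E) (t : I) : rho (G.edgePt e t) = min (t : ℝ) (1 - t) := rfl
theorem rho_vtx (v : G.V) : rho (G.vtx v) = 0 := rfl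

theorem continuous_rho : Continuous (rho (G := G)) :=
  continuous_of_edgePt fun e => by simp only [rho_edgePt]; fun_prop

/-- The target of the contraction to the vertices: each half of an edge goes to its own end. The
value at the midpoint is arbitrary. -/
noncomputable def cN (t : I) : ℝ := if (t : ℝ) < 1 / 2 then 0 else 1

/-- The target of the contraction to the midpoints; the ends of an edge have to stay fixed. -/
noncomputable def cM (t : I) : ℝ := if t = 0 then 0 else if t = 1 then 1 else 1 / 2

theorem cN_zero : cN 0 = 0 := by norm_num [cN]
theorem cN_one : cN 1 = 1 := by norm_num [cN]
theorem cM_zero : cM 0 = 0 := by simp [cM]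
theorem cM_one : cM 1 = 1 := by simp [cM]

/-- The complement of the midpoints of the edges. -/
def nearVertices (G : FinGraph) : Set G.Space := {x | rho x < 1 / 2}

/-- The complement of the vertices. -/
def offVertices (G : FinGraph) : Set G.Space := {x | 0 < rho x}

theorem edgePt_mem_nearVertices {e : G.E} {t : I} :
    G.edgePt e t ∈ nearVertices G ↔ (t : ℝ) ≠ 1 / 2 := by
  simp only [nearVertices, Set.mem_ofPred_eq, rho_edgePt, min_lt_iff]
  rw [ne_iff_lt_or_gt]
  refine or_congr Iff.rfl ⟨?_, ?_⟩ <;> intro h <;> linarith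

theorem edgePt_mem_offVertices {e : G.E} {t : I} :
    G.edgePt e t ∈ offVertices G ↔ 0 < (t : ℝ) ∧ (t : ℝ) < 1 := by
  simp [offVertices, rho_edgePt]

theorem cN_eventually {t : I} (ht : (t : ℝ) ≠ 1 / 2) : ∀ᶠ t' in 𝓝 t, cN t' = cN t := by
  have hc : ContinuousAt (fun t : I => (t : ℝ)) t := by fun_prop
  rcases ne_iff_lt_or_gt.1 ht with h | h
  · filter_upwards [hc.eventually (gt_mem_nhds h)] with t' h'
    simp only [cN, h, h', if_true]
  · filter_upwards [hc.eventually (lt_mem_nhds h)] with t' h'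
    simp only [cN, h.not_gt, h'.not_gt, if_false]

theorem cM_eq {t : I} (h : 0 < (t : ℝ) ∧ (t : ℝ) < 1) : cM t = 1 / 2 := by
  have h0 : t ≠ 0 := by rintro rfl; simp at h
  have h1 : t ≠ 1 := by rintro rfl; simp at h
  simp [cM, h0, h1]

theorem isDeformation_near : IsDeformation (nearVertices G) (contract cN cN_zero cN_one) :=
  isDeformation_contract _ _ (isOpen_lt continuous_rho continuous_const) fun _ _ ht =>
    cN_eventually (edgePt_mem_nearVertices.1 ht)

theorem isOpen_offVertices : IsOpen (offVertices G) := isOpen_lt continuous_const continuous_rho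

theorem isDeformation_off : IsDeformation (offVertices G) (contract cM cM_zero cM_one) :=
  isDeformation_contract _ _ isOpen_offVertices fun e t ht => by
    filter_upwards [(isOpen_offVertices.preimage (continuous_edgePt e)).mem_nhds ht] with t' ht'
    rw [cM_eq (edgePt_mem_offVertices.1 ht), cM_eq (edgePt_mem_offVertices.1 ht')]

theorem mem_near_or_off (x : G.Space) : x ∈ nearVertices G ∨ x ∈ offVertices G := by
  rcases le_or_gt (rho x) 0 with h | h
  · exact .inl (h.trans_lt (by norm_num))
  · exact .inr h

/-- Both deformations join a point to all points of a neighbourhood. -/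
instance [ConnectedSpace G.Space] : PathConnectedSpace G.Space where
  nonempty := inferInstance
  joined := by
    have aux : ∀ {O : Set G.Space} {Γ : G.Space → C(I, G.Space)}, IsDeformation O Γ →
        ∀ x ∈ O, ∀ᶠ y in 𝓝 x, Joined x y := by
      intro O Γ h x hx
      filter_upwards [h.one x hx] with y hy
      have h1 : Joined x (Γ x 1) := ⟨⟨Γ x, h.zero x, rfl⟩⟩
      have h2 : Joined y (Γ x 1) := ⟨⟨Γ y, h.zero y, hy⟩⟩
      exact h1.trans h2.symm
    have : Std.Symm (Joined (X := G.Space)) := ⟨fun _ _ => Joined.symm⟩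
    refine PreconnectedSpace.induction₂ _ (fun x => ?_) ⟨fun _ _ _ => Joined.trans⟩
    rcases mem_near_or_off x with h | h
    · exact aux isDeformation_near x h
    · exact aux isDeformation_off x h

/-- The third open set is `{ρ x < ρ y} ∪ {ρ y < ρ x}`, a disjoint union; on each part one point is
off the vertices and the other one is off the midpoints. -/
theorem exists_three_motionPlanners [ConnectedSpace G.Space] :
    ∃ U : Fin 3 → Set (G.Space × G.Space),
      (∀ i, IsOpen (U i)) ∧ (⋃ i, U i) = Set.univ ∧ ∀ i, HasMotionPlanner (U i) := by
  have hN := isDeformation_near (G := G)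
  have hM := isDeformation_off (G := G)
  have c1 : Continuous fun p : G.Space × G.Space => rho p.1 := continuous_rho.comp continuous_fst
  have c2 : Continuous fun p : G.Space × G.Space => rho p.2 := continuous_rho.comp continuous_snd
  have hle : ∀ x : G.Space, 0 ≤ rho x ∧ rho x ≤ 1 / 2 := by
    intro x
    rcases space_cases x with ⟨e, t, rfl⟩ | ⟨v, rfl⟩
    · rw [rho_edgePt]
      refine ⟨le_min t.2.1 (by linarith [t.2.2]), ?_⟩
      rcases le_total (t : ℝ) (1 / 2) with h | h
      · exact min_le_of_left_le h
      · exact min_le_of_right_le (by linarith)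
    · norm_num [rho_vtx]
  refine ⟨![nearVertices G ×ˢ nearVertices G, offVertices G ×ˢ offVertices G,
    {p | rho p.1 < rho p.2} ∪ {p | rho p.2 < rho p.1}], ?_, ?_, ?_⟩
  · intro i
    fin_cases i
    · exact hN.isOpen.prod hN.isOpen
    · exact hM.isOpen.prod hM.isOpen
    · exact (isOpen_lt c1 c2).union (isOpen_lt c2 c1)
  · refine Set.eq_univ_of_forall fun p => Set.mem_iUnion.2 ?_
    rcases lt_trichotomy (rho p.1) (rho p.2) with h | h | h
    · exact ⟨2, .inl h⟩
    · by_cases h2 : rho p.1 < 1 / 2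
      · exact ⟨0, h2, h.symm.trans_lt h2⟩
      -- If `ρ p.1 = ρ p.2 ≥ 1 / 2`, both points are midpoints.
      · refine ⟨1, ?_, ?_⟩ <;> change 0 < rho _ <;> linarith
    · exact ⟨2, .inr h⟩
  · intro i
    fin_cases i
    · exact hN.hasMotionPlanner hN le_rfl
    · exact hM.hasMotionPlanner hM le_rfl
    · refine HasMotionPlanner.union (isOpen_lt c1 c2) (isOpen_lt c2 c1) ?_ ?_ ?_
      · rw [Set.disjoint_left]
        intro p h h'
        exact lt_asymm (show rho p.1 < rho p.2 from h) h'
      · refine hN.hasMotionPlanner hM fun p (h : rho p.1 < rho p.2) => ⟨?_, ?_⟩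
        · exact h.trans_le (hle _).2
        · exact (hle _).1.trans_lt h
      · refine hM.hasMotionPlanner hN fun p (h : rho p.2 < rho p.1) => ⟨?_, ?_⟩
        · exact (hle _).1.trans_lt h
        · exact h.trans_le (hle _).2

end FinGraph

/-! ### Chord-additive functions on paths -/

/-- Every map from the line to the circle has a continuous real lift. -/
theorem exists_real_lift (g : C(ℝ, UnitAddCircle)) :
    ∃ f : C(ℝ, ℝ), ∀ t, (f t : UnitAddCircle) = g t := by
  obtain ⟨r, hr⟩ := QuotientAddGroup.mk_surjective (g 0)
  obtain ⟨f, ⟨-, hf⟩, -⟩ :=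
    (AddCircle.isCoveringMap_coe (1 : ℝ)).existsUnique_continuousMap_lifts g 0 r hr
  exact ⟨f, fun t => congrFun hf t⟩

section chord

variable {X : Type*} [TopologicalSpace X]

/-- The path that is the image under `F` of the affine segment from `p` to `q` in the plane. -/
def chord (F : C(ℝ × ℝ, X)) (p q : ℝ × ℝ) : C(I, X) :=
  F.comp ⟨fun s => p + (s : ℝ) • (q - p), by fun_prop⟩

/-- The path that is the image under `F` of the affine segment from `p` to `q` in the line. -/
def chord₁ (F : C(ℝ, X)) (p q : ℝ) : C(I, X) :=
  F.comp ⟨fun s => p + (s : ℝ) * (q - p), by fun_prop⟩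

/-- `φ` is a cocycle on the affine singular triangles of `X`, degenerate ones included. The class of
a path modulo singular boundaries is the example of interest. -/
def IsChordAdditive {A : Type*} [Add A] (φ : C(I, X) → A) : Prop :=
  ∀ (F : C(ℝ × ℝ, X)) (p q r : ℝ × ℝ), φ (chord F p q) + φ (chord F q r) = φ (chord F p r)

variable {A : Type*} [AddCommGroup A] {φ : C(I, X) → A}

theorem IsChordAdditive.add (hφ : IsChordAdditive φ) (F : C(ℝ, X)) (p q r : ℝ) :
    φ (chord₁ F p q) + φ (chord₁ F q r) = φ (chord₁ F p r) := by
  have := hφ (F.comp ⟨Prod.fst, continuous_fst⟩) (p, 0) (q, 0) (r, 0)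
  exact this

theorem IsChordAdditive.const (hφ : IsChordAdditive φ) (x : X) : φ (.const I x) = 0 := by
  have : φ (.const I x) + φ (.const I x) = φ (.const I x) := hφ.add (.const ℝ x) 0 0 0
  simpa using this

theorem IsChordAdditive.self (hφ : IsChordAdditive φ) (F : C(ℝ, X)) (p : ℝ) : φ (chord₁ F p p) = 0 := by
  simpa using hφ.add F p p p

/-- Along a segment on which the endpoint of a deformation is constant, `φ` is the difference of its
values on the deformation paths of the two ends: apply additivity to the two triangles of the square
swept out by the deformation, whose far side is constant. -/
theorem IsChordAdditive.deform (hφ : IsChordAdditive φ) {O : Set X} {Γ : X → C(I, X)} (h : IsDeformation O Γ)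
    (F : C(ℝ, X)) {l r p q : ℝ} (hp : p ∈ Set.Icc l r) (hq : q ∈ Set.Icc l r)
    (hO : ∀ s ∈ Set.Icc l r, F s ∈ O) (h1 : ∀ s ∈ Set.Icc l r, Γ (F s) 1 = Γ (F p) 1) :
    φ (chord₁ F p q) = φ (Γ (F p)) - φ (Γ (F q)) := by
  have hlr : l ≤ r := hp.1.trans hp.2
  -- Precomposing with the retraction onto `[l, r]` makes the square `K` continuous on the plane.
  let k : ℝ → ℝ := fun s => Set.projIcc l r hlr s
  have hk : Continuous k := continuous_subtype_val.comp continuous_projIcc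
  have hkm : ∀ s, k s ∈ Set.Icc l r := fun s => (Set.projIcc l r hlr s).2
  have hke : ∀ s ∈ Set.Icc l r, k s = s := fun s hs => by
    simp [k, Set.projIcc_of_mem hlr hs]
  have hseg : ∀ s : I, p + (s : ℝ) * (q - p) ∈ Set.Icc l r := fun s => by
    have := (convex_Icc l r).add_smul_sub_mem hp hq s.2
    simpa using this
  have hc : Continuous fun s => Γ (F (k s)) :=
    h.continuousOn.comp_continuous (by fun_prop) fun s => hO _ (hkm s)
  have hpj : Continuous (Set.projIcc (0 : ℝ) 1 zero_le_one) := continuous_projIcc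
  let K : C(ℝ × ℝ, X) := ⟨fun z => Γ (F (k z.1)) (Set.projIcc 0 1 zero_le_one z.2),
    continuous_eval.comp ((hc.comp continuous_fst).prodMk
      (hpj.comp continuous_snd))⟩
  have e1 : chord K (p, 0) (q, 0) = chord₁ F p q := by
    ext s
    simp [chord, chord₁, K, hke _ (hseg s), h.zero]
  have e2 : ∀ x ∈ Set.Icc l r, chord K (x, 0) (x, 1) = Γ (F x) := by
    intro x hx
    ext s
    simp [chord, K, hke _ hx]
  have e3 : chord K (p, 1) (q, 1) = .const I (Γ (F p) 1) := by
    ext s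
    simpa [chord, K] using h1 _ (hkm _)
  have a1 := hφ K (p, 0) (q, 0) (q, 1)
  have a2 := hφ K (p, 0) (p, 1) (q, 1)
  rw [e1, e2 q hq] at a1
  rw [e2 p hp, e3, hφ.const, add_zero] at a2
  rw [a2, ← a1]; abel

end chord

/-! ### Chord-additive functions on a graph -/

namespace FinGraph

variable {G : FinGraph} {A : Type*} [AddCommGroup A]

open Classical in
/-- The map to the circle that wraps the edge `e` once around and collapses the rest of the graph. -/
noncomputable def edgeCircle (e : G.E) : C(G.Space, UnitAddCircle) :=
  ⟨Space.lift (fun e' t => if e' = e then ((t : ℝ) : UnitAddCircle) else 0) (fun _ => 0)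
    (by simp) (by intro e'; simp), by
    refine continuous_of_edgePt fun e' => ?_
    change Continuous fun t : I => if e' = e then ((t : ℝ) : UnitAddCircle) else 0
    split_ifs
    · exact (AddCircle.continuous_mk' (1 : ℝ)).comp continuous_subtype_val
    · exact continuous_const⟩

/-- The value of `φ` on the whole edge `e`, traversed from source to target. -/
noncomputable def edgeClass (φ : C(I, G.Space) → A) (e : G.E) : A := φ (chord₁ (edgeLine e) 0 1)

/-- For a point in the interior of an edge, the value of `φ` on the part of the edge between the
source and the point; zero at the vertices. The floor term is nonzero only at the target. -/
noncomputable def edgeTail {φ : C(I, G.Space) → A} (hφ : IsChordAdditive φ) : G.Space → A :=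
  Space.lift (fun e t => φ (chord₁ (edgeLine e) 0 t) - ⌊(t : ℝ)⌋ • edgeClass φ e) (fun _ => 0)
    (by intro e; simp [hφ.self]) (by intro e; simp [edgeClass])

open Classical in
/-- The real lift of `edgeCircle e` which is `t - c t` along `e` and zero elsewhere. -/
noncomputable def edgeCoord (c : I → ℤ) (h0 : c 0 = 0) (h1 : c 1 = 1) (e : G.E) : G.Space → ℝ :=
  Space.lift (fun e' t => if e' = e then (t : ℝ) - c t else 0) (fun _ => 0)
    (by simp [h0]) (by simp [h1])

theorem coe_edgeCoord (c : I → ℤ) (h0 : c 0 = 0) (h1 : c 1 = 1) (e : G.E) (x : G.Space) :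
    (edgeCoord c h0 h1 e x : UnitAddCircle) = edgeCircle e x := by
  classical
  have hz : ∀ n : ℤ, ((n : ℝ) : UnitAddCircle) = 0 := fun n =>
    (AddCircle.coe_eq_zero_iff (1 : ℝ)).2 ⟨n, by simp⟩
  rcases space_cases x with ⟨e', t, rfl⟩ | ⟨v, rfl⟩
  · change ((if e' = e then (t : ℝ) - c t else 0 : ℝ) : UnitAddCircle) =
      if e' = e then ((t : ℝ) : UnitAddCircle) else 0
    split_ifs
    · rw [AddCircle.coe_sub, hz, sub_zero]
    · simp
  · change ((0 : ℝ) : UnitAddCircle) = 0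
    simp

theorem continuousOn_edgeCoord (c : I → ℤ) (h0 : c 0 = 0) (h1 : c 1 = 1) (e : G.E)
    {O : Set G.Space} (hO : IsOpen O)
    (hc : ∀ e t, G.edgePt e t ∈ O → ∀ᶠ t' in 𝓝 t, c t' = c t) :
    ContinuousOn (edgeCoord c h0 h1 e) O := by
  classical
  refine continuousOn_of_edgePt hO fun e' t ht => ContinuousAt.continuousWithinAt ?_
  have : Continuous fun t' : I => if e' = e then (t' : ℝ) - c t else 0 := by
    split_ifs <;> fun_prop
  refine this.continuousAt.congr ?_
  filter_upwards [hc e' t ht] with t' ht'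
  change _ = if e' = e then (t' : ℝ) - c t' else 0
  rw [ht']

theorem sum_floor_edgeCoord (φ : C(I, G.Space) → A)
    (c : I → ℤ) (h0 : c 0 = 0) (h1 : c 1 = 1) (e : G.E) (t : I) :
    ∑ e', ⌊edgeCoord c h0 h1 e' (G.edgePt e t)⌋ • edgeClass φ e' =
      (⌊(t : ℝ)⌋ - c t) • edgeClass φ e := by
  classical
  rw [Finset.sum_eq_single e]
  · change ⌊if e = e then (t : ℝ) - c t else 0⌋ • _ = _
    simp
  · intro e' _ hne
    change ⌊if e = e' then (t : ℝ) - c t else 0⌋ • _ = _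
    simp [hne.symm]
  · simp

/-- The formula of `chord_formula` for nearby `q`. The hypothesis `hζ` requires the value of `φ` on the
deformation path of `x`, corrected by the tail of `x` and by the integer parts of lifts `g e` of
`edgeCircle e` continuous on `O`, to be locally constant. -/
theorem chord_formula_local {φ : C(I, G.Space) → A} (hφ : IsChordAdditive φ)
    {O : Set G.Space} {Γ : G.Space → C(I, G.Space)} (h : IsDeformation O Γ)
    (g : G.E → G.Space → ℝ) (hg : ∀ e, ContinuousOn (g e) O)
    (hgu : ∀ e x, (g e x : UnitAddCircle) = edgeCircle e x)
    (hζ : ∀ x ∈ O, ∀ᶠ y in 𝓝 x, φ (Γ y) + edgeTail hφ y + ∑ e, ⌊g e y⌋ • edgeClass φ e =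
      φ (Γ x) + edgeTail hφ x + ∑ e, ⌊g e x⌋ • edgeClass φ e)
    (F : C(ℝ, G.Space)) (f : G.E → C(ℝ, ℝ))
    (hf : ∀ e t, (f e t : UnitAddCircle) = edgeCircle e (F t)) {p : ℝ} (hp : F p ∈ O) :
    ∀ᶠ q in 𝓝 p, φ (chord₁ F p q) =
      ∑ e, (⌊f e q⌋ - ⌊f e p⌋) • edgeClass φ e + edgeTail hφ (F q) - edgeTail hφ (F p) := by
  have hF : ContinuousAt F p := by fun_prop
  have hO' : ∀ᶠ y in 𝓝 (F p), y ∈ O := h.isOpen.mem_nhds hp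
  have hev := hF.eventually (hO'.and
    ((h.one _ hp).and (hζ _ hp)))
  obtain ⟨ε, hε, hball⟩ := Metric.nhds_basis_closedBall.eventually_iff.1 hev
  simp only [Real.closedBall_eq_Icc] at hball
  have hpm : p ∈ Set.Icc (p - ε) (p + ε) := by constructor <;> linarith
  have : Set.Icc (p - ε) (p + ε) ∈ 𝓝 p := Icc_mem_nhds (by linarith) (by linarith)
  filter_upwards [this] with q hq
  have hdef := hφ.deform h F hpm hq (fun s hs => (hball hs).1) (fun s hs => (hball hs).2.1)
  -- Any two continuous lifts differ by an integer constant, so `f e` may be replaced by `g e ∘ F`.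
  have hfloor : ∀ e, ⌊f e q⌋ - ⌊f e p⌋ = ⌊g e (F q)⌋ - ⌊g e (F p)⌋ := by
    intro e
    have hz : ∀ s ∈ Set.Icc (p - ε) (p + ε),
        ((f e s - g e (F s) : ℝ) : UnitAddCircle) = 0 := by
      intro s _
      rw [AddCircle.coe_sub, hf, hgu, sub_self]
    have hconst := eq_of_coe_eq_zero isPreconnected_Icc (f := fun s => f e s - g e (F s))
      (ContinuousOn.sub (by fun_prop)
        ((hg e).comp (by fun_prop) fun s hs => (hball hs).1)) hz hq hpm
    obtain ⟨n, hn⟩ := (AddCircle.coe_eq_zero_iff (1 : ℝ)).1 (hz p hpm)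
    have e1 : f e p = g e (F p) + n := by
      simp at hn; linarith
    have e2 : f e q = g e (F q) + n := by
      simp at hn hconst; linarith
    rw [e1, e2]; simp
  have hz := (hball hq).2.2
  simp only [hfloor, sub_smul, Finset.sum_sub_distrib]
  rw [hdef]
  have : φ (Γ (F q)) = φ (Γ (F p)) + edgeTail hφ (F p) + ∑ e, ⌊g e (F p)⌋ • edgeClass φ e
      - edgeTail hφ (F q) - ∑ e, ⌊g e (F q)⌋ • edgeClass φ e := by
    rw [← hz]; abel
  rw [this]; abel

/-- A chord-additive function on a path in the graph is determined by the values on the edges, up to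
terms depending on the endpoints alone: each edge counts with the change of the integer part of a
lift `f e` of the angle `edgeCircle e` along the path. -/
theorem chord_formula {φ : C(I, G.Space) → A} (hφ : IsChordAdditive φ)
    (F : C(ℝ, G.Space)) (f : G.E → C(ℝ, ℝ))
    (hf : ∀ e t, (f e t : UnitAddCircle) = edgeCircle e (F t)) (p q : ℝ) :
    φ (chord₁ F p q) =
      ∑ e, (⌊f e q⌋ - ⌊f e p⌋) • edgeClass φ e + edgeTail hφ (F q) - edgeTail hφ (F p) := by
  let P : ℝ → ℝ → Prop := fun p q => φ (chord₁ F p q) =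
      ∑ e, (⌊f e q⌋ - ⌊f e p⌋) • edgeClass φ e + edgeTail hφ (F q) - edgeTail hφ (F p)
  have hsymm : Std.Symm P := ⟨fun a b (hab : _ = _) => by
    have h := hφ.add F a b a
    rw [hφ.self, hab] at h
    change _ = _
    rw [eq_neg_of_add_eq_zero_right h]
    simp only [sub_smul, Finset.sum_sub_distrib]
    abel⟩
  have htrans : IsTrans ℝ P := ⟨fun a b c (hab : _ = _) (hbc : _ = _) => by
    change _ = _
    rw [← hφ.add F a b c, hab, hbc]
    simp only [sub_smul, Finset.sum_sub_distrib]
    abel⟩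
  -- The formula is an equivalence relation on the line, so it suffices to prove it locally.
  refine PreconnectedSpace.induction₂ P (fun x => ?_) htrans p q
  rcases mem_near_or_off (F x) with hx | hx
  -- Near the vertices: the lift `t - c t` jumps at the midpoint, and the corrected sum vanishes.
  · let c : I → ℤ := fun t => if (t : ℝ) < 1 / 2 then 0 else 1
    have hcN : ∀ t, (c t : ℝ) = cN t := by intro t; simp only [c, cN]; split_ifs <;> simp
    have hc0 : c 0 = 0 := by norm_num [c]
    have hc1 : c 1 = 1 := by norm_num [c]
    have hζ : ∀ y ∈ nearVertices G, φ (contract cN cN_zero cN_one y) + edgeTail hφ y +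
        ∑ e, ⌊edgeCoord c hc0 hc1 e y⌋ • edgeClass φ e = 0 := by
      intro y _
      rcases space_cases y with ⟨e, t, rfl⟩ | ⟨v, rfl⟩
      · rw [sum_floor_edgeCoord]
        change φ (chord₁ (edgeLine e) t (cN t)) + (φ (chord₁ (edgeLine e) 0 t) -
          ⌊(t : ℝ)⌋ • edgeClass φ e) + _ = 0
        have h1 := hφ.add (edgeLine e) 0 t (cN t)
        have h2 : φ (chord₁ (edgeLine e) 0 (cN t)) = c t • edgeClass φ e := by
          by_cases ht : (t : ℝ) < 1 / 2
          · simp only [cN, c, ht, if_true, hφ.self, zero_smul]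
          · simp only [cN, c, ht, if_false, one_smul]; rfl
        rw [h2] at h1
        rw [sub_smul, ← h1]; abel
      · have : ∀ e, edgeCoord c hc0 hc1 e (G.vtx v) = 0 := fun e => rfl
        simp only [this, contract_vtx, hφ.const]
        simp [show edgeTail hφ (G.vtx v) = 0 from rfl]
    have hO := (isDeformation_near (G := G)).isOpen
    refine chord_formula_local hφ isDeformation_near (edgeCoord c hc0 hc1)
      (fun e => continuousOn_edgeCoord _ _ _ _ hO fun e t ht => ?_)
      (fun e x => coe_edgeCoord _ _ _ _ _) (fun y hy => ?_) F f hf hx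
    · filter_upwards [cN_eventually (edgePt_mem_nearVertices.1 ht)] with t' ht'
      have : (c t' : ℝ) = c t := by rw [hcN, hcN, ht']
      exact_mod_cast this
    · filter_upwards [hO.mem_nhds hy] with z hz
      rw [hζ z hz, hζ y hy]
  -- Off the vertices: the lift is `t` itself, and the corrected sum is the value on a half edge.
  · let c : I → ℤ := fun t => ⌊(t : ℝ)⌋
    have hc0 : c 0 = 0 := by simp [c]
    have hc1 : c 1 = 1 := by simp [c]
    have hO := isOpen_offVertices (G := G)
    have hct : ∀ e t, G.edgePt e t ∈ offVertices G → c t = 0 := fun e t ht => by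
      rw [edgePt_mem_offVertices] at ht
      exact Int.floor_eq_zero_iff.2 ⟨ht.1.le, ht.2⟩
    have hev : ∀ e t, G.edgePt e t ∈ offVertices G →
        ∀ᶠ t' in 𝓝 t, G.edgePt e t' ∈ offVertices G := fun e t ht =>
      (hO.preimage (continuous_edgePt e)).mem_nhds ht
    have hζ : ∀ e t, G.edgePt e t ∈ offVertices G → φ (contract cM cM_zero cM_one (G.edgePt e t)) +
        edgeTail hφ (G.edgePt e t) +
        ∑ e', ⌊edgeCoord c hc0 hc1 e' (G.edgePt e t)⌋ • edgeClass φ e' =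
        φ (chord₁ (edgeLine e) 0 (1 / 2)) := by
      intro e t ht
      rw [sum_floor_edgeCoord]
      change φ (chord₁ (edgeLine e) t (cM t)) + (φ (chord₁ (edgeLine e) 0 t) -
          c t • edgeClass φ e) + (c t - c t) • _ = _
      rw [hct e t ht, cM_eq (edgePt_mem_offVertices.1 ht), ← hφ.add (edgeLine e) 0 t (1 / 2)]
      simp [add_comm]
    refine chord_formula_local hφ isDeformation_off (edgeCoord c hc0 hc1)
      (fun e => continuousOn_edgeCoord _ _ _ _ hO fun e t ht => ?_)
      (fun e x => coe_edgeCoord _ _ _ _ _) (fun y hy => ?_) F f hf hx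
    · filter_upwards [hev e t ht] with t' ht'
      rw [hct e t ht, hct e t' ht']
    · refine eventually_eq_of_edgePt hO (fun y => φ (contract cM cM_zero cM_one y) +
        edgeTail hφ y + ∑ e, ⌊edgeCoord c hc0 hc1 e y⌋ • edgeClass φ e) (fun e t ht => ?_) hy
      filter_upwards [hev e t ht] with t' ht'
      rw [hζ e t ht, hζ e t' ht']

end FinGraph

/-! ### Singular 1-chains as combinations of paths -/

section homology
open Simplicial

variable (X : Type) [TopologicalSpace X]

/-- The singular chain complex of `X` with rational coefficients. -/
noncomputable def singularChains : ChainComplex (ModuleCat ℚ) ℕ :=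
  (singularChainComplexFunctor ℚ).obj (TopCat.of X)

/-- Singular 1-simplices are paths, the vertex `0` of the simplex corresponding to `0 : I`. -/
noncomputable def simplexEquivPath :
    (TopCat.toSSet.obj (TopCat.of X)) _⦋1⦌ ≃ C(I, X) :=
  (TopCat.toSSetObjEquiv (TopCat.of X) _).trans
    (stdSimplexHomeomorphUnitInterval.continuousMapCongr (.refl X))

/-- The generator of the chain module given by a singular simplex. -/
noncomputable def simplexGen {n : ℕ} (τ : (TopCat.toSSet.obj (TopCat.of X)) _⦋n⦌) :
    (singularChains X).X n := ModuleCat.freeMk (R := ℚ) τ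

theorem objD_apply (M : SimplicialObject (ModuleCat ℚ)) (n : ℕ) (x : M _⦋n + 1⦌) :
    (AlgebraicTopology.AlternatingFaceMapComplex.objD M n).hom x =
      ∑ i : Fin (n + 2), (-1 : ℤ) ^ (i : ℕ) • (M.δ i).hom x := by
  simp only [AlgebraicTopology.AlternatingFaceMapComplex.objD]
  rw [ModuleCat.hom_sum, LinearMap.sum_apply]
  refine Finset.sum_congr rfl fun i _ => ?_
  rw [ModuleCat.hom_zsmul, LinearMap.smul_apply]

theorem d_simplexGen (n : ℕ) (τ : (TopCat.toSSet.obj (TopCat.of X)) _⦋n+1⦌) :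
    (singularChains X).d (n + 1) n (simplexGen X τ) =
      ∑ i : Fin (n + 2), (-1 : ℤ) ^ (i : ℕ) •
        simplexGen X ((TopCat.toSSet.obj (TopCat.of X)).δ i τ) := by
  have : (singularChains X).d (n + 1) n = AlgebraicTopology.AlternatingFaceMapComplex.objD
    (((SimplicialObject.whiskering _ _).obj (ModuleCat.free ℚ)).obj (TopCat.toSSet.obj (TopCat.of X))) n :=
    AlgebraicTopology.alternatingFaceMapComplex_obj_d _ _
  rw [this]
  refine (objD_apply _ n _).trans (Finset.sum_congr rfl fun i _ => ?_)
  congr 1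
  exact ModuleCat.free_map_apply _ _

/-- An affine singular simplex restricts on a face to the affine simplex on the vertices of the
face. -/
theorem sum_stdSimplex_map_smul {n : ℕ} {E : Type*} [AddCommGroup E] [Module ℝ E]
    (i : Fin (n + 2)) (z : stdSimplex ℝ (Fin (n + 1))) (P : Fin (n + 2) → E) :
    ∑ j, stdSimplex.map i.succAbove z j • P j = ∑ k, z k • P (i.succAbove k) := by
  have : ∀ j, stdSimplex.map i.succAbove z j = ∑ k with i.succAbove k = j, z k := by
    intro j
    simp only [stdSimplex.map_coe]
    exact FunOnFinite.linearMap_apply_apply ..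
  simp only [this, Finset.sum_smul]
  rw [← Finset.sum_fiberwise _ i.succAbove (fun k => z k • P (i.succAbove k))]
  refine Finset.sum_congr rfl fun j _ => Finset.sum_congr rfl fun k hk => ?_
  rw [(Finset.mem_filter.1 hk).2]

theorem vertex_δ (τ : (TopCat.toSSet.obj (TopCat.of X)) _⦋1⦌) (i : Fin 2) :
    TopCat.toSSetObj₀Equiv ((TopCat.toSSet.obj (TopCat.of X)).δ i τ) =
      simplexEquivPath X τ (if i = 0 then 1 else 0) := by
  change TopCat.toSSetObjEquiv (TopCat.of X) _ τ (stdSimplex.map i.succAbove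
        (default : stdSimplex ℝ (Fin 1))) = TopCat.toSSetObjEquiv (TopCat.of X) _ τ
      (stdSimplexHomeomorphUnitInterval.symm (if i = 0 then 1 else 0))
  congr 1
  rw [Homeomorph.eq_symm_apply]
  have hd : (default : stdSimplex ℝ (Fin 1)) = stdSimplex.vertex 0 := Subsingleton.elim _ _
  rw [hd, stdSimplex.map_vertex]
  fin_cases i
  · exact stdSimplexHomeomorphUnitInterval_one
  · exact stdSimplexHomeomorphUnitInterval_zero

/-- The class of a path in the quotient of the singular 1-chains by the boundaries. -/
noncomputable def pathClass (γ : C(I, X)) : (singularChains X).opcycles 1 :=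
  (singularChains X).pOpcycles 1 (simplexGen X ((simplexEquivPath X).symm γ))

/-- The defining relation is the boundary of the affine singular triangle with vertices `p`, `q`,
`r`. -/
theorem isChordAdditive_pathClass : IsChordAdditive (pathClass X) := by
  intro F p q r
  let P : Fin 3 → ℝ × ℝ := ![p, q, r]
  have hc : ∀ i : Fin 3, Continuous fun x : stdSimplex ℝ (Fin 3) => x i := fun i =>
    (continuous_apply i).comp continuous_subtype_val
  let τ : (TopCat.toSSet.obj (TopCat.of X)) _⦋2⦌ := (TopCat.toSSetObjEquiv (TopCat.of X) _).symm
    (F.comp ⟨fun x => ∑ j, x j • P j,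
      continuous_finsetSum _ fun i _ => (hc i).smul continuous_const⟩)
  have hτ : ∀ i : Fin 3, (TopCat.toSSet.obj (TopCat.of X)).δ i τ =
      (simplexEquivPath X).symm (chord F (P (i.succAbove 0)) (P (i.succAbove 1))) := by
    intro i
    rw [Equiv.eq_symm_apply]
    ext s
    change F (∑ j, stdSimplex.map i.succAbove (stdSimplexHomeomorphUnitInterval.symm s) j • P j) =
      F _
    rw [sum_stdSimplex_map_smul, Fin.sum_univ_two]
    congr 1
    change (1 - (s : ℝ)) • P (i.succAbove 0) + (s : ℝ) • P (i.succAbove 1) =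
      P (i.succAbove 0) + (s : ℝ) • (P (i.succAbove 1) - P (i.succAbove 0))
    simp only [sub_smul, smul_sub, one_smul]
    abel
  have h0 : (singularChains X).pOpcycles 1 ((singularChains X).d 2 1 (simplexGen X τ)) = 0 := by
    have := (singularChains X).d_pOpcycles 2 1
    exact congrArg (fun f => f.hom (simplexGen X τ)) this
  have h2 : (singularChains X).d 2 1 (simplexGen X τ) = _ :=
    (d_simplexGen X 1 τ).trans (Fin.sum_univ_three _)
  rw [h2, hτ, hτ, hτ, map_add, map_add, map_zsmul, map_zsmul, map_zsmul] at h0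
  change (-1 : ℤ) ^ 0 • pathClass X (chord F q r) + (-1 : ℤ) ^ 1 • pathClass X (chord F p r) +
    (-1 : ℤ) ^ 2 • pathClass X (chord F p q) = 0 at h0
  simp only [pow_zero, pow_one, one_smul, neg_smul, even_two, Even.neg_pow, one_pow] at h0
  rw [← sub_eq_zero, ← h0]
  abel

/-- Singular 1-chains as formal combinations of paths. -/
noncomputable def toPathChain : (singularChains X).X 1 →ₗ[ℚ] (C(I, X) →₀ ℚ) :=
  Finsupp.lmapDomain ℚ ℚ (simplexEquivPath X)

/-- Singular 0-chains as formal combinations of points. -/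
noncomputable def toPointChain : (singularChains X).X 0 →ₗ[ℚ] (X →₀ ℚ) :=
  Finsupp.lmapDomain ℚ ℚ (TopCat.toSSetObj₀Equiv (X := TopCat.of X))

theorem chain_hom_ext {n : ℕ} {M : Type*} [AddCommGroup M] [Module ℚ M]
    {f g : (singularChains X).X n →ₗ[ℚ] M} (h : ∀ τ, f (simplexGen X τ) = g (simplexGen X τ)) :
    f = g :=
  Finsupp.lhom_ext' (fun x ↦ LinearMap.ext_ring (h x))

theorem toPointChain_d (z : (singularChains X).X 1) :
    toPointChain X ((singularChains X).d 1 0 z) =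
      (toPathChain X z).mapDomain (· 1) - (toPathChain X z).mapDomain (· 0) := by
  have : toPointChain X ∘ₗ ((singularChains X).d 1 0).hom =
      (Finsupp.lmapDomain ℚ ℚ (fun γ : C(I, X) => γ 1) -
        Finsupp.lmapDomain ℚ ℚ (fun γ : C(I, X) => γ 0)) ∘ₗ toPathChain X := by
    refine chain_hom_ext X fun τ => ?_
    have h1 : toPathChain X (simplexGen X τ) = Finsupp.single (simplexEquivPath X τ) 1 :=
      Finsupp.mapDomain_single
    have h0 : ∀ v, toPointChain X (simplexGen X v) =
        Finsupp.single (TopCat.toSSetObj₀Equiv v) 1 := fun v => Finsupp.mapDomain_single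
    have h2 := d_simplexGen X 0 τ
    rw [LinearMap.comp_apply, LinearMap.comp_apply, h1]
    refine (congrArg _ h2).trans ?_
    simp [Fin.sum_univ_two, h0, Finsupp.mapDomain_single, sub_eq_add_neg]
    exact congrArg₂ (fun a b : X => Finsupp.single a (1 : ℚ) + -Finsupp.single b 1)
      (vertex_δ X τ 0) (vertex_δ X τ 1)
  exact LinearMap.congr_fun this z

theorem pOpcycles_eq (z : (singularChains X).X 1) :
    (singularChains X).pOpcycles 1 z = (toPathChain X z).sum fun γ c => c • pathClass X γ := by
  have : ((singularChains X).pOpcycles 1).hom =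
      Finsupp.linearCombination ℚ (pathClass X) ∘ₗ toPathChain X := by
    refine chain_hom_ext X fun τ => ?_
    have h1 : toPathChain X (simplexGen X τ) = Finsupp.single (simplexEquivPath X τ) 1 :=
      Finsupp.mapDomain_single
    rw [LinearMap.comp_apply, h1]
    simp [pathClass]
  exact LinearMap.congr_fun this z

/-- If the first Betti number exceeds one, there are two combinations of paths that are cycles (the
images under both endpoint maps agree) and whose classes modulo boundaries are independent. -/
theorem exists_independent_cycles (hb : 1 < firstBetti X) :
    ∃ z : Fin 2 → (C(I, X) →₀ ℚ), (∀ i, (z i).mapDomain (· 1) = (z i).mapDomain (· 0)) ∧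
      LinearIndependent ℚ fun i => (z i).sum fun γ c => c • pathClass X γ := by
  have hb' : 1 < Module.rank ℚ ((singularChains X).homology 1) := hb
  obtain ⟨v, hv⟩ : ∃ v : Fin 2 → (singularChains X).homology 1, LinearIndependent ℚ v := by
    have := rank_pos_iff_nontrivial.1 (zero_lt_one.trans hb')
    obtain ⟨x, hx⟩ := exists_ne (0 : (singularChains X).homology 1)
    obtain ⟨y, hy⟩ := exists_linearIndependent_pair_of_one_lt_rank hb' hx
    exact ⟨_, hy⟩
  have hsurj := (ModuleCat.epi_iff_surjective ((singularChains X).homologyπ 1)).1 inferInstance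
  have hinj := (ModuleCat.mono_iff_injective ((singularChains X).homologyι 1)).1 inferInstance
  choose c hc using fun i => hsurj (v i)
  let w : Fin 2 → (singularChains X).X 1 := fun i => (singularChains X).iCycles 1 (c i)
  refine ⟨fun i => toPathChain X (w i), fun i => ?_, ?_⟩
  · rw [← sub_eq_zero, ← toPointChain_d]
    have : (singularChains X).d 1 0 (w i) = 0 :=
      congrArg (fun f => f.hom (c i)) ((singularChains X).iCycles_d 1 0)
    rw [this, map_zero]
  · simp only [← pOpcycles_eq]
    have : (fun i => (singularChains X).pOpcycles 1 (w i)) =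
        fun i => ((singularChains X).homologyι 1).hom (v i) := by
      funext i
      rw [← hc i]
      exact (congrArg (fun f => f.hom (c i)) ((singularChains X).homology_π_ι 1)).symm
    rw [this]
    exact hv.map' _ (LinearMap.ker_eq_bot.2 hinj)

end homology

/-! ### Windings and crossings -/

section winding

variable {X : Type*} [TopologicalSpace X]

/-- The path `γ` as a map on the whole line, constant outside `[0, 1]`. -/
noncomputable def extendPath (γ : C(I, X)) : C(ℝ, X) :=
  γ.comp ⟨Set.projIcc (0 : ℝ) 1 zero_le_one, continuous_projIcc⟩

theorem extendPath_coe (γ : C(I, X)) (t : I) : extendPath γ t = γ t := by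
  simp [extendPath]

theorem extendPath_of_mem (γ : C(I, X)) {t : ℝ} (ht : t ∈ Set.Icc (0 : ℝ) 1) :
    extendPath γ t = γ ⟨t, ht⟩ := extendPath_coe γ ⟨t, ht⟩

theorem extendPath_zero (γ : C(I, X)) : extendPath γ 0 = γ 0 := by
  simpa using extendPath_coe γ 0

theorem extendPath_one (γ : C(I, X)) : extendPath γ 1 = γ 1 := by
  simpa using extendPath_coe γ 1

theorem chord₁_extendPath (γ : C(I, X)) : chord₁ (extendPath γ) 0 1 = γ := by
  ext s
  simp [chord₁, extendPath]

/-- A chosen real lift of `u` along the path `γ`. -/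
noncomputable def angleLift (u : C(X, UnitAddCircle)) (γ : C(I, X)) : C(ℝ, ℝ) :=
  (exists_real_lift (u.comp (extendPath γ))).choose

theorem coe_angleLift (u : C(X, UnitAddCircle)) (γ : C(I, X)) (t : ℝ) :
    (angleLift u γ t : UnitAddCircle) = u (extendPath γ t) :=
  (exists_real_lift (u.comp (extendPath γ))).choose_spec t

/-- The total change of the angle `u` along `γ`; an integer when `γ` is a loop. -/
noncomputable def winding (u : C(X, UnitAddCircle)) (γ : C(I, X)) : ℝ :=
  angleLift u γ 1 - angleLift u γ 0

/-- The change of the integer part of the angle `u` along `γ`: the signed number of passages of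
`u ∘ γ` through the base point of the circle. -/
noncomputable def crossings (u : C(X, UnitAddCircle)) (γ : C(I, X)) : ℤ :=
  ⌊angleLift u γ 1⌋ - ⌊angleLift u γ 0⌋

/-- The winding may be computed from any continuous real lift. -/
theorem winding_eq (u : C(X, UnitAddCircle)) (γ : C(I, X)) {f : ℝ → ℝ} (hf : Continuous f)
    (h : ∀ t : I, (f t : UnitAddCircle) = u (γ t)) : winding u γ = f 1 - f 0 := by
  have := eq_of_coe_eq_zero isPreconnected_Icc (f := fun t => angleLift u γ t - f t)
    (by fun_prop) (fun t ht => by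
      rw [AddCircle.coe_sub, coe_angleLift, extendPath_of_mem γ ht, ← h ⟨t, ht⟩, sub_self])
    (Set.right_mem_Icc.2 (zero_le_one (α := ℝ))) (Set.left_mem_Icc.2 zero_le_one)
  simp only [winding]
  linarith

theorem winding_trans (u : C(X, UnitAddCircle)) {x y z : X} (a : Path x y) (b : Path y z) :
    winding u (a.trans b : C(I, X)) = winding u (a : C(I, X)) + winding u (b : C(I, X)) := by
  set L := angleLift u (a.trans b : C(I, X)) with hL
  have ha := winding_eq u (a : C(I, X)) (f := fun t => L (t / 2)) (by fun_prop) fun t => by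
    have hm : (t : ℝ) / 2 ∈ Set.Icc (0 : ℝ) 1 := ⟨by linarith [t.2.1], by linarith [t.2.2]⟩
    rw [coe_angleLift, extendPath_of_mem _ hm]
    change u ((a.trans b) _) = u (a t)
    rw [Path.trans_apply, dif_pos (by change (t : ℝ) / 2 ≤ 1 / 2; linarith [t.2.2])]
    congr 2
    ext
    change 2 * ((t : ℝ) / 2) = t
    ring
  have hb := winding_eq u (b : C(I, X)) (f := fun t => L ((1 + t) / 2)) (by fun_prop) fun t => by
    have hm : (1 + (t : ℝ)) / 2 ∈ Set.Icc (0 : ℝ) 1 :=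
      ⟨by linarith [t.2.1], by linarith [t.2.2]⟩
    rw [coe_angleLift, extendPath_of_mem _ hm]
    change u ((a.trans b) _) = u (b t)
    rcases t.2.1.eq_or_lt with h0 | h0
    · have ht : t = 0 := Subtype.ext h0.symm
      subst ht
      rw [Path.trans_apply, dif_pos (by simp)]
      simp
    · rw [Path.trans_apply, dif_neg (by change ¬ (1 + (t : ℝ)) / 2 ≤ 1 / 2; linarith)]
      congr 2
      ext
      change 2 * ((1 + (t : ℝ)) / 2) - 1 = t
      ring
  rw [ha, hb, winding, ← hL]
  norm_num

theorem winding_symm (u : C(X, UnitAddCircle)) {x y : X} (a : Path x y) :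
    winding u (a.symm : C(I, X)) = - winding u (a : C(I, X)) := by
  rw [winding_eq u (a.symm : C(I, X)) (f := fun t => angleLift u (a : C(I, X)) (1 - t))
    (by fun_prop) fun t => by
      have : (1 - (t : ℝ)) = (σ t : I) := by simp
      rw [coe_angleLift, this, extendPath_coe]; rfl]
  simp [winding]

/-- The representative in `[0, 1)` of a point of the circle `ℝ / ℤ`. -/
noncomputable def circleFract (c : UnitAddCircle) : ℝ :=
  Int.fract (Function.surjInv (QuotientAddGroup.mk_surjective) c)

theorem circleFract_coe (r : ℝ) : circleFract (r : UnitAddCircle) = Int.fract r := by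
  rw [circleFract, Int.fract_eq_fract]
  have h : ((Function.surjInv (QuotientAddGroup.mk_surjective) (r : UnitAddCircle) - r : ℝ) :
      UnitAddCircle) = 0 := by
    rw [AddCircle.coe_sub, sub_eq_zero]
    exact Function.surjInv_eq _ _
  obtain ⟨n, hn⟩ := (AddCircle.coe_eq_zero_iff (1 : ℝ)).1 h
  exact ⟨n, by rw [← hn]; simp⟩

theorem winding_eq_crossings (u : C(X, UnitAddCircle)) (γ : C(I, X)) :
    winding u γ = crossings u γ + circleFract (u (γ 1)) - circleFract (u (γ 0)) := by
  rw [← extendPath_one, ← extendPath_zero, ← coe_angleLift, ← coe_angleLift, circleFract_coe,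
    circleFract_coe, winding, crossings, Int.fract, Int.fract]
  push_cast
  ring

/-- The loop at `x₀` that goes to the start of `γ`, runs along `γ` and returns; the connecting paths
depend only on the endpoints of `γ`. -/
noncomputable def closeUp [PathConnectedSpace X] (x₀ : X) (γ : C(I, X)) : Path x₀ x₀ :=
  ((PathConnectedSpace.somePath x₀ (γ 0)).trans ⟨γ, rfl, rfl⟩).trans
    (PathConnectedSpace.somePath x₀ (γ 1)).symm

/-- The winding of the closed-up path and the crossings of the path differ by a term depending on
the endpoints, which cancels over a cycle. -/
theorem exists_winding_closeUp [PathConnectedSpace X] (x₀ : X) (u : C(X, UnitAddCircle)) :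
    ∃ ψ : X → ℝ, ∀ γ : C(I, X),
      winding u (closeUp x₀ γ : C(I, X)) = crossings u γ + ψ (γ 0) - ψ (γ 1) := by
  refine ⟨fun x => winding u (PathConnectedSpace.somePath x₀ x : C(I, X)) - circleFract (u x),
    fun γ => ?_⟩
  rw [closeUp, winding_trans, winding_trans, winding_symm]
  have : winding u ((⟨γ, rfl, rfl⟩ : Path (γ 0) (γ 1)) : C(I, X)) = winding u γ := rfl
  rw [this, winding_eq_crossings u γ]
  ring

/-- Endpoint differences sum to zero over a cycle. -/
theorem sum_endpoint_sub {M : Type*} [AddCommGroup M] [Module ℚ M] {z : C(I, X) →₀ ℚ}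
    (hz : z.mapDomain (· 1) = z.mapDomain (· 0)) (g : X → M) :
    z.sum (fun γ c => c • (g (γ 1) - g (γ 0))) = 0 := by
  have h := congrArg (fun w : X →₀ ℚ => w.sum fun x c => c • g x) hz
  rw [Finsupp.sum_mapDomain_index (by simp) (by simp [add_smul]),
    Finsupp.sum_mapDomain_index (by simp) (by simp [add_smul])] at h
  simp only [smul_sub]
  rw [Finsupp.sum_sub, h, sub_self]

/-- The linear extension of `crossings u` to combinations of paths. -/
noncomputable def totalCrossings (u : C(X, UnitAddCircle)) (z : C(I, X) →₀ ℚ) : ℚ :=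
  z.sum fun γ c => c * crossings u γ

/-- On a cycle the crossings of `u` add up to the windings of `u` along the associated loops at
`x₀`. -/
theorem totalCrossings_eq [PathConnectedSpace X] (x₀ : X) (u : C(X, UnitAddCircle))
    {z : C(I, X) →₀ ℚ} (hz : z.mapDomain (· 1) = z.mapDomain (· 0)) :
    (totalCrossings u z : ℝ) = z.sum fun γ c => c * winding u (closeUp x₀ γ : C(I, X)) := by
  obtain ⟨ψ, hψ⟩ := exists_winding_closeUp x₀ u
  have h := sum_endpoint_sub hz ψ
  rw [← add_zero (z.sum fun γ c => _ * _), ← h, ← Finsupp.sum_add]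
  simp only [totalCrossings, Finsupp.sum]
  push_cast
  refine Finset.sum_congr rfl fun γ _ => ?_
  rw [hψ, Rat.smul_def]
  ring

theorem winding_mul_comm {U V : Set (X × X)} (hU : IsOpen U) (hV : IsOpen V)
    (hUV : U ∪ V = Set.univ) (mU : HasMotionPlanner U) (mV : HasMotionPlanner V)
    (u v : C(X, UnitAddCircle)) {x : X} (a b : Path x x) :
    winding u (a : C(I, X)) * winding v (b : C(I, X)) =
      winding u (b : C(I, X)) * winding v (a : C(I, X)) := by
  by_contra hne
  exact not_two_motionPlanners u v (extendPath (a : C(I, X))) (extendPath (b : C(I, X)))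
    (by rw [extendPath_zero, extendPath_one]; simp)
    (by rw [extendPath_zero, extendPath_one]; simp)
    (angleLift u (a : C(I, X))) (angleLift v (a : C(I, X)))
    (angleLift u (b : C(I, X))) (angleLift v (b : C(I, X)))
    (coe_angleLift _ _) (coe_angleLift _ _) (coe_angleLift _ _) (coe_angleLift _ _)
    hne U V hU hV hUV mU mV

/-- The bilinear extension of `winding_mul_comm` from loops at a common base point to cycles. -/
theorem totalCrossings_mul_comm [PathConnectedSpace X] {U V : Set (X × X)}
    (hU : IsOpen U) (hV : IsOpen V)
    (hUV : U ∪ V = Set.univ) (mU : HasMotionPlanner U) (mV : HasMotionPlanner V)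
    (u v : C(X, UnitAddCircle)) {z w : C(I, X) →₀ ℚ}
    (hz : z.mapDomain (· 1) = z.mapDomain (· 0)) (hw : w.mapDomain (· 1) = w.mapDomain (· 0)) :
    totalCrossings u z * totalCrossings v w = totalCrossings u w * totalCrossings v z := by
  obtain ⟨x₀⟩ : Nonempty X := inferInstance
  have : (totalCrossings u z * totalCrossings v w : ℝ) =
      totalCrossings u w * totalCrossings v z := by
    rw [totalCrossings_eq x₀ u hz, totalCrossings_eq x₀ v hw, totalCrossings_eq x₀ u hw,
      totalCrossings_eq x₀ v hz]
    simp only [Finsupp.sum]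
    rw [Finset.sum_mul_sum, Finset.sum_mul_sum, Finset.sum_comm]
    refine Finset.sum_congr rfl fun β _ => Finset.sum_congr rfl fun α _ => ?_
    have := winding_mul_comm hU hV hUV mU mV u v (closeUp x₀ α) (closeUp x₀ β)
    linear_combination (z α : ℝ) * (w β : ℝ) * this
  exact_mod_cast this

theorem hasMotionPlanner_empty : HasMotionPlanner (∅ : Set (X × X)) :=
  ⟨⟨fun p => p.2.elim, continuous_of_const fun p => p.2.elim⟩, fun p => p.2.elim⟩

end winding

/-! ### The lower bound for graphs -/

namespace FinGraph

variable {G : FinGraph}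

/-- On a cycle a chord-additive function is the combination of the edge values with the total
crossings as coefficients. -/
theorem sum_eq_totalCrossings {A : Type*} [AddCommGroup A] [Module ℚ A] {φ : C(I, G.Space) → A}
    (hφ : IsChordAdditive φ) {z : C(I, G.Space) →₀ ℚ}
    (hz : z.mapDomain (· 1) = z.mapDomain (· 0)) :
    z.sum (fun γ c => c • φ γ) = ∑ e, totalCrossings (edgeCircle e) z • edgeClass φ e := by
  have key : ∀ γ : C(I, G.Space), φ γ = ∑ e, (crossings (edgeCircle e) γ : ℚ) • edgeClass φ e +
      (edgeTail hφ (γ 1) - edgeTail hφ (γ 0)) := by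
    intro γ
    have := chord_formula hφ (extendPath γ) (fun e => angleLift (edgeCircle e) γ)
      (fun e t => coe_angleLift _ _ _) 0 1
    rw [chord₁_extendPath, extendPath_zero, extendPath_one, add_sub_assoc] at this
    rw [this]
    simp only [Int.cast_smul_eq_zsmul, crossings]
  have h0 := sum_endpoint_sub hz (edgeTail hφ)
  calc z.sum (fun γ c => c • φ γ)
      = z.sum (fun γ c => c • ∑ e, (crossings (edgeCircle e) γ : ℚ) • edgeClass φ e) +
          z.sum (fun γ c => c • (edgeTail hφ (γ 1) - edgeTail hφ (γ 0))) := by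
        rw [← Finsupp.sum_add]
        refine Finsupp.sum_congr fun γ _ => ?_
        rw [key γ, smul_add]
    _ = _ := by
        rw [h0, add_zero]
        simp only [totalCrossings, Finsupp.sum, Finset.smul_sum, Finset.sum_smul, smul_smul]
        exact Finset.sum_comm

/-- Two open sets with motion planners make the crossing vectors of any two cycles proportional,
whereas the classes of two independent cycles are given by their crossing vectors. -/
theorem not_cover_two [ConnectedSpace G.Space] (hb : 1 < firstBetti G.Space)
    {U V : Set (G.Space × G.Space)} (hU : IsOpen U) (hV : IsOpen V)
    (hUV : U ∪ V = Set.univ) (mU : HasMotionPlanner U) (mV : HasMotionPlanner V) : False := by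
  obtain ⟨z, hz, hind⟩ := exists_independent_cycles G.Space hb
  simp only [fun i => sum_eq_totalCrossings (isChordAdditive_pathClass G.Space) (hz i)] at hind
  have hcomm := fun e e' => totalCrossings_mul_comm hU hV hUV mU mV (edgeCircle e) (edgeCircle e')
    (hz 0) (hz 1)
  obtain ⟨e', he'⟩ : ∃ e', totalCrossings (edgeCircle e') (z 1) ≠ 0 := by
    by_contra! h
    apply hind.ne_zero 1
    simp [h]
  -- The combination of the two cycles that kills the crossings of `e'` kills all crossings.
  refine he' (Fintype.linearIndependent_iff.1 hind
    ![totalCrossings (edgeCircle e') (z 1), -totalCrossings (edgeCircle e') (z 0)] ?_ 0)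
  simp only [Fin.sum_univ_two, Finset.smul_sum, smul_smul]
  rw [← Finset.sum_add_distrib]
  refine Finset.sum_eq_zero fun e _ => ?_
  rw [← add_smul]
  have : totalCrossings (edgeCircle e') (z 1) * totalCrossings (edgeCircle e) (z 0) +
      -totalCrossings (edgeCircle e') (z 0) * totalCrossings (edgeCircle e) (z 1) = 0 := by
    linear_combination hcomm e e'
  exact (congrArg (· • _) this).trans (zero_smul ..)

end FinGraph

end

/-! ### The topological complexity of a graph -/

/-- A connected finite graph `X` with `b₁(X) > 1` has `TC(X) = 3`. -/
theorem TC_graph_eq_three (G : FinGraph) [ConnectedSpace G.Space]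
    (hb : 1 < firstBetti G.Space) :
    topologicalComplexity G.Space = 3 := by
  apply le_antisymm
  · obtain ⟨U, hU⟩ := FinGraph.exists_three_motionPlanners (G := G)
    exact sInf_le ⟨3, rfl, U, hU⟩
  · refine le_sInf ?_
    rintro _ ⟨k, rfl, U, hU, hcov, hm⟩
    by_contra hk
    have hk3 : k < 3 := by exact_mod_cast not_le.1 hk
    -- Pad the cover with empty sets to get exactly two members.
    let W : ℕ → Set (G.Space × G.Space) := fun n => if h : n < k then U ⟨n, h⟩ else ∅
    have hW : ∀ n, IsOpen (W n) ∧ HasMotionPlanner (W n) := by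
      intro n
      by_cases h : n < k
      · simp only [W, h, dif_pos]; exact ⟨hU _, hm _⟩
      · simp only [W, h, dif_neg, not_false_eq_true]; exact ⟨isOpen_empty, hasMotionPlanner_empty⟩
    refine FinGraph.not_cover_two hb (hW 0).1 (hW 1).1 ?_ (hW 0).2 (hW 1).2
    rw [Set.eq_univ_iff_forall] at hcov ⊢
    intro p
    obtain ⟨⟨i, hi⟩, hp⟩ := Set.mem_iUnion.1 (hcov p)
    have hpi : p ∈ W i := by simpa only [W, hi, dif_pos] using hp
    have : i = 0 ∨ i = 1 := by omega
    rcases this with rfl | rfl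
    exacts [Or.inl hpi, Or.inr hpi]
end

section
/- For n ≥ 2 and d ≥ 2, the topological complexity of the configuration space of n distinct ordered points in ℝ^d equals TC(F(ℝ^d, n)) = 2n − 1 if d ≥ 3 is odd, and TC(F(ℝ^d, n)) = 2n − 2 if d ≥ 2 is even. -/
/-!
The proof avoids cohomology: the lower bounds come from mapping degree, the upper bounds from an
explicit motion planner. Points of `Conf G n` are configurations in a Euclidean space `G`.

**Lower bounds.** Let `k` open sets with motion planners cover `Conf G n × Conf G n`, and let `α`,
`β` be two families of configurations parametrised by a product of `k` spherical shells `1 ≤ ‖u m‖ ≤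
2` in `G`. A partition of unity with the property that at each parameter some member equals `1`
turns the planners into `k` homotopies `D m` starting at `β`, such that for each parameter at least
one of them ends at `α` (`exists_deform`). Choose a pair of indices `i m ≠ j m` for each `m` and
consider the map whose `m`-th coordinate is `w (D m)(i m, j m) + (1 - w) α (i m, j m)`, where `γ (i,
j)` is the difference of the `i`-th and `j`-th points of `γ`, and the weight `w` is `0` on one
boundary sphere of the `m`-th shell and `1` on the other. No coordinate vanishes on its boundary
spheres, so the degree over the product of shells is constant during the homotopy; at the end, at each
parameter, some coordinate is a plain difference `α (i m, j m) ≠ 0`, so that degree is zero. Hence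
`k` sets cannot suffice if the initial map is homotopic, without zeros on the boundary, to a map of
nonzero degree (`planner_obstruction`). The degree itself is handled through the integral `∫ χ · φ ∘
p · det Dp` (`integral_homotopy`, `degree_principle`).

For general `G`, the families `α = (0, x, x + ε i • a i)` and `β = (0, e, ε i • b i)` have `2n - 3`
directions as parameters and rule out `2n - 3` sets, so `2n - 2 ≤ TC`; after a homotopy the map
becomes a translation. If `d = dim G` is odd, the families `α = (0, c i • x i)` and `β = (0, c i • y
i)` have `2n - 2` directions as parameters, and the map becomes a product of copies of `(u, v) ↦ (u
+ v, (‖v‖² - 9/4) v)`. The zeros of the second factor form the sphere of radius `3/2`, and its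
derivative has determinant `(‖v‖² - 9/4)^(d-1) (3 ‖v‖² - 9/4) ≥ 0` exactly because `d - 1` is even,
so the degree is nonzero and `2n - 1 ≤ TC`.

**Upper bounds.** Project a configuration onto the line spanned by a unit vector `E`, and let `c k`
count the points whose projection lies strictly below that of the `k`-th point. Where `c` is
constant, the configuration can be moved canonically to a fixed list of points on the line
(`homotopic_collapse`), and points on a line can be permuted by passing through an orthogonal line.
Under a small perturbation the number of distinct values of `c` can only grow, and if it does not
grow then `c` is unchanged; so the pairs of configurations whose total number of values is a given
integer lie in one open set with a planner (`exists_cover_of_rank`). With a constant `E` the total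
runs through `2, …, 2n`, giving `2n - 1` sets. If `d` is even, take `E` to be the direction from the
zeroth to the first point: each count is then at least `2`, and one more bit records whether the two
directions of a pair are antipodal; antipodal directions are joined through a rotated direction `J E
⟂ E`, which exists because `d` is even. The total runs through `4, …, 2n + 1`, giving `2n - 2` sets.
-/

open unitInterval

/-- The configuration space of `n` distinct ordered points in `X`. -/
abbrev Conf (X : Type*) [TopologicalSpace X] (n : ℕ) : Type _ :=
  {z : Fin n → X // Function.Injective z}

section

open Set Topology MeasureTheory

/-! ### The degree integral and its homotopy invariance -/

/-- Cramer's rule after applying a linear functional: expressing `w` through the rows of `C`. -/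
theorem cramer_sum {κ : Type*} [Fintype κ] [DecidableEq κ] (C : κ → κ → ℝ) (w : κ → ℝ)
    (l : (κ → ℝ) →ₗ[ℝ] ℝ) :
    ∑ i, l (C i) * Matrix.detRowAlternating (Function.update C i w)
      = l w * Matrix.detRowAlternating C := by
  have h := congrArg l (Matrix.mulVec_cramer (Matrix.transpose (Matrix.of C)) w)
  have h2 : Matrix.mulVec (Matrix.transpose (Matrix.of C))
      (Matrix.cramer (Matrix.transpose (Matrix.of C)) w) =
      ∑ i, Matrix.det (Function.update C i w) • C i := by
    ext j
    simp only [Matrix.mulVec, dotProduct, Matrix.transpose_apply, Matrix.of_apply,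
      Finset.sum_apply, Pi.smul_apply, smul_eq_mul, Matrix.cramer_transpose_apply]
    exact Finset.sum_congr rfl fun i _ => mul_comm _ _
  rw [h2, map_sum, map_smul, Matrix.det_transpose] at h
  simp only [map_smul, smul_eq_mul] at h
  rw [mul_comm (l w)]
  refine Eq.trans ?_ h
  exact Finset.sum_congr rfl fun i _ => mul_comm _ _

/-- The second-order terms in the divergence of the cofactor field cancel in pairs: exchanging rows
`i` and `j` changes the sign of the determinant, while the second derivatives `S i j` are symmetric.
-/
theorem antisymm_sum {κ : Type*} [Fintype κ] [DecidableEq κ] (C : κ → κ → ℝ) (w : κ → ℝ)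
    (S : κ → κ → κ → ℝ) (hS : ∀ i j, S i j = S j i) :
    ∑ i, ∑ j ∈ Finset.univ.erase i,
      Matrix.detRowAlternating (Function.update (Function.update C i w) j (S i j)) = (0:ℝ) := by
  set X := ∑ i, ∑ j ∈ Finset.univ.erase i,
      (Matrix.detRowAlternating (Function.update (Function.update C i w) j (S i j)) : ℝ) with hX
  have : X = - X := by
    conv_lhs => rw [hX, Finset.sum_comm' (t' := Finset.univ)
      (s' := fun i => Finset.univ.erase i) (by intro x y; simp [eq_comm])]
    rw [hX, ← Finset.sum_neg_distrib]
    refine Finset.sum_congr rfl fun i _ => ?_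
    rw [← Finset.sum_neg_distrib]
    refine Finset.sum_congr rfl fun j hj => ?_
    have hij : i ≠ j := (Finset.ne_of_mem_erase hj).symm
    rw [← AlternatingMap.map_swap _ _ hij]
    congr 1
    ext k l
    simp only [Function.comp]
    rcases eq_or_ne k i with rfl | hki
    · simp [hS]
    · rcases eq_or_ne k j with rfl | hkj
      · simp [hij.symm, hij]
      · simp [Equiv.swap_apply_of_ne_of_ne hki hkj, hki, hkj]
  linarith

/-- The determinant as a continuous multilinear function of the rows. -/
noncomputable def cdet (κ : Type*) [Fintype κ] [DecidableEq κ] :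
    ContinuousMultilinearMap ℝ (fun _ : κ => κ → ℝ) ℝ :=
  ⟨(Matrix.detRowAlternating : (κ → ℝ) [⋀^κ]→ₗ[ℝ] ℝ).toMultilinearMap, by
    change Continuous fun M : Matrix κ κ ℝ => M.det
    fun_prop⟩

theorem cdet_apply {κ : Type*} [Fintype κ] [DecidableEq κ] (C : κ → κ → ℝ) :
  cdet κ C = Matrix.detRowAlternating C := rfl

/-- If `C` is the Jacobian matrix of `h` (its rows are the partial derivatives), the field whose
`i`-th component is `χ · φ(h)` times the determinant with row `i` replaced by `w` has as divergence
`χ` times the variation of `φ(h) det C` when `h` moves with velocity `w`, at points where `φ(h)`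
vanishes or `χ` is stationary. -/
theorem div_identity {κ : Type*} [Fintype κ] [DecidableEq κ] (φ χ : (κ → ℝ) → ℝ)
    (h w : (κ → ℝ) → (κ → ℝ)) (hφ : ContDiff ℝ 2 φ) (hχ : ContDiff ℝ 2 χ) (hh : ContDiff ℝ 2 h)
    (hw : ContDiff ℝ 2 w) (x : κ → ℝ) (hx : fderiv ℝ χ x ≠ 0 → φ (h x) = 0)
    (C : (κ → ℝ) → κ → κ → ℝ) (hC : ∀ x i, C x i = fderiv ℝ h x (Pi.single i 1)) :
    ∑ i, fderiv ℝ (fun y => χ y * φ (h y) * cdet κ (Function.update (C y) i (w y))) x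
        (Pi.single i 1) =
      χ x * (fderiv ℝ φ (h x) (w x) * cdet κ (C x) + φ (h x) *
        ∑ i, cdet κ (Function.update (C x) i (fderiv ℝ w x (Pi.single i 1)))) := by
  set e : κ → κ → ℝ := fun i => Pi.single i 1 with he
  have hh1 : ∀ y, HasFDerivAt h (fderiv ℝ h y) y := fun y =>
    (hh.differentiable (by norm_num) y).hasFDerivAt
  have hh2 : HasFDerivAt (fderiv ℝ h) (fderiv ℝ (fderiv ℝ h) x) x :=
    ((hh.fderiv_right (m := 1) (by norm_num)).differentiable (by norm_num) x).hasFDerivAt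
  have hsymm := second_derivative_symmetric hh1 hh2
  have hCd : ∀ j, HasFDerivAt (fun y => C y j) ((fderiv ℝ (fderiv ℝ h) x).flip (e j)) x := by
    intro j
    have := hh2.clm_apply (hasFDerivAt_const (e j) x)
    rw [show (fun y => C y j) = fun y => fderiv ℝ h y (e j) from funext fun y => hC y j]
    exact this.congr_fderiv (by ext1 v; simp)
  have hwd : HasFDerivAt w (fderiv ℝ w x) x := (hw.differentiable (by norm_num) x).hasFDerivAt
  have hφd : HasFDerivAt (fun y => φ (h y)) ((fderiv ℝ φ (h x)).comp (fderiv ℝ h x)) x :=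
    ((hφ.differentiable (by norm_num) (h x)).hasFDerivAt).comp x (hh1 x)
  have hχd : HasFDerivAt χ (fderiv ℝ χ x) x := (hχ.differentiable (by norm_num) x).hasFDerivAt
  have hupd : ∀ i, fderiv ℝ (fun y => χ y * φ (h y) * cdet κ (Function.update (C y) i (w y))) x (e i)
      = χ x * (fderiv ℝ φ (h x) (C x i) * cdet κ (Function.update (C x) i (w x))
        + φ (h x) * (cdet κ (Function.update (C x) i (fderiv ℝ w x (e i)))
        + ∑ j ∈ Finset.univ.erase i, cdet κ (Function.update (Function.update (C x) i (w x)) j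
          (fderiv ℝ (fderiv ℝ h) x (e i) (e j))))) := by
    intro i
    let g : κ → (κ → ℝ) → κ → ℝ := fun j y => Function.update (C y) i (w y) j
    let g' : κ → (κ → ℝ) →L[ℝ] κ → ℝ := fun j =>
      if j = i then fderiv ℝ w x else (fderiv ℝ (fderiv ℝ h) x).flip (e j)
    have hg : ∀ j, HasFDerivAt (g j) (g' j) x := by
      intro j
      by_cases hj : j = i
      · subst hj; simpa [g, g'] using hwd
      · simpa [g, g', hj] using hCd j
    have hM := HasFDerivAt.multilinear_comp (cdet κ) hg
    have hall := (hχd.mul hφd).mul hM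
    have hall' : fderiv ℝ (fun y => χ y * φ (h y) * cdet κ (Function.update (C y) i (w y))) x = _ :=
      hall.fderiv
    rw [hall']
    have hgx : (fun j => g j x) = Function.update (C x) i (w x) := rfl
    have hz : fderiv ℝ χ x (e i) * φ (h x) = 0 := by
      by_cases h0 : fderiv ℝ χ x = 0
      · simp [h0]
      · simp [hx h0]
    simp only [add_apply, smul_apply, smul_eq_mul, Pi.mul_apply,
      sum_apply, ContinuousLinearMap.comp_apply, hgx,
      ContinuousMultilinearMap.toContinuousLinearMap_apply]
    rw [← Finset.add_sum_erase _ _ (Finset.mem_univ i)]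
    have h1 : (fderiv ℝ h x) (e i) = C x i := (hC x i).symm
    have h2 : ∑ j ∈ Finset.univ.erase i, cdet κ (Function.update (Function.update (C x) i (w x)) j
          (g' j (e i))) = ∑ j ∈ Finset.univ.erase i, cdet κ (Function.update (Function.update (C x) i (w x)) j
          (fderiv ℝ (fderiv ℝ h) x (e i) (e j))) := by
      refine Finset.sum_congr rfl fun j hj => ?_
      have hj : j ≠ i := Finset.ne_of_mem_erase hj
      simp [g', hj]
    have h3 : g' i = fderiv ℝ w x := by simp [g']
    rw [h1, h2, h3, Function.update_idem]
    linear_combination (cdet κ (Function.update (C x) i (w x))) * hz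
  change ∑ i, fderiv ℝ _ x (e i) = _
  rw [Finset.sum_congr rfl fun i _ => hupd i, ← Finset.mul_sum, Finset.sum_add_distrib,
    ← Finset.mul_sum, Finset.sum_add_distrib]
  congr 2
  · exact cramer_sum (C x) (w x) (fderiv ℝ φ (h x)).toLinearMap
  · congr 1
    rw [add_eq_left]
    exact antisymm_sum (C x) (w x) _ fun i j => hsymm (e i) (e j)

/-- The Jacobian determinant of `f` at `x`, computed with the partial derivatives as rows. -/
noncomputable def jac {κ : Type*} [Fintype κ] [DecidableEq κ] (f : (κ → ℝ) → (κ → ℝ))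
    (x : κ → ℝ) : ℝ :=
  cdet κ fun i => fderiv ℝ f x (Pi.single i 1)

theorem ContDiff.continuous_jac {κ : Type*} [Fintype κ] [DecidableEq κ]
    {f : (κ → ℝ) → (κ → ℝ)} (hf : ContDiff ℝ 2 f) : Continuous (jac f) := by
  have := hf.continuous_fderiv (by norm_num)
  unfold jac
  fun_prop

/-- The degree integral `∫ χ · φ(p) · det Dp` is unchanged along a straight-line homotopy from `p`
to `q`, provided `φ` vanishes on the image of the points where `χ` is not stationary: the
`t`-derivative of the integrand is the divergence of a compactly supported field. -/
theorem integral_homotopy {κ : Type*} [Fintype κ] [DecidableEq κ] (φ χ : (κ → ℝ) → ℝ)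
    (p q : (κ → ℝ) → (κ → ℝ)) (hφ : ContDiff ℝ 2 φ) (hχ : ContDiff ℝ 2 χ) (hp : ContDiff ℝ 2 p)
    (hq : ContDiff ℝ 2 q) (hχc : HasCompactSupport χ)
    (hb : ∀ t ∈ Icc (0:ℝ) 1, ∀ x, fderiv ℝ χ x ≠ 0 → φ (p x + t • (q x - p x)) = 0) :
    ∫ x, χ x * φ (p x) * jac p x = ∫ x, χ x * φ (q x) * jac q x := by
  set w : (κ → ℝ) → (κ → ℝ) := fun x => q x - p x with hwdef
  have hw : ContDiff ℝ 2 w := hq.sub hp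
  set e : κ → κ → ℝ := fun i => Pi.single i 1 with he
  let C : ℝ → (κ → ℝ) → κ → κ → ℝ := fun t x i => fderiv ℝ p x (e i) + t • fderiv ℝ w x (e i)
  let G : ℝ → (κ → ℝ) → ℝ := fun t x => χ x * φ (p x + t • w x) * cdet κ (C t x)
  let G' : ℝ → (κ → ℝ) → ℝ := fun t x => χ x * (fderiv ℝ φ (p x + t • w x) (w x) * cdet κ (C t x)
    + φ (p x + t • w x) * ∑ i, cdet κ (Function.update (C t x) i (fderiv ℝ w x (e i))))
  have hpc := hp.continuous
  have hwc := hw.continuous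
  have hφc := hφ.continuous
  have hχcont := hχ.continuous
  have hpc' := hp.continuous_fderiv (by norm_num)
  have hwc' := hw.continuous_fderiv (by norm_num)
  have hφc' := hφ.continuous_fderiv (by norm_num)
  have hC : Continuous fun z : ℝ × (κ → ℝ) => C z.1 z.2 := by fun_prop
  have hGc : Continuous fun z : ℝ × (κ → ℝ) => G z.1 z.2 := by fun_prop
  have hG'c : Continuous fun z : ℝ × (κ → ℝ) => G' z.1 z.2 := by fun_prop
  have hGt : ∀ t, Continuous (G t) := fun t =>
    hGc.comp (by fun_prop : Continuous fun x : κ → ℝ => (t, x))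
  have hG't : ∀ t, Continuous (G' t) := fun t =>
    hG'c.comp (by fun_prop : Continuous fun x : κ → ℝ => (t, x))
  have hGs : ∀ t, HasCompactSupport (G t) := fun t => (hχc.mul_right).mul_right
  have hG's : ∀ t, HasCompactSupport (G' t) := fun t => hχc.mul_right
  have hder : ∀ t x, HasDerivAt (fun s => G s x) (G' t x) t := by
    intro t x
    have h1 : HasDerivAt (fun s : ℝ => p x + s • w x) (w x) t := by
      simpa using ((hasDerivAt_id t).smul_const (w x)).const_add (p x)
    have h2 : HasDerivAt (fun s : ℝ => φ (p x + s • w x)) (fderiv ℝ φ (p x + t • w x) (w x)) t :=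
      ((hφ.differentiable (by norm_num) _).hasFDerivAt).comp_hasDerivAt t h1
    have h3 : ∀ i, HasDerivAt (fun s : ℝ => C s x i) (fderiv ℝ w x (e i)) t := fun i => by
      have := ((hasDerivAt_id t).smul_const (fderiv ℝ w x (e i))).const_add (fderiv ℝ p x (e i))
      simpa only [one_smul, id] using this
    have h4 := (HasFDerivAt.multilinear_comp (cdet κ) fun i => (h3 i).hasFDerivAt).hasDerivAt
    have h5 := (h2.const_mul (χ x)).mul h4
    convert! h5 using 1
    simp only [G', sum_apply, ContinuousLinearMap.comp_apply,
      ContinuousMultilinearMap.toContinuousLinearMap_apply,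
      ContinuousLinearMap.toSpanSingleton_apply, one_smul]
    ring
  have hI : ∀ t, HasDerivAt (fun s => ∫ x, G s x) (∫ x, G' t x) t := by
    intro t
    obtain ⟨M, hM⟩ := (isCompact_Icc (a := t - 1) (b := t + 1)).prod hχc
      |>.exists_bound_of_continuousOn hG'c.continuousOn
    refine (hasDerivAt_integral_of_dominated_loc_of_deriv_le
      (bound := (tsupport χ).indicator fun _ => M) (s := Icc (t - 1) (t + 1))
      (Icc_mem_nhds (by linarith) (by linarith))
      (Filter.Eventually.of_forall fun s => (hGt s).aestronglyMeasurable)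
      ((hGt t).integrable_of_hasCompactSupport (hGs t)) (hG't t).aestronglyMeasurable
      (Filter.Eventually.of_forall fun x s hs => ?_) ?_
      (Filter.Eventually.of_forall fun x s _ => hder s x)).2
    · by_cases hx : x ∈ tsupport χ
      · rw [indicator_of_mem hx]
        exact hM (s, x) ⟨hs, hx⟩
      · rw [indicator_of_notMem hx]
        simp [G', image_eq_zero_of_notMem_tsupport hx]
    · rw [integrable_indicator_iff (isClosed_tsupport χ).measurableSet]
      exact integrableOn_const hχc.measure_lt_top.ne
  have hzero : ∀ t ∈ Icc (0:ℝ) 1, ∫ x, G' t x = 0 := by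
    intro t ht
    let h : (κ → ℝ) → κ → ℝ := fun x => p x + t • w x
    have hh : ContDiff ℝ 2 h := hp.add (hw.const_smul t)
    have hCt : ∀ x i, C t x i = fderiv ℝ h x (e i) := by
      intro x i
      have : HasFDerivAt h (fderiv ℝ p x + t • fderiv ℝ w x) x :=
        (hp.differentiable (by norm_num) x).hasFDerivAt.add
          ((hw.differentiable (by norm_num) x).hasFDerivAt.const_smul t)
      rw [this.fderiv]; rfl
    have hCd : ContDiff ℝ 1 (C t) := by
      rw [contDiff_pi]
      intro i
      have := (hh.fderiv_right (m := 1) (by norm_num)).clm_apply (contDiff_const (c := e i))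
      rwa [show (fun y => C t y i) = fun y => fderiv ℝ h y (e i) from funext fun y => hCt y i]
    let Y : κ → (κ → ℝ) → ℝ := fun i y => χ y * φ (h y) * cdet κ (Function.update (C t y) i (w y))
    have hY : ∀ i, ContDiff ℝ 1 (Y i) := by
      intro i
      have hu : ContDiff ℝ 1 fun y => Function.update (C t y) i (w y) := by
        rw [contDiff_pi]
        intro j
        by_cases hj : j = i
        · subst hj; simpa using hw.of_le (by norm_num)
        · simpa [hj] using (contDiff_pi.1 hCd j)
      exact ((hχ.of_le (by norm_num)).mul ((hφ.comp hh).of_le (by norm_num))).mul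
        ((cdet κ).contDiff.comp hu)
    have hYs : ∀ i, HasCompactSupport (Y i) := fun i => (hχc.mul_right).mul_right
    have hYi : ∀ i, ∫ x, fderiv ℝ (Y i) x (e i) = 0 := by
      intro i
      have hi : Integrable fun x => fderiv ℝ (Y i) x (e i) :=
        (((hY i).continuous_fderiv (by norm_num)).clm_apply
          continuous_const).integrable_of_hasCompactSupport ((hYs i).fderiv_apply ℝ (e i))
      have := integral_mul_fderiv_eq_neg_fderiv_mul_of_integrable (μ := volume) (f := fun _ => (1:ℝ))
        (g := Y i) (v := e i) (by simp) (by simpa using hi)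
        (by simpa using (hY i).continuous.integrable_of_hasCompactSupport (hYs i))
        (fun x _ => differentiableAt_const _) (fun x _ => (hY i).differentiable (by norm_num) x)
      simpa using this
    have : ∀ x, G' t x = ∑ i, fderiv ℝ (Y i) x (e i) := fun x =>
      (div_identity φ χ h w hφ hχ hh hw x (hb t ht x) (C t) hCt).symm
    simp_rw [this]
    rw [integral_finsetSum _ fun i _ => (((hY i).continuous_fderiv (by norm_num)).clm_apply
          continuous_const).integrable_of_hasCompactSupport ((hYs i).fderiv_apply ℝ (e i))]
    exact Finset.sum_eq_zero fun i _ => hYi i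
  have hconst := constant_of_has_deriv_right_zero (f := fun s => ∫ x, G s x) (a := 0) (b := 1)
    (fun t _ => (hI t).continuousAt.continuousWithinAt)
    (fun t ht => by
      have := (hI t).hasDerivWithinAt (s := Ici t)
      rwa [hzero t ⟨ht.1, ht.2.le⟩] at this) 1 (by simp)
  have h0 : ∀ x, G 0 x = χ x * φ (p x) * jac p x := by
    intro x; simp [G, C, jac, e]
  have h1 : ∀ x, G 1 x = χ x * φ (q x) * jac q x := by
    intro x
    have : fderiv ℝ w x = fderiv ℝ q x - fderiv ℝ p x :=
      fderiv_sub (hq.differentiable (by norm_num) x) (hp.differentiable (by norm_num) x)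
    simp [G, C, jac, e, this, w]
  simp only [h0, h1] at hconst
  exact hconst.symm

/-! ### Existence of zeros by the degree -/

/-- The degree integral vanishes for a map staying outside the support of `φ`. -/
theorem integral_eq_zero_of_far {κ : Type*} [Fintype κ] [DecidableEq κ] {W : Set (κ → ℝ)} {δ : ℝ}
    (φ : ContDiffBump (0 : κ → ℝ)) (hφδ : φ.rOut = δ) {χ : (κ → ℝ) → ℝ}
    (hχ0 : ∀ x ∉ W, χ x = 0) (q : (κ → ℝ) → (κ → ℝ)) (hq : ∀ x ∈ W, δ ≤ ‖q x‖) :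
    ∫ x, χ x * φ (q x) * jac q x = 0 := by
  rw [← integral_zero (κ → ℝ) ℝ (μ := volume)]
  congr 1
  funext x
  by_cases hx : x ∈ W
  · rw [φ.zero_of_le_dist (by rw [hφδ, dist_zero_right]; exact hq x hx)]; simp
  · simp [hχ0 x hx]

theorem exists_contDiff_near {κ : Type*} [Fintype κ] {S : Set (κ → ℝ)} (hS : IsClosed S)
    (f : (κ → ℝ) → (κ → ℝ)) (hf : ContinuousOn f S) {δ : ℝ} (hδ : 0 < δ) :
    ∃ q : (κ → ℝ) → (κ → ℝ), ContDiff ℝ 2 q ∧ ∀ x ∈ S, ‖q x - f x‖ < δ := by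
  obtain ⟨g, hg⟩ := ContinuousMap.exists_restrict_eq hS ⟨S.domRestrict f, hf.domRestrict⟩
  obtain ⟨q, hq, hqg, -⟩ := g.continuous.exists_contDiff_approx (ε := fun _ => δ) 2
    continuous_const fun _ => hδ
  refine ⟨q, hq, fun x hx => ?_⟩
  have : g x = f x := congrArg (fun h : C(S, κ → ℝ) => h ⟨x, hx⟩) hg
  rw [← this, ← dist_eq_norm]
  exact hqg x

/-- A homotopy `H` from a smooth map `p` without zeros on the boundary of `W` still has a zero at
time `1` if the Jacobian of `p` is nonnegative on `W` and positive at points where `p` is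
arbitrarily small. The homotopy is replaced by finitely many straight-line homotopies between smooth
approximations, along which the degree integral is constant; it is positive for `p`. -/
theorem degree_pi {κ : Type*} [Fintype κ] [DecidableEq κ] {W : Set (κ → ℝ)} (hW : IsOpen W)
    (hWb : Bornology.IsBounded W) (p : (κ → ℝ) → (κ → ℝ)) (hp : ContDiff ℝ 2 p)
    (H : ℝ → (κ → ℝ) → (κ → ℝ))
    (hH : ContinuousOn (fun z : ℝ × (κ → ℝ) => H z.1 z.2) (Icc 0 1 ×ˢ closure W))
    (h0 : ∀ x ∈ closure W, H 0 x = p x)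
    (hbd : ∀ t ∈ Icc (0:ℝ) 1, ∀ x ∈ frontier W, H t x ≠ 0)
    (hj : ∀ x ∈ W, 0 ≤ jac p x) (hz : ∀ ε > 0, ∃ z ∈ W, ‖p z‖ < ε ∧ 0 < jac p z) :
    ∃ x ∈ closure W, H 1 x = 0 := by
  by_contra! hne
  have hcl : IsCompact (closure W) := hWb.isCompact_closure
  have hK0 : IsCompact (Icc (0:ℝ) 1 ×ˢ closure W) := isCompact_Icc.prod hcl
  have hfr : IsCompact (frontier W) := hcl.of_isClosed_subset isClosed_frontier frontier_subset_closure
  have hHt : ∀ t ∈ Icc (0:ℝ) 1, ContinuousOn (H t) (closure W) := fun t ht =>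
    hH.comp (f := fun x => (t, x)) (by fun_prop) fun x hx => ⟨ht, hx⟩
  obtain ⟨a, ha, ha'⟩ := (isCompact_Icc.prod hfr).exists_forall_le' (a := 0)
    ((hH.mono (prod_mono subset_rfl frontier_subset_closure)).norm)
    (fun z hz => norm_pos_iff.2 (hbd z.1 hz.1 z.2 hz.2))
  obtain ⟨b, hb, hb'⟩ := hcl.exists_forall_le' (a := 0) (hHt 1 (by simp)).norm
    (fun z hz => norm_pos_iff.2 (hne z hz))
  obtain ⟨δ, hδ, hδa, hδb⟩ : ∃ δ > 0, 4 * δ ≤ a ∧ 4 * δ ≤ b :=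
    ⟨min a b / 4, by positivity, by linarith [min_le_left a b], by linarith [min_le_right a b]⟩
  set K := Set.image Prod.snd ((Icc (0:ℝ) 1 ×ˢ closure W) ∩ (fun z : ℝ × (κ → ℝ) => ‖H z.1 z.2‖) ⁻¹' Iic (3 * δ))
    with hKdef
  have hK : IsCompact K := (hK0.of_isClosed_subset
    (hH.norm.preimage_isClosed_of_isClosed hK0.isClosed isClosed_Iic) inter_subset_left).image
    continuous_snd
  have hKW : K ⊆ W := by
    rintro _ ⟨⟨t, x⟩, ⟨⟨ht, hx⟩, hle⟩, rfl⟩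
    by_contra hxW
    have := ha' (t, x) ⟨ht, by rw [hW.frontier_eq]; exact ⟨hx, hxW⟩⟩
    simp only [mem_preimage, mem_Iic] at hle this
    linarith
  obtain ⟨L, hL, hKL, hLW⟩ := exists_compact_between hK hW hKW
  obtain ⟨χ, hχ1, hχ0, hχI⟩ := exists_contMDiffMap_one_nhds_of_subset_interior
    (n := 2) (modelWithCornersSelf ℝ (κ → ℝ)) hK.isClosed hKL
  have hχs : ContDiff ℝ 2 χ := contMDiff_iff_contDiff.1 χ.contMDiff
  have hχW : ∀ x ∉ W, χ x = 0 := fun x hx => hχ0 x fun h => hx (hLW h)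
  have hχt : tsupport χ ⊆ L :=
    closure_minimal (fun x hx => by_contra fun h => hx (hχ0 x h)) hL.isClosed
  have hχc : HasCompactSupport χ := hL.of_isClosed_subset (isClosed_tsupport χ) hχt
  have hχd : ∀ x, fderiv ℝ χ x ≠ 0 → x ∈ closure W ∧ ∀ t ∈ Icc (0:ℝ) 1, 3 * δ < ‖H t x‖ := by
    intro x hx
    have hxW : x ∈ closure W :=
      subset_closure (hLW (hχt (support_fderiv_subset ℝ hx)))
    refine ⟨hxW, fun t ht => ?_⟩
    by_contra! hle
    have hxK : x ∈ K := ⟨(t, x), ⟨⟨ht, hxW⟩, hle⟩, rfl⟩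
    have : χ =ᶠ[𝓝 x] fun _ => 1 := (hχ1.filter_mono (nhds_le_nhdsSet hxK))
    exact hx (by rw [this.fderiv_eq]; simp)
  let φ : ContDiffBump (0 : κ → ℝ) := ⟨δ / 2, δ, by positivity, by linarith⟩
  have hφ : ContDiff ℝ 2 φ := φ.contDiff
  let J : ((κ → ℝ) → (κ → ℝ)) → ℝ := fun q => ∫ x, χ x * φ (q x) * jac q x
  -- two smooth maps close to the same `H t` have the same integral
  have step : ∀ t ∈ Icc (0:ℝ) 1, ∀ q₁ q₂ : (κ → ℝ) → (κ → ℝ), ContDiff ℝ 2 q₁ → ContDiff ℝ 2 q₂ →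
      (∀ x ∈ closure W, ‖q₁ x - H t x‖ ≤ 2 * δ) → (∀ x ∈ closure W, ‖q₂ x - H t x‖ ≤ 2 * δ) →
      J q₁ = J q₂ := by
    intro t ht q₁ q₂ h₁ h₂ hn₁ hn₂
    refine integral_homotopy φ χ q₁ q₂ hφ hχs h₁ h₂ hχc fun s hs x hx => ?_
    obtain ⟨hxW, hbig⟩ := hχd x hx
    apply φ.zero_of_le_dist
    rw [dist_zero_right]
    change δ ≤ _
    have hconv := convex_closedBall (H t x) (2 * δ)
      (mem_closedBall_iff_norm.2 (hn₁ x hxW)) (mem_closedBall_iff_norm.2 (hn₂ x hxW))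
      (sub_nonneg.2 hs.2) hs.1 (by ring)
    rw [show (1 - s) • q₁ x + s • q₂ x = q₁ x + s • (q₂ x - q₁ x) by module,
      mem_closedBall_iff_norm] at hconv
    have := norm_sub_norm_le (H t x) (q₁ x + s • (q₂ x - q₁ x))
    rw [norm_sub_rev] at hconv
    linarith [hbig t ht]
  have huc := hK0.uniformContinuousOn_of_continuous hH
  obtain ⟨η, hη, hη'⟩ := Metric.uniformContinuousOn_iff.1 huc δ hδ
  obtain ⟨N, hN⟩ := exists_nat_one_div_lt hη
  have hmem : ∀ j : ℕ, j ≤ N + 1 → (j / (N + 1 : ℝ)) ∈ Icc (0:ℝ) 1 := by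
    intro j hj
    refine ⟨by positivity, ?_⟩
    rw [div_le_one (by positivity)]
    exact_mod_cast hj
  have main : ∀ j : ℕ, j ≤ N + 1 → ∀ q : (κ → ℝ) → (κ → ℝ), ContDiff ℝ 2 q →
      (∀ x ∈ closure W, ‖q x - H (j / (N + 1 : ℝ)) x‖ < δ) → J p = J q := by
    intro j
    induction j with
    | zero =>
      intro _ q hq hqn
      refine step 0 (by simp) p q hp hq (fun x hx => ?_) fun x hx => ?_
      · simp [h0 x hx, hδ.le]
      · have := hqn x hx
        simp only [Nat.cast_zero, zero_div] at this
        linarith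
    | succ j ih =>
      intro hjN q hq hqn
      obtain ⟨r, hr, hrn⟩ := exists_contDiff_near isClosed_closure _ (hHt _ (hmem j (by omega))) hδ
      rw [ih (by omega) r hr hrn]
      refine step _ (hmem (j + 1) hjN) r q hr hq (fun x hx => ?_) fun x hx => ?_
      · have h1 := hrn x hx
        have h2 := hη' (_, x) ⟨hmem j (by omega), hx⟩ (_, x) ⟨hmem (j + 1) hjN, hx⟩ (by
          rw [Prod.dist_eq, dist_self, max_eq_left dist_nonneg, Real.dist_eq, ← sub_div]
          push_cast
          rw [show (j : ℝ) - (j + 1) = -1 by ring, abs_div, abs_neg, abs_one, abs_of_pos (by positivity)]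
          exact hN)
        rw [dist_eq_norm] at h2
        have := norm_add_le (r x - H (j / (N + 1 : ℝ)) x)
          (H (j / (N + 1 : ℝ)) x - H ((j + 1 : ℕ) / (N + 1 : ℝ)) x)
        rw [sub_add_sub_cancel] at this
        dsimp only at h2
        linarith
      · linarith [hqn x hx]
  have hzero : J p = 0 := by
    obtain ⟨q, hq, hqn⟩ := exists_contDiff_near isClosed_closure _ (hHt 1 (by simp)) hδ
    rw [main (N + 1) le_rfl q hq (by
      rw [show ((N + 1 : ℕ) : ℝ) / (N + 1 : ℝ) = 1 by
        push_cast; exact div_self (by positivity)]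
      exact hqn)]
    refine integral_eq_zero_of_far φ rfl hχW q fun x hx => ?_
    have hx := subset_closure hx
    have h1 := hqn x hx
    have h2 := hb' x hx
    have h3 := norm_sub_norm_le (H 1 x) (q x)
    rw [norm_sub_rev] at h3
    linarith
  obtain ⟨z, hzW, hzp, hzj⟩ := hz δ hδ
  have hzK : z ∈ K := ⟨(0, z), ⟨⟨by simp, subset_closure hzW⟩, by
    simp only [mem_preimage, mem_Iic, h0 z (subset_closure hzW)]; linarith⟩, rfl⟩
  have hχz : χ z = 1 := (hχ1.filter_mono (nhds_le_nhdsSet hzK)).self_of_nhds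
  have hpos : 0 < J p := by
    refine Continuous.integral_pos_of_hasCompactSupport_nonneg_nonzero (x := z)
      ((hχs.continuous.mul (hφ.continuous.comp hp.continuous)).mul hp.continuous_jac)
      ((hχc.mul_right).mul_right) (fun x => ?_) ?_
    · by_cases hx : x ∈ W
      · exact mul_nonneg (mul_nonneg (hχI x).1 φ.nonneg) (hj x hx)
      · simp [hχW x hx]
    · rw [hχz, one_mul]
      exact (mul_pos (φ.pos_of_mem_ball (by simpa using hzp)) hzj).ne'
  exact hpos.ne' hzero

theorem jac_eq_det {κ : Type*} [Fintype κ] [DecidableEq κ] (f : (κ → ℝ) → (κ → ℝ)) (x : κ → ℝ) :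
    jac f x = (fderiv ℝ f x).det := by
  rw [ContinuousLinearMap.det, ← LinearMap.det_toMatrix', ← Matrix.det_transpose]
  rfl

/-- The coordinate-free form of `degree_pi` on a finite-dimensional normed space. -/
theorem degree_principle {V : Type*} [NormedAddCommGroup V] [NormedSpace ℝ V]
    [FiniteDimensional ℝ V] {W : Set V} (hW : IsOpen W)
    (hWb : Bornology.IsBounded W) (p : V → V) (hp : ContDiff ℝ 2 p)
    (H : ℝ → V → V)
    (hH : ContinuousOn (fun z : ℝ × V => H z.1 z.2) (Icc 0 1 ×ˢ closure W))
    (h0 : ∀ x ∈ closure W, H 0 x = p x)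
    (hbd : ∀ t ∈ Icc (0:ℝ) 1, ∀ x ∈ frontier W, H t x ≠ 0)
    (hj : ∀ x ∈ W, 0 ≤ (fderiv ℝ p x).det)
    (hz : ∀ ε > 0, ∃ z ∈ W, ‖p z‖ < ε ∧ 0 < (fderiv ℝ p z).det) :
    ∃ x ∈ closure W, H 1 x = 0 := by
  let L : V ≃L[ℝ] (Fin (Module.finrank ℝ V) → ℝ) :=
    ContinuousLinearEquiv.ofFinrankEq (by simp)
  have hdet : ∀ x, jac (fun y => L (p (L.symm y))) x = (fderiv ℝ p (L.symm x)).det := by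
    intro x
    rw [jac_eq_det]
    have h1 := (hp.differentiable (by norm_num) (L.symm x)).hasFDerivAt
    have h2 := L.hasFDerivAt.comp x (h1.comp x L.symm.hasFDerivAt)
    rw [show (fun y => L (p (L.symm y))) = L ∘ p ∘ L.symm from rfl, h2.fderiv]
    exact LinearMap.det_conj (fderiv ℝ p (L.symm x)).toLinearMap L.toLinearEquiv
  have hcl : closure (L.symm ⁻¹' W) = L.symm ⁻¹' closure W :=
    (L.symm.toHomeomorph.preimage_closure W).symm
  have hfr : frontier (L.symm ⁻¹' W) = L.symm ⁻¹' frontier W :=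
    (L.symm.toHomeomorph.preimage_frontier W).symm
  obtain ⟨x, hx, hx0⟩ := degree_pi (W := L.symm ⁻¹' W) (hW.preimage L.symm.continuous)
    (by
      rw [← L.image_eq_preimage_symm]
      exact L.lipschitz.isBounded_image hWb)
    (fun y => L (p (L.symm y)))
    (L.contDiff.comp (hp.comp L.symm.contDiff)) (fun t y => L (H t (L.symm y)))
    (by
      refine L.continuous.comp_continuousOn (hH.comp (f := fun z : ℝ × _ => (z.1, L.symm z.2))
        (by fun_prop) ?_)
      rintro ⟨t, y⟩ ⟨ht, hy⟩
      rw [hcl] at hy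
      exact ⟨ht, hy⟩)
    (fun x hx => by rw [hcl] at hx; rw [h0 _ hx])
    (fun t ht x hx => by rw [hfr] at hx; simpa using hbd t ht _ hx)
    (fun x hx => by rw [hdet]; exact hj _ hx)
    (fun ε hε => by
      obtain ⟨C, hC, hCb⟩ := L.toContinuousLinearMap.bound
      obtain ⟨z, hz, hzp, hzd⟩ := hz (ε / C) (by positivity)
      refine ⟨L z, by simpa using hz, ?_, by rw [hdet]; simpa using hzd⟩
      have := hCb (p z)
      simp only [ContinuousLinearEquiv.symm_apply_apply]
      refine this.trans_lt ?_
      rw [lt_div_iff₀ hC] at hzp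
      linarith)
  rw [hcl] at hx
  exact ⟨_, hx, by simpa using hx0⟩

/-! ### The obstruction to motion planners -/

/-- A motion planner on `U` and a cutoff function `τ` supported where `(α, β) ∈ U` deform `β`, by
running the planned path backwards for time `τ`, so that `α` is reached wherever `τ = 1`. -/
theorem exists_deform {X Y : Type*} [TopologicalSpace X] [TopologicalSpace Y] (α β : C(Y, X))
    {U : Set (X × X)} (hU : IsOpen U) (hp : HasMotionPlanner U) (τ : C(Y, ℝ))
    (hτ : tsupport τ ⊆ (fun y => (α y, β y)) ⁻¹' U) :
    ∃ D : C(ℝ × Y, X), (∀ y, D (0, y) = β y) ∧ ∀ y, τ y = 1 → D (1, y) = α y := by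
  classical
  obtain ⟨s, hs⟩ := hp
  let O : Set Y := (fun y => (α y, β y)) ⁻¹' U
  have hO : IsOpen O := hU.preimage (by fun_prop)
  let F : ℝ × Y → X := fun z =>
    if h : z.2 ∈ O then s ⟨(α z.2, β z.2), h⟩ (projIcc 0 1 zero_le_one (1 - z.1 * τ z.2)) else β z.2
  have hoff : ∀ z : ℝ × Y, τ z.2 = 0 → F z = β z.2 := by
    intro z hz
    by_cases h : z.2 ∈ O
    · simp only [F, h, dif_pos, hz, mul_zero, sub_zero, projIcc_right]
      exact (hs _).2
    · simp [F, h]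
  have hF : Continuous F := by
    rw [continuous_iff_continuousAt]
    rintro ⟨t, y⟩
    by_cases hy : y ∈ tsupport τ
    · have hyO : y ∈ O := hτ hy
      have hopen : IsOpen (Prod.snd ⁻¹' O : Set (ℝ × Y)) := hO.preimage continuous_snd
      refine ContinuousOn.continuousAt (s := Prod.snd ⁻¹' O) ?_ (hopen.mem_nhds hyO)
      rw [continuousOn_iff_continuous_domRestrict]
      have : Continuous fun z : (Prod.snd ⁻¹' O : Set (ℝ × Y)) =>
          s ⟨(α z.1.2, β z.1.2), z.2⟩ (projIcc 0 1 zero_le_one (1 - z.1.1 * τ z.1.2)) := by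
        have h1 : Continuous fun z : (Prod.snd ⁻¹' O : Set (ℝ × Y)) =>
          (⟨(α z.1.2, β z.1.2), z.2⟩ : U) := by
            apply Continuous.subtype_mk
            fun_prop
        have h2 : Continuous fun z : (Prod.snd ⁻¹' O : Set (ℝ × Y)) =>
          projIcc (0:ℝ) 1 zero_le_one (1 - z.1.1 * τ z.1.2) :=
            continuous_projIcc.comp (by fun_prop)
        exact (s.continuous.comp h1).eval h2
      convert this using 2 with z
      have hz : z.1.2 ∈ O := z.2
      simp [F, hz]
    · have : F =ᶠ[𝓝 (t, y)] fun z => β z.2 := by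
        have hopen : IsOpen (Prod.snd ⁻¹' (tsupport τ)ᶜ : Set (ℝ × Y)) :=
          (isClosed_tsupport τ).isOpen_compl.preimage continuous_snd
        filter_upwards [hopen.mem_nhds hy] with z hz
        exact hoff z (image_eq_zero_of_notMem_tsupport hz)
      exact (ContinuousAt.congr (by fun_prop) this.symm)
  refine ⟨⟨F, hF⟩, fun y => ?_, fun y hy => ?_⟩
  · by_cases h : y ∈ O
    · simp only [F, ContinuousMap.coe_mk, h, dif_pos, zero_mul, sub_zero, projIcc_right]
      exact (hs _).2
    · simp [F, h]
  · have h : y ∈ O := hτ (subset_tsupport _ (by simp [hy]))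
    simp only [F, ContinuousMap.coe_mk, h, dif_pos, hy, mul_one, sub_self, projIcc_left]
    exact (hs _).1

/-- The product over `ι` of the closed spherical shells `1 ≤ ‖v‖ ≤ 2` in `G`. -/
def annuli (ι G : Type*) [NormedAddCommGroup G] : Set (ι → G) := {u | ∀ m, ‖u m‖ ∈ Icc (1:ℝ) 2}

/-- The product over `ι` of the open spherical shells `1 < ‖v‖ < 2` in `G`. -/
def openAnnuli (ι G : Type*) [NormedAddCommGroup G] : Set (ι → G) :=
  {u | ∀ m, ‖u m‖ ∈ Ioo (1:ℝ) 2}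

section annuli
variable {ι G : Type*} [NormedAddCommGroup G]

theorem isClosed_annuli : IsClosed (annuli ι G) := by
  simp only [annuli, ofPred_forall]
  exact isClosed_iInter fun m => isClosed_Icc.preimage (by fun_prop)

theorem isOpen_openAnnuli [Finite ι] : IsOpen (openAnnuli ι G) := by
  simp only [openAnnuli, ofPred_forall]
  exact isOpen_iInter_of_finite fun m => isOpen_Ioo.preimage (by fun_prop)

theorem closure_openAnnuli_subset : closure (openAnnuli ι G) ⊆ annuli ι G :=
  closure_minimal (fun _ hu m => Ioo_subset_Icc_self (hu m)) isClosed_annuli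

theorem frontier_openAnnuli [Finite ι] {u : ι → G} (hu : u ∈ frontier (openAnnuli ι G)) :
    ∃ m, ‖u m‖ = 1 ∨ ‖u m‖ = 2 := by
  have h1 := closure_openAnnuli_subset (frontier_subset_closure hu)
  by_contra! h
  rw [isOpen_openAnnuli.frontier_eq] at hu
  exact hu.2 fun m => ⟨lt_of_le_of_ne (h1 m).1 (h m).1.symm, lt_of_le_of_ne (h1 m).2 (h m).2⟩

theorem isBounded_openAnnuli [Fintype ι] : Bornology.IsBounded (openAnnuli ι G) := by
  rw [isBounded_iff_forall_norm_le]
  exact ⟨2, fun u hu => (pi_norm_le_iff_of_nonneg (by norm_num)).2 fun m => (hu m).2.le⟩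

end annuli

/-- No cover by open sets with planners is indexed by `ι` if there are families `α`, `β` of
configurations over the product of shells such that the weighted differences of points of `β` and
`α` are joined, without zeros on the boundary, to a map `p` that has nonzero degree in the sense of
`degree_principle`. The weight `w m` selects `α` or `β` on each boundary sphere. -/
theorem planner_obstruction {ι G : Type*} [Fintype ι] [NormedAddCommGroup G] [NormedSpace ℝ G]
    [FiniteDimensional ℝ G] {n : ℕ} (α β : C(annuli ι G, Conf G n)) (i j : ι → Fin n)
    (hij : ∀ m, i m ≠ j m) (w : ι → ℝ → ℝ) (hw : ∀ m, Continuous (w m))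
    (hw1 : ∀ m r, r = 1 ∨ r = 2 → w m r = 0 ∨ w m r = 1)
    (U : ι → Set (Conf G n × Conf G n)) (hUo : ∀ m, IsOpen (U m)) (hUc : ∀ x, ∃ m, x ∈ U m)
    (hUp : ∀ m, HasMotionPlanner (U m)) (p : (ι → G) → (ι → G)) (hp : ContDiff ℝ 2 p)
    (hj : ∀ x ∈ openAnnuli ι G, 0 ≤ (fderiv ℝ p x).det)
    (hz : ∀ ε > 0, ∃ z ∈ openAnnuli ι G, ‖p z‖ < ε ∧ 0 < (fderiv ℝ p z).det)
    (hline : ∀ u : annuli ι G, (∃ m, ‖u.1 m‖ = 1 ∨ ‖u.1 m‖ = 2) → ∀ t ∈ Icc (0:ℝ) 1, ∃ m,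
      (1 - t) • p u m + t • (w m ‖u.1 m‖ • ((β u).1 (i m) - (β u).1 (j m)) +
        (1 - w m ‖u.1 m‖) • ((α u).1 (i m) - (α u).1 (j m))) ≠ 0) : False := by
  classical
  -- a partition of unity in which at every point some function equals one
  obtain ⟨τ, hτ⟩ := BumpCovering.exists_isSubordinate (X := annuli ι G) (s := univ) isClosed_univ
    (fun m => (fun y => (α y, β y)) ⁻¹' U m) (fun m => (hUo m).preimage (by fun_prop))
    (fun y _ => mem_iUnion.2 (hUc _))
  choose D hD0 hD1 using fun m => exists_deform α β (hUo m) (hUp m) (τ m) (hτ m)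
  let g : ι → ℝ × (ι → G) → G := fun m z =>
    if h : z.2 ∈ annuli ι G then (D m (z.1, ⟨z.2, h⟩)).1 (i m) - (D m (z.1, ⟨z.2, h⟩)).1 (j m) else 0
  let f : ι → (ι → G) → G := fun m z =>
    if h : z ∈ annuli ι G then (α ⟨z, h⟩).1 (i m) - (α ⟨z, h⟩).1 (j m) else 0
  have hg : ∀ m, ContinuousOn (g m) (Prod.snd ⁻¹' annuli ι G) := by
    intro m
    rw [continuousOn_iff_continuous_domRestrict]
    have h0 : Continuous fun z : (Prod.snd ⁻¹' annuli ι G : Set (ℝ × (ι → G))) =>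
        (D m (z.1.1, ⟨z.1.2, z.2⟩)).1 := by
      refine continuous_subtype_val.comp ((D m).continuous.comp (.prodMk (by fun_prop) ?_))
      exact Continuous.subtype_mk (by fun_prop) _
    have : Continuous fun z : (Prod.snd ⁻¹' annuli ι G : Set (ℝ × (ι → G))) =>
        (D m (z.1.1, ⟨z.1.2, z.2⟩)).1 (i m) - (D m (z.1.1, ⟨z.1.2, z.2⟩)).1 (j m) :=
      ((continuous_apply (i m)).comp h0).sub ((continuous_apply (j m)).comp h0)
    convert this using 2 with z
    have hz : z.1.2 ∈ annuli ι G := z.2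
    simp [g, hz]
  have hf : ∀ m, ContinuousOn (f m) (annuli ι G) := by
    intro m
    rw [continuousOn_iff_continuous_domRestrict]
    have h0 : Continuous fun z : annuli ι G => (α z).1 := by fun_prop
    have : Continuous fun z : annuli ι G => (α z).1 (i m) - (α z).1 (j m) :=
      ((continuous_apply (i m)).comp h0).sub ((continuous_apply (j m)).comp h0)
    convert this using 2 with z
    simp [f]
  have hg0 : ∀ m t u, u ∈ annuli ι G → g m (t, u) ≠ 0 := by
    intro m t u hu
    simp only [g, hu, dif_pos, ne_eq, sub_eq_zero]
    exact fun h => hij m ((D m (t, ⟨u, hu⟩)).2 h)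
  have hf0 : ∀ m u, u ∈ annuli ι G → f m u ≠ 0 := by
    intro m u hu
    simp only [f, hu, dif_pos, ne_eq, sub_eq_zero]
    exact fun h => hij m ((α ⟨u, hu⟩).2 h)
  let H : ℝ → (ι → G) → (ι → G) := fun t u m =>
    (1 - min (2 * t) 1) • p u m + (min (2 * t) 1) • (w m ‖u m‖ • g m (max (2 * t - 1) 0, u) +
      (1 - w m ‖u m‖) • f m u)
  have hcl := closure_openAnnuli_subset (ι := ι) (G := G)
  have hbd : ∀ t ∈ Icc (0:ℝ) 1, ∀ u ∈ frontier (openAnnuli ι G), H t u ≠ 0 := by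
    intro t ht u hu
    have huA := hcl (frontier_subset_closure hu)
    have hb := frontier_openAnnuli hu
    intro h0
    rcases le_total (2 * t) 1 with h | h
    · obtain ⟨m, hm⟩ := hline ⟨u, huA⟩ hb (2 * t) ⟨by linarith [ht.1], h⟩
      apply hm
      have := congrFun h0 m
      simpa [H, h, g, f, huA, hD0] using this
    · obtain ⟨m, hm⟩ := hb
      have := congrFun h0 m
      simp only [H, min_eq_right h] at this
      rcases hw1 m _ hm with h | h
      · simp [h] at this
        exact hf0 _ _ huA this
      · simp [h] at this
        exact hg0 _ _ _ huA this
  obtain ⟨u, hu, hu0⟩ := degree_principle isOpen_openAnnuli isBounded_openAnnuli p hp H (by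
      rw [continuousOn_pi]
      intro m
      have h1 : ContinuousOn (fun z : ℝ × (ι → G) => g m (max (2 * z.1 - 1) 0, z.2))
          (Icc 0 1 ×ˢ closure (openAnnuli ι G)) :=
        (hg m).comp (f := fun z : ℝ × (ι → G) => (max (2 * z.1 - 1) 0, z.2)) (by fun_prop)
          fun z hz => hcl hz.2
      have h2 : ContinuousOn (fun z : ℝ × (ι → G) => f m z.2)
          (Icc 0 1 ×ˢ closure (openAnnuli ι G)) :=
        (hf m).comp (by fun_prop) fun z hz => hcl hz.2
      have hpc : Continuous fun z : ℝ × (ι → G) => p z.2 m :=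
        (continuous_apply m).comp (hp.continuous.comp continuous_snd)
      have hwc : Continuous fun z : ℝ × (ι → G) => w m ‖z.2 m‖ := (hw m).comp (by fun_prop)
      have hmin : Continuous fun z : ℝ × (ι → G) => min (2 * z.1) 1 := by fun_prop
      exact ((continuous_const.sub hmin).smul hpc).continuousOn.add (hmin.continuousOn.smul
        ((hwc.continuousOn.smul h1).add ((continuous_const.sub hwc).continuousOn.smul h2))))
    (fun u _ => by ext1 m; simp [H]) hbd hj hz
  obtain ⟨m, hm⟩ := τ.eventuallyEq_one' ⟨u, hcl hu⟩ (mem_univ _)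
  have hm := hm.self_of_nhds
  have h1 : g m (1, u) = f m u := by
    simp only [g, f, hcl hu, dif_pos]
    rw [hD1 m _ hm]
  refine hf0 m u (hcl hu) ?_
  have := congrFun hu0 m
  simp only [H] at this
  norm_num at this
  rw [h1, ← add_smul] at this
  simpa using this

/-! ### The lower bound in arbitrary dimension -/

/-- A cover by at most `card ι` sets is padded by empty sets to a cover indexed by `ι`. -/
theorem exists_padded_cover {X ι : Type*} [TopologicalSpace X] [Fintype ι] {k : ℕ}
    (hk : k ≤ Fintype.card ι) (U : Fin k → Set (X × X)) (hUo : ∀ i, IsOpen (U i))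
    (hUc : ⋃ i, U i = univ) (hUp : ∀ i, HasMotionPlanner (U i)) :
    ∃ U' : ι → Set (X × X), (∀ m, IsOpen (U' m)) ∧ (∀ x, ∃ m, x ∈ U' m) ∧
      ∀ m, HasMotionPlanner (U' m) := by
  classical
  obtain ⟨e⟩ : Nonempty (Fin k ↪ ι) := Function.Embedding.nonempty_of_card_le (by simpa using hk)
  have key : ∀ m, (∃ i, e i = m ∧ Function.extend e U (fun _ => ∅) m = U i) ∨
      Function.extend e U (fun _ => ∅) m = ∅ := by
    intro m
    by_cases h : ∃ i, e i = m
    · obtain ⟨i, rfl⟩ := h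
      exact Or.inl ⟨i, rfl, e.injective.extend_apply _ _ _⟩
    · exact Or.inr (Function.extend_apply' _ _ _ h)
  refine ⟨Function.extend e U fun _ => ∅, fun m => ?_, fun x => ?_, fun m => ?_⟩
  · rcases key m with ⟨i, -, h⟩ | h
    · rw [h]; exact hUo i
    · rw [h]; exact isOpen_empty
  · obtain ⟨i, hi⟩ := mem_iUnion.1 (hUc.ge (mem_univ x))
    exact ⟨e i, by rwa [e.injective.extend_apply]⟩
  · rcases key m with ⟨i, -, h⟩ | h
    · rw [h]; exact hUp i
    · rw [h]
      exact ⟨⟨fun x => x.2.elim, continuous_of_const fun x => x.2.elim⟩, fun x => x.2.elim⟩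

theorem norm_pos_of_annuli {ι G : Type*} [NormedAddCommGroup G] (u : annuli ι G)
    (m : ι) : 0 < ‖u.1 m‖ := by
  linarith [(u.2 m).1]

section directions
variable {ι G : Type*} [NormedAddCommGroup G] [NormedSpace ℝ G]

/-- The direction of the `m`-th coordinate. -/
noncomputable def dir (u : annuli ι G) (m : ι) : G := ‖u.1 m‖⁻¹ • u.1 m

theorem norm_dir (u : annuli ι G) (m : ι) : ‖dir u m‖ = 1 := by
  rw [dir, norm_smul, norm_inv, norm_norm, inv_mul_cancel₀ (norm_pos_of_annuli u m).ne']

theorem smul_dir (u : annuli ι G) (m : ι) : ‖u.1 m‖ • dir u m = u.1 m := by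
  rw [dir, smul_inv_smul₀ (norm_pos_of_annuli u m).ne']

theorem continuous_dir (m : ι) : Continuous fun u : annuli ι G => dir u m := by
  have h : Continuous fun u : annuli ι G => u.1 m :=
    (continuous_apply m).comp continuous_subtype_val
  exact (h.norm.inv₀ fun u => (norm_pos_of_annuli u m).ne').smul h

/-- If a nonnegative combination of two unit vectors vanishes, the vectors are opposite. -/
theorem eq_neg_of_combination {a b : ℝ} {x y : G} (hx : ‖x‖ = 1) (hy : ‖y‖ = 1) (ha : 0 ≤ a)
    (hb : 0 ≤ b) (hab : 0 < a + b) (h : a • x + b • y = 0) : a = b ∧ x = -y := by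
  have h1 : a • x = -(b • y) := eq_neg_of_add_eq_zero_left h
  have h2 := congrArg norm h1
  rw [norm_neg, norm_smul, norm_smul, hx, hy, mul_one, mul_one, Real.norm_of_nonneg ha,
    Real.norm_of_nonneg hb] at h2
  subst h2
  refine ⟨rfl, ?_⟩
  rw [← smul_neg] at h1
  exact smul_right_injective G (show a ≠ 0 by linarith) h1

/-- Nonvanishing of the homotopy to the translated identity on the sphere of radius `1`. -/
theorem inner_sphere_ne {x y e : G} (hx : ‖x‖ = 1) (hy : ‖y‖ = 1) (he : ‖e‖ = 1) {ε t : ℝ}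
    (h0 : 0 < ε) (h1 : ε < 1) (ht : t ∈ Icc (0:ℝ) 1) :
    (1 - t) • (y - (3 / 2 : ℝ) • e) + t • (-e + ε • x) ≠ 0 := by
  intro h
  have h2 : (1 - t) • y + (t * ε) • x = ((1 - t) * (3 / 2) + t) • e := by
    rw [← sub_eq_zero, ← h]; module
  have h3 := congrArg norm h2
  have h4 := norm_add_le ((1 - t) • y) ((t * ε) • x)
  have h5 : 0 ≤ 1 - t := by linarith [ht.2]
  have h6 := ht.1
  rw [h3, norm_smul, norm_smul, norm_smul, hx, hy, he, Real.norm_of_nonneg h5,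
    Real.norm_of_nonneg (by positivity), Real.norm_of_nonneg (by positivity)] at h4
  nlinarith

/-- Nonvanishing of the homotopy to the translated identity on the sphere of radius `2`. -/
theorem outer_sphere_ne {y e : G} (hy : ‖y‖ = 1) (he : ‖e‖ = 1) {ε t : ℝ}
    (h0 : 0 < ε) (ht : t ∈ Icc (0:ℝ) 1) :
    (1 - t) • ((2:ℝ) • y - (3 / 2 : ℝ) • e) + t • (ε • y) ≠ 0 := by
  intro h
  have h2 : ((1 - t) * 2 + t * ε) • y = ((1 - t) * (3 / 2)) • e := by
    rw [← sub_eq_zero, ← h]; module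
  have h3 := congrArg norm h2
  have h5 : 0 ≤ 1 - t := by linarith [ht.2]
  have h6 := ht.1
  rw [norm_smul, norm_smul, hy, he, Real.norm_of_nonneg (by positivity),
    Real.norm_of_nonneg (by positivity)] at h3
  rcases h6.eq_or_lt with h | h
  · subst h; norm_num at h3
  · nlinarith [mul_pos h h0]

end directions

/-- `TC (Conf G n) ≥ 2n - 2`, with `n = N + 2`. The index `none` compares the points `1` and `0`,
the index `(i, false)` the points `i + 2` and `0`, and `(i, true)` the points `i + 2` and `1`. -/
theorem lower_bound_general {G : Type*} [NormedAddCommGroup G] [NormedSpace ℝ G]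
    [FiniteDimensional ℝ G] {e : G} (he : ‖e‖ = 1) {N k : ℕ}
    (U : Fin k → Set (Conf G (N + 2) × Conf G (N + 2)))
    (hUo : ∀ i, IsOpen (U i)) (hUc : ⋃ i, U i = univ) (hUp : ∀ i, HasMotionPlanner (U i)) :
    2 * N + 2 ≤ k := by
  by_contra! hk
  let ι := Option (Fin N × Bool)
  obtain ⟨U', hUo', hUc', hUp'⟩ := exists_padded_cover (ι := ι)
    (by simp [ι]; omega) U hUo hUc hUp
  let ε : Fin N → ℝ := fun i => 1 / (i + 2 : ℝ)
  have hε0 : ∀ i, 0 < ε i := fun i => by positivity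
  have hε1 : ∀ i, ε i < 1 := fun i => by
    rw [div_lt_one (by positivity)]; linarith [Nat.cast_nonneg (α := ℝ) (i : ℕ)]
  have hεinj : ∀ (x y : G), ‖x‖ = 1 → ‖y‖ = 1 → ∀ i j, ε i • x = ε j • y → i = j := by
    intro x y hx hy i j h
    have h2 := congrArg norm h
    rw [norm_smul, norm_smul, hx, hy, mul_one, mul_one, Real.norm_of_nonneg (hε0 i).le,
      Real.norm_of_nonneg (hε0 j).le] at h2
    simp only [ε, one_div, inv_inj] at h2
    ext
    exact_mod_cast add_right_cancel h2
  have hεne : ∀ (x y : G), ‖x‖ = 1 → ‖y‖ = 1 → ∀ i, x ≠ ε i • y := by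
    intro x y hx hy i h
    have h2 := congrArg norm h
    rw [norm_smul, hx, hy, mul_one, Real.norm_of_nonneg (hε0 i).le] at h2
    linarith [hε1 i]
  have hne0 : ∀ x : G, ‖x‖ = 1 → x ≠ 0 := fun x hx h => by simp [h] at hx
  let α : C(annuli ι G, Conf G (N + 2)) := ⟨fun u =>
    ⟨Fin.cons 0 (Fin.cons (dir u none) fun i => dir u none + ε i • dir u (some (i, true))), by
      rw [Fin.cons_injective_iff, Fin.cons_injective_iff]
      refine ⟨?_, ?_, ?_⟩
      · rintro ⟨i, hi⟩
        refine Fin.cases (fun hi => ?_) (fun i hi => ?_) i hi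
        · exact hne0 _ (norm_dir u none) hi
        · refine hεne (-dir u none) _ (by rw [norm_neg, norm_dir]) (norm_dir u (some (i, true))) i ?_
          rw [neg_eq_iff_add_eq_zero]
          exact hi
      · rintro ⟨i, hi⟩
        exact (smul_ne_zero (hε0 i).ne' (hne0 _ (norm_dir u (some (i, true))))) (by simpa using hi)
      · intro i j hij
        exact hεinj _ _ (norm_dir u _) (norm_dir u _) i j (add_left_cancel hij)⟩, by
    refine Continuous.subtype_mk (continuous_pi fun i => ?_) _
    refine Fin.cases continuous_const (fun i => ?_) i
    refine Fin.cases (continuous_dir none) (fun i => ?_) i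
    exact (continuous_dir none).add ((continuous_dir _).const_smul (ε i))⟩
  let β : C(annuli ι G, Conf G (N + 2)) := ⟨fun u =>
    ⟨Fin.cons 0 (Fin.cons e fun i => ε i • dir u (some (i, false))), by
      rw [Fin.cons_injective_iff, Fin.cons_injective_iff]
      refine ⟨?_, ?_, ?_⟩
      · rintro ⟨i, hi⟩
        refine Fin.cases (fun hi => ?_) (fun i hi => ?_) i hi
        · exact hne0 _ he hi
        · exact (smul_ne_zero (hε0 i).ne' (hne0 _ (norm_dir u (some (i, false))))) hi
      · rintro ⟨i, hi⟩
        exact hεne _ _ he (norm_dir u (some (i, false))) i hi.symm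
      · intro i j hij
        exact hεinj _ _ (norm_dir u _) (norm_dir u _) i j hij⟩, by
    refine Continuous.subtype_mk (continuous_pi fun i => ?_) _
    refine Fin.cases continuous_const (fun i => ?_) i
    refine Fin.cases continuous_const (fun i => ?_) i
    exact (continuous_dir _).const_smul (ε i)⟩
  let P : ι → Fin (N + 2) := fun m => m.elim 1 fun q => q.1.succ.succ
  let Q : ι → Fin (N + 2) := fun m => m.elim 0 fun q => if q.2 then 1 else 0
  let w : ι → ℝ → ℝ := fun m r => m.elim (2 - r) fun q => if q.2 then 2 - r else r - 1
  let c : ι → G := fun m => m.elim ((3 / 2 : ℝ) • e) fun _ => -((3 / 2 : ℝ) • e)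
  have hcn : ∀ m, ‖c m‖ = 3 / 2 := by
    rintro (_ | q) <;> simp [c, norm_smul, he]
  have hdet : ∀ x, (fderiv ℝ (fun u => u + c) x).det = 1 := by
    intro x
    rw [fderiv_add_const, fderiv_fun_id]
    exact LinearMap.det_id
  refine planner_obstruction α β P Q ?_ w ?_ ?_ U' hUo' hUc' hUp' (fun u => u + c)
    (by fun_prop) (fun x _ => by rw [hdet]; norm_num) (fun δ hδ => ⟨-c, fun m => ?_, by simpa using hδ,
      by rw [hdet]; norm_num⟩) ?_
  · rintro (_ | ⟨i, b⟩)
    · simp [P, Q]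
    · cases b
      · change i.succ.succ ≠ 0
        exact Fin.succ_ne_zero _
      · change i.succ.succ ≠ 1
        exact fun h => Fin.succ_ne_zero i (Fin.succ_injective _ h)
  · rintro (_ | ⟨i, b⟩)
    · simp only [w, Option.elim]; fun_prop
    · cases b <;> simp only [w, Option.elim] <;> norm_num <;> fun_prop
  · rintro (_ | ⟨i, b⟩) r (rfl | rfl)
    · norm_num [w]
    · norm_num [w]
    · cases b <;> norm_num [w]
    · cases b <;> norm_num [w]
  · rw [Pi.neg_apply, norm_neg, hcn]; norm_num
  · intro u ⟨m, hm⟩ t ht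
    by_contra! h
    have hr := u.2 none
    have ht0 := ht.1
    have ht1 : 0 ≤ 1 - t := by linarith [ht.2]
    have hnone := h none
    change (1 - t) • (u.1 none + (3 / 2 : ℝ) • e) + t • ((2 - ‖u.1 none‖) • (e - 0) +
      (1 - (2 - ‖u.1 none‖)) • (dir u none - 0)) = 0 at hnone
    obtain ⟨hab, hx⟩ := eq_neg_of_combination (a := (1 - t) * ‖u.1 none‖ + t * (‖u.1 none‖ - 1))
      (b := (1 - t) * (3 / 2) + t * (2 - ‖u.1 none‖)) (norm_dir u none) he
      (by have := hr.1; have : 0 ≤ ‖u.1 none‖ - 1 := by linarith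
          positivity)
      (by have : 0 ≤ 2 - ‖u.1 none‖ := by linarith [hr.2]
          positivity)
      (by nlinarith [hr.1])
      (by rw [← hnone]; nth_rw 4 [← smul_dir u none]; module)
    have hrn : ‖u.1 none‖ = 3 / 2 := by
      have : (‖u.1 none‖ - 3 / 2) * (1 + t) = 0 := by linear_combination hab
      rcases mul_eq_zero.1 this with h | h <;> linarith
    rcases m with _ | ⟨i, b⟩
    · rw [hrn] at hm; norm_num at hm
    · have hi := h (some (i, b))
      have hu := smul_dir u (some (i, b))
      cases b
      · change (1 - t) • (u.1 (some (i, false)) + -((3 / 2 : ℝ) • e)) +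
          t • ((‖u.1 (some (i, false))‖ - 1) • (ε i • dir u (some (i, false)) - 0) +
          (1 - (‖u.1 (some (i, false))‖ - 1)) •
            (dir u none + ε i • dir u (some (i, true)) - 0)) = 0 at hi
        rcases hm with hm | hm
        · rw [hm, one_smul] at hu
          rw [hm, ← hu, hx] at hi
          refine inner_sphere_ne (norm_dir u (some (i, true))) (norm_dir u (some (i, false))) he
            (hε0 i) (hε1 i) ht ?_
          rw [← hi]; module
        · rw [hm] at hu
          rw [hm, ← hu, hx] at hi
          refine outer_sphere_ne (norm_dir u (some (i, false))) he (hε0 i) ht ?_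
          rw [← hi]; module
      · change (1 - t) • (u.1 (some (i, true)) + -((3 / 2 : ℝ) • e)) +
          t • ((2 - ‖u.1 (some (i, true))‖) • (ε i • dir u (some (i, false)) - e) +
          (1 - (2 - ‖u.1 (some (i, true))‖)) •
            (dir u none + ε i • dir u (some (i, true)) - dir u none)) = 0 at hi
        rcases hm with hm | hm
        · rw [hm, one_smul] at hu
          rw [hm, ← hu] at hi
          refine inner_sphere_ne (norm_dir u (some (i, false))) (norm_dir u (some (i, true))) he
            (hε0 i) (hε1 i) ht ?_
          rw [← hi]; module
        · rw [hm] at hu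
          rw [hm, ← hu] at hi
          refine outer_sphere_ne (norm_dir u (some (i, true))) he (hε0 i) ht ?_
          rw [← hi]; module

/-! ### The lower bound in odd dimension -/

section oddDimension
variable {G : Type*} [NormedAddCommGroup G] [InnerProductSpace ℝ G]

/-- The radial map `v ↦ (‖v‖² - 9/4) v`. -/
noncomputable def radial (v : G) : G := (‖v‖ ^ 2 - 9 / 4) • v

/-- The derivative of `radial` at `v`. -/
noncomputable def radialDeriv (v : G) : G →L[ℝ] G :=
  (‖v‖ ^ 2 - 9 / 4) • ContinuousLinearMap.id ℝ G + ((2 : ℝ) • innerSL ℝ v).smulRight v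

theorem hasFDerivAt_radial (v : G) : HasFDerivAt radial (radialDeriv v) v := by
  have h : HasFDerivAt radial _ v :=
    ((hasStrictFDerivAt_norm_sq v).hasFDerivAt.sub_const (9 / 4 : ℝ)).smul (hasFDerivAt_id v)
  refine h.congr_fderiv ?_
  ext1 x
  simp [radialDeriv]

/-- The determinant is `a ^ (d - 1) * (a + 2 ‖v‖²)` with `a = ‖v‖² - 9/4`, where `d - 1` is even.
The exponent being positive, it vanishes for `a = 0`. -/
theorem det_radialDeriv [FiniteDimensional ℝ G] (hodd : Odd (Module.finrank ℝ G))
    (h2 : 2 ≤ Module.finrank ℝ G) (v : G)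
    (hv : 1 < ‖v‖) : 0 ≤ (radialDeriv v).det ∧ (‖v‖ ≠ 3 / 2 → 0 < (radialDeriv v).det) := by
  obtain ⟨k, hk⟩ := hodd
  by_cases h : ‖v‖ ^ 2 - 9 / 4 = 0
  · refine ⟨le_of_eq ?_, fun hne => absurd ?_ hne⟩
    · by_contra hne
      -- the derivative has rank at most one, so it is not onto
      have hle : Module.finrank ℝ G ≤ 1 := by
        refine finrank_le_one v fun w => ?_
        have := (LinearMap.equivOfDetNeZero (radialDeriv v).toLinearMap (Ne.symm hne)).surjective w
        obtain ⟨x, hx⟩ := this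
        refine ⟨2 * inner ℝ v x, ?_⟩
        rw [← hx]
        simp [LinearMap.equivOfDetNeZero, radialDeriv, h]
      omega
    · nlinarith [norm_nonneg v]
  · set a := ‖v‖ ^ 2 - 9 / 4 with ha
    have hdet : (radialDeriv v).det = a ^ (2 * k) * (a + 2 * ‖v‖ ^ 2) := by
      have h1 : (radialDeriv v).toLinearMap = a • LinearMap.transvection
          ((2 / a) • (innerSL ℝ v).toLinearMap) v := by
        ext x
        simp only [radialDeriv, LinearMap.transvection.apply, LinearMap.smul_apply,
          ContinuousLinearMap.coe_coe, add_apply, smul_apply,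
          ContinuousLinearMap.id_apply, ContinuousLinearMap.smulRight_apply, innerSL_apply_apply,
          smul_eq_mul, smul_add, smul_smul]
        rw [← ha]
        congr 2
        field_simp
      rw [ContinuousLinearMap.det, h1, LinearMap.det_smul, LinearMap.transvection.det, hk]
      simp only [LinearMap.smul_apply, ContinuousLinearMap.coe_coe, innerSL_apply_apply, smul_eq_mul,
        real_inner_self_eq_norm_sq]
      field_simp
      ring
    have : 0 < (radialDeriv v).det := by
      rw [hdet, pow_mul]
      have : 0 < a + 2 * ‖v‖ ^ 2 := by rw [ha]; nlinarith
      positivity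
    exact ⟨this.le, fun _ => this⟩

/-- The linear map adding `a` times the second vector of each pair to the first. -/
noncomputable def shear (N : ℕ) (a : ℝ) : (Fin N × Bool → G) →L[ℝ] (Fin N × Bool → G) :=
  ContinuousLinearMap.pi fun m =>
    ContinuousLinearMap.proj m + (if m.2 then (0:ℝ) else a) • ContinuousLinearMap.proj (m.1, true)

theorem shear_apply (N : ℕ) (a : ℝ) (u : Fin N × Bool → G) (m : Fin N × Bool) :
    shear N a u m = u m + (if m.2 then (0:ℝ) else a) • u (m.1, true) := rfl

theorem shear_mul (N : ℕ) (a b : ℝ) :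
    (shear (G := G) N a).toLinearMap * (shear N b).toLinearMap =
      (shear N (a + b)).toLinearMap := by
  refine LinearMap.ext fun u => funext fun ⟨i, b'⟩ => ?_
  cases b' <;> simp [shear_apply, Module.End.mul_apply]
  module

/-- The shear is the square of another shear, and it is invertible. -/
theorem det_shear_pos (N : ℕ) : 0 < (shear (G := G) N 1).det := by
  have h1 : LinearMap.det (shear (G := G) N 1).toLinearMap =
      LinearMap.det (shear (G := G) N (1 / 2)).toLinearMap ^ 2 := by
    rw [pow_two, ← map_mul, shear_mul]; norm_num
  have h2 : LinearMap.det (shear (G := G) N 1).toLinearMap *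
      LinearMap.det (shear (G := G) N (-1)).toLinearMap = 1 := by
    rw [← map_mul, shear_mul, add_neg_cancel]
    have : (shear (G := G) N 0).toLinearMap = 1 := by
      refine LinearMap.ext fun u => funext fun m => ?_
      simp [shear_apply]
    rw [this, map_one]
  refine lt_of_le_of_ne ?_ ?_
  · rw [ContinuousLinearMap.det, h1]; positivity
  · intro h
    rw [ContinuousLinearMap.det] at h
    rw [← h, zero_mul] at h2
    exact zero_ne_one h2

/-- The model map `(u, v) ↦ (u + v, (‖v‖² - 9/4) v)` on each pair of coordinates. -/
noncomputable def oddBase (N : ℕ) (u : Fin N × Bool → G) : Fin N × Bool → G := fun m =>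
  if m.2 then radial (shear N 1 u m) else shear N 1 u m

theorem contDiff_oddBase (N : ℕ) : ContDiff ℝ 2 (oddBase (G := G) N) := by
  rw [contDiff_pi]
  rintro ⟨i, b⟩
  have h : ContDiff ℝ 2 fun u : Fin N × Bool → G => shear N 1 u (i, b) :=
    (contDiff_apply ℝ G (i, b)).comp (shear (G := G) N 1).contDiff
  cases b
  · exact h
  · exact (h.norm_sq ℝ |>.sub contDiff_const).smul h

theorem det_fderiv_oddBase [FiniteDimensional ℝ G] (N : ℕ) (u : Fin N × Bool → G) :
    (fderiv ℝ (oddBase N) u).det =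
      (∏ m : Fin N × Bool, if m.2 then (radialDeriv (u m)).det else 1) *
        (shear (G := G) N 1).det := by
  let D : Fin N × Bool → (G →L[ℝ] G) := fun m =>
    if m.2 then radialDeriv (u m) else ContinuousLinearMap.id ℝ G
  have h : HasFDerivAt (oddBase N)
      ((ContinuousLinearMap.pi fun m => (D m) ∘SL ContinuousLinearMap.proj m) ∘SL shear N 1) u := by
    rw [hasFDerivAt_pi']
    rintro ⟨i, b⟩
    have h0 : HasFDerivAt (fun u : Fin N × Bool → G => shear N 1 u (i, b))
        (ContinuousLinearMap.proj (i, b) ∘SL shear N 1) u :=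
      (hasFDerivAt_apply (𝕜 := ℝ) (i, b) (shear N 1 u)).comp u (shear (G := G) N 1).hasFDerivAt
    cases b
    · exact h0
    · have h1 : shear N 1 u (i, true) = u (i, true) := by simp [shear_apply]
      have h2 := hasFDerivAt_radial (shear N 1 u (i, true))
      have h3 := h2.comp u h0
      rw [h1] at h3
      exact h3
  rw [h.fderiv]
  refine (LinearMap.det_comp _ _).trans ?_
  congr 1
  refine (ContinuousLinearMap.det_pi D).trans (Finset.prod_congr rfl fun m _ => ?_)
  cases h : m.2
  · simp only [D, h]
    exact LinearMap.det_id
  · simp [D, h]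

/-- `TC (Conf G n) ≥ 2n - 1` in odd dimension at least `3`, with `n = N + 1`. The indices `(i,
false)` and `(i, true)` carry the directions of the point `i + 1` in `α` and `β`; both compare the
points `i + 1` and `0`, with opposite weights. -/
theorem lower_bound_odd [FiniteDimensional ℝ G] (hodd : Odd (Module.finrank ℝ G))
    (h2 : 2 ≤ Module.finrank ℝ G)
    {e : G} (he : ‖e‖ = 1) {N k : ℕ}
    (U : Fin k → Set (Conf G (N + 1) × Conf G (N + 1)))
    (hUo : ∀ i, IsOpen (U i)) (hUc : ⋃ i, U i = univ) (hUp : ∀ i, HasMotionPlanner (U i)) :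
    2 * N + 1 ≤ k := by
  by_contra! hk
  let ι := Fin N × Bool
  obtain ⟨U', hUo', hUc', hUp'⟩ := exists_padded_cover (ι := ι)
    (by simp [ι]; omega) U hUo hUc hUp
  let c : Fin N → ℝ := fun i => i + 1
  have hc0 : ∀ i, 0 < c i := fun i => by positivity
  have hcinj : ∀ (x y : G), ‖x‖ = 1 → ‖y‖ = 1 → ∀ i j, c i • x = c j • y → i = j := by
    intro x y hx hy i j h
    have h2 := congrArg norm h
    rw [norm_smul, norm_smul, hx, hy, mul_one, mul_one, Real.norm_of_nonneg (hc0 i).le,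
      Real.norm_of_nonneg (hc0 j).le] at h2
    ext
    exact_mod_cast add_right_cancel h2
  have hne0 : ∀ x : G, ‖x‖ = 1 → x ≠ 0 := fun x hx h => by simp [h] at hx
  have hconf : ∀ b : Bool, ∃ α : C(annuli ι G, Conf G (N + 1)), ∀ u, (α u).1 0 = 0 ∧
      ∀ i, (α u).1 (Fin.succ i) = c i • dir u (i, b) := by
    intro b
    refine ⟨⟨fun u => ⟨Fin.cons 0 fun i => c i • dir u (i, b), ?_⟩, ?_⟩, fun u => ⟨rfl, fun i => rfl⟩⟩
    · rw [Fin.cons_injective_iff]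
      refine ⟨?_, ?_⟩
      · rintro ⟨i, hi⟩
        exact smul_ne_zero (hc0 i).ne' (hne0 _ (norm_dir u (i, b))) hi
      · intro i j hij
        exact hcinj _ _ (norm_dir u _) (norm_dir u _) i j hij
    · refine Continuous.subtype_mk (continuous_pi fun i => ?_) _
      refine Fin.cases continuous_const (fun i => ?_) i
      exact (continuous_dir _).const_smul (c i)
  obtain ⟨α, hα⟩ := hconf false
  obtain ⟨β, hβ⟩ := hconf true
  have hdet : ∀ u ∈ openAnnuli ι G, 0 ≤ (fderiv ℝ (oddBase N) u).det := by
    intro u hu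
    rw [det_fderiv_oddBase]
    refine mul_nonneg (Finset.prod_nonneg fun m _ => ?_) (det_shear_pos N).le
    split_ifs
    · exact (det_radialDeriv hodd h2 _ (hu m).1).1
    · exact zero_le_one
  refine planner_obstruction α β (fun m => m.1.succ) (fun _ => 0) (fun m => Fin.succ_ne_zero _)
    (fun m r => if m.2 then r - 1 else 2 - r) ?_ ?_ U' hUo' hUc' hUp' (oddBase N)
    (contDiff_oddBase N) hdet ?_ ?_
  · rintro ⟨i, b⟩
    cases b <;> norm_num <;> fun_prop
  · rintro ⟨i, b⟩ r (rfl | rfl) <;> cases b <;> norm_num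
  · intro δ hδ
    obtain ⟨η, hη, hη1, hη2⟩ : ∃ η > 0, η ≤ (1 / 4 : ℝ) ∧ η ≤ δ / 100 :=
      ⟨min (1 / 4) (δ / 100), by positivity, min_le_left _ _, min_le_right _ _⟩
    let z : ι → G := fun m => if m.2 then (3 / 2 + η) • e else -((3 / 2 + η) • e)
    have hzn : ∀ m, ‖z m‖ = 3 / 2 + η := by
      rintro ⟨i, b⟩
      have : |3 / 2 + η| = 3 / 2 + η := abs_of_pos (by positivity)
      cases b <;> simp [z, norm_smul, he, this]
    have hz : z ∈ openAnnuli ι G := fun m => by rw [hzn]; constructor <;> linarith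
    refine ⟨z, hz, ?_, ?_⟩
    · rw [pi_norm_lt_iff hδ]
      rintro ⟨i, b⟩
      cases b
      · simp [oddBase, shear_apply, z, hδ]
      · have h1 : shear N 1 z (i, true) = z (i, true) := by simp [shear_apply]
        simp only [oddBase, h1, if_true, radial, norm_smul, hzn]
        rw [Real.norm_of_nonneg (by nlinarith)]
        have h2 : (η + 3) * (3 / 2 + η) ≤ 6 := by nlinarith
        have h3 := mul_le_mul_of_nonneg_left h2 hη.le
        nlinarith
    · rw [det_fderiv_oddBase]
      refine mul_pos (Finset.prod_pos fun m _ => ?_) (det_shear_pos N)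
      split_ifs
      · exact (det_radialDeriv hodd h2 _ (hz m).1).2 (by rw [hzn]; linarith)
      · exact zero_lt_one
  · intro u ⟨⟨i, b⟩, hm⟩ t ht
    by_contra! h
    have ht0 := ht.1
    have ht1 : 0 ≤ 1 - t := by linarith [ht.2]
    have hA := h (i, false)
    have hB := h (i, true)
    simp only [oddBase, shear_apply, hα, hβ, radial, if_true, Bool.false_eq_true, if_false,
      zero_smul, add_zero, sub_zero, one_smul] at hA hB
    set r := ‖u.1 (i, false)‖ with hr
    set s := ‖u.1 (i, true)‖ with hs
    have hrI := u.2 (i, false)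
    have hsI := u.2 (i, true)
    rw [← hr] at hrI
    rw [← hs] at hsI
    have hx := smul_dir u (i, false)
    have hy := smul_dir u (i, true)
    rw [← hr] at hx
    rw [← hs] at hy
    rw [← hx, ← hy] at hA
    rw [← hy] at hB
    have hc := hc0 i
    have hr1 : 0 ≤ r - 1 := by linarith [hrI.1]
    have hr2 : 0 ≤ 2 - r := by linarith [hrI.2]
    have hr0 : 0 ≤ r := norm_nonneg _
    have hs0 : 0 ≤ s := norm_nonneg _
    obtain ⟨hab, hxy⟩ := eq_neg_of_combination (a := (1 - t) * r + t * (c i * (r - 1)))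
      (b := (1 - t) * s + t * (c i * (2 - r))) (norm_dir u (i, false)) (norm_dir u (i, true))
      (by positivity) (by positivity)
      (by
        have h1 : 0 ≤ (1 - t) * (r - 1) := by positivity
        have h2 : 0 ≤ (1 - t) * (s - 1) := mul_nonneg ht1 (by linarith [hsI.1])
        rcases ht0.eq_or_lt with h | h
        · rw [← h]; linarith [hrI.1, hsI.1]
        · nlinarith [mul_pos h hc])
      (by rw [← hA]; module)
    have hs32 : s = 3 / 2 := by
      rw [hxy] at hB
      have : ((1 - t) * ((s ^ 2 - 9 / 4) * s) + t * (c i * (2 * s - 3))) • dir u (i, true) = 0 := by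
        rw [← hB]; module
      have := (smul_eq_zero.1 this).resolve_right (hne0 _ (norm_dir u _))
      have h3 : (s - 3 / 2) * ((1 - t) * ((s + 3 / 2) * s) + 2 * t * c i) = 0 := by
        linear_combination this
      rcases mul_eq_zero.1 h3 with h | h
      · linarith
      · exfalso
        have h4 : (1:ℝ) ≤ (s + 3 / 2) * s := by nlinarith [hsI.1]
        have h5 : (1 - t) * 1 ≤ (1 - t) * ((s + 3 / 2) * s) := mul_le_mul_of_nonneg_left h4 ht1
        rcases ht0.eq_or_lt with h' | h'
        · rw [← h'] at h h5; linarith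
        · nlinarith [mul_pos h' hc]
    have hr32 : r = 3 / 2 := by
      rw [hs32] at hab
      have h3 : (r - 3 / 2) * ((1 - t) + 2 * t * c i) = 0 := by linear_combination hab
      rcases mul_eq_zero.1 h3 with h | h
      · linarith
      · exfalso
        rcases ht0.eq_or_lt with h' | h'
        · rw [← h'] at h; linarith
        · nlinarith [mul_pos h' hc]
    cases b
    · rw [← hr, hr32] at hm; norm_num at hm
    · rw [← hs, hs32] at hm; norm_num at hm

end oddDimension

/-! ### Covers by ranks and homotopies of families of configurations -/

/-- A homotopy between the two projections restricted to `U` is a motion planner on `U`. -/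
theorem hasMotionPlanner_of_homotopic {X : Type*} [TopologicalSpace X] {U : Set (X × X)}
    (f g : C(U, X)) (hf : ∀ q, f q = q.1.1) (hg : ∀ q, g q = q.1.2) (h : f.Homotopic g) :
    HasMotionPlanner U := by
  obtain ⟨H⟩ := h
  refine ⟨(H.toContinuousMap.comp ContinuousMap.prodSwap).curry, fun q => ⟨?_, ?_⟩⟩
  · exact (H.apply_zero q).trans (hf q)
  · exact (H.apply_one q).trans (hg q)

theorem HasMotionPlanner.mono {X : Type*} [TopologicalSpace X] {U V : Set (X × X)}
    (h : HasMotionPlanner U) (hVU : V ⊆ U) : HasMotionPlanner V := by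
  obtain ⟨s, hs⟩ := h
  exact ⟨s.comp ⟨inclusion hVU, continuous_inclusion hVU⟩, fun q => hs (inclusion hVU q)⟩

/-- Motion planners on pairwise disjoint open sets combine into one on their union. -/
theorem HasMotionPlanner.iUnion {X P : Type*} [TopologicalSpace X] {V : P → Set (X × X)}
    (hVo : ∀ c, IsOpen (V c)) (hVd : ∀ c c' x, x ∈ V c → x ∈ V c' → c = c')
    (hV : ∀ c, HasMotionPlanner (V c)) : HasMotionPlanner (⋃ c, V c) := by
  choose s hs using hV
  let S : P → Set (⋃ c, V c : Set (X × X)) := fun c => Subtype.val ⁻¹' V c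
  let φ : ∀ c, C(S c, C(unitInterval, X)) := fun c =>
    (s c).comp ⟨fun x => ⟨x.1.1, x.2⟩, by fun_prop⟩
  have hφ : ∀ c c' x (hx : x ∈ S c) (hx' : x ∈ S c'), φ c ⟨x, hx⟩ = φ c' ⟨x, hx'⟩ := by
    intro c c' x hx hx'
    obtain rfl := hVd c c' x.1 hx hx'
    rfl
  have hS : ∀ x, ∃ c, S c ∈ 𝓝 x := by
    intro x
    obtain ⟨c, hc⟩ := mem_iUnion.1 x.2
    exact ⟨c, ((hVo c).preimage continuous_subtype_val).mem_nhds hc⟩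
  refine ⟨ContinuousMap.liftCover S φ hφ hS, fun q => ?_⟩
  obtain ⟨c, hc⟩ := mem_iUnion.1 q.2
  have : ContinuousMap.liftCover S φ hφ hS q = φ c ⟨q, hc⟩ :=
    ContinuousMap.liftCover_coe (S := S) (φ := φ) (hφ := hφ) (hS := hS) (⟨q, hc⟩ : S c)
  rw [this]
  exact hs c ⟨q.1, hc⟩

/-- Suppose each pair has a pattern, each pattern a rank among `N` consecutive integers, nearby
pairs of equal rank have equal pattern, and each pattern has an open neighbourhood with a planner.
Then the pattern sets of a given rank have disjoint open neighbourhoods, so `N` open sets with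
planners cover. -/
theorem exists_cover_of_rank {X P : Type*} [MetricSpace X] (pat : X × X → P) (rk : P → ℕ)
    (lo N : ℕ) (hrk : ∀ z, lo ≤ rk (pat z) ∧ rk (pat z) < lo + N)
    (hloc : ∀ z, ∀ᶠ z' in 𝓝 z, rk (pat z') = rk (pat z) → pat z' = pat z)
    (hO : ∀ c, ∃ O : Set (X × X), IsOpen O ∧ (∀ z, pat z = c → z ∈ O) ∧ HasMotionPlanner O) :
    ∃ U : Fin N → Set (X × X), (∀ i, IsOpen (U i)) ∧ (⋃ i, U i) = univ ∧
      ∀ i, HasMotionPlanner (U i) := by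
  choose O hOo hOp hOm using hO
  choose r hr hr' using fun z => Metric.eventually_nhds_iff.1 (hloc z)
  let V : P → Set (X × X) := fun c => O c ∩ ⋃ z : {z // pat z = c}, Metric.ball z.1 (r z.1 / 2)
  have hVo : ∀ c, IsOpen (V c) := fun c =>
    (hOo c).inter (isOpen_iUnion fun z => Metric.isOpen_ball)
  have hVd : ∀ c c' x, rk c = rk c' → x ∈ V c → x ∈ V c' → c = c' := by
    rintro c c' x hcc ⟨-, hx⟩ ⟨-, hx'⟩
    obtain ⟨⟨z, rfl⟩, hz⟩ := mem_iUnion.1 hx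
    obtain ⟨⟨z', rfl⟩, hz'⟩ := mem_iUnion.1 hx'
    simp only [Metric.mem_ball] at hz hz'
    have h3 := dist_triangle_left z z' x
    rcases le_total (r z) (r z') with h | h
    · exact hr' z' (y := z) (by linarith) hcc
    · exact (hr' z (y := z') (by rw [dist_comm]; linarith) hcc.symm).symm
  refine ⟨fun i => ⋃ c : {c // rk c = lo + i}, V c.1, fun i => isOpen_iUnion fun c => hVo c.1, ?_,
    fun i => ?_⟩
  · refine eq_univ_of_forall fun z => mem_iUnion.2 ?_
    obtain ⟨h1, h2⟩ := hrk z
    refine ⟨⟨rk (pat z) - lo, by omega⟩, mem_iUnion.2 ⟨⟨pat z, by simp; omega⟩, hOp _ z rfl, ?_⟩⟩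
    exact mem_iUnion.2 ⟨⟨z, rfl⟩, Metric.mem_ball_self (half_pos (hr z))⟩
  · refine HasMotionPlanner.iUnion (fun c => hVo c.1) (fun c c' x hx hx' => ?_) fun c =>
      (hOm c.1).mono inter_subset_left
    exact Subtype.ext (hVd c.1 c'.1 x (c.2.trans c'.2.symm) hx hx')

section homotopies
variable {T G : Type*} [TopologicalSpace T] [NormedAddCommGroup G] {n : ℕ}

/-- The straight-line homotopy between families of configurations, when it creates no collisions. -/
theorem homotopic_of_segment [NormedSpace ℝ G] (f g : C(T, Conf G n))
    (h : ∀ q, ∀ k l, k ≠ l → ∀ t ∈ Icc (0:ℝ) 1,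
      (1 - t) • ((f q).1 k - (f q).1 l) + t • ((g q).1 k - (g q).1 l) ≠ 0) : f.Homotopic g := by
  have hf : Continuous fun q => (f q).1 := continuous_subtype_val.comp f.continuous
  have hg : Continuous fun q => (g q).1 := continuous_subtype_val.comp g.continuous
  refine ⟨⟨⟨fun z => ⟨fun k => (1 - (z.1 : ℝ)) • (f z.2).1 k + (z.1 : ℝ) • (g z.2).1 k, ?_⟩, ?_⟩,
    fun q => ?_, fun q => ?_⟩⟩
  · intro k l hkl
    by_contra hne
    refine h z.2 k l hne z.1 z.1.2 ?_
    rw [← sub_eq_zero] at hkl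
    rw [← hkl]
    module
  · refine Continuous.subtype_mk (continuous_pi fun k => ?_) _
    have h1 : Continuous fun z : unitInterval × T => (f z.2).1 k :=
      (continuous_apply k).comp (hf.comp continuous_snd)
    have h2 : Continuous fun z : unitInterval × T => (g z.2).1 k :=
      (continuous_apply k).comp (hg.comp continuous_snd)
    have h3 : Continuous fun z : unitInterval × T => (z.1 : ℝ) :=
      continuous_subtype_val.comp continuous_fst
    exact ((continuous_const.sub h3).smul h1).add (h3.smul h2)
  · ext k; simp
  · ext k; simp

/-- The straight-line homotopy creates no collision when, for each pair of points, some linear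
functional is positive on both differences. -/
theorem homotopic_of_inner [InnerProductSpace ℝ G] (f g : C(T, Conf G n))
    (h : ∀ q, ∀ k l, k ≠ l → ∃ v : G, 0 < inner ℝ v ((f q).1 k - (f q).1 l) ∧
      0 < inner ℝ v ((g q).1 k - (g q).1 l)) : f.Homotopic g := by
  refine homotopic_of_segment f g fun q k l hkl t ht h0 => ?_
  obtain ⟨v, hv1, hv2⟩ := h q k l hkl
  have := congrArg (inner ℝ v) h0
  rw [inner_add_right, inner_smul_right, inner_smul_right, inner_zero_right] at this
  have ht1 : 0 ≤ 1 - t := by linarith [ht.2]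
  rcases ht.1.eq_or_lt with h | h
  · rw [← h] at this; linarith
  · nlinarith [mul_pos h hv2, mul_nonneg ht1 hv1.le]

/-- The points `a k` on the oriented line spanned by a nonvanishing vector. -/
noncomputable def lineConf [NormedSpace ℝ G] (e : C(T, G)) (he : ∀ q, e q ≠ 0) (a : Fin n → ℝ)
    (ha : Function.Injective a) : C(T, Conf G n) :=
  ⟨fun q => ⟨fun k => a k • e q, fun _ _ h => ha (smul_left_injective ℝ (he q) h)⟩, by
    refine Continuous.subtype_mk (continuous_pi fun k => ?_) _
    fun_prop⟩

theorem lineConf_apply [NormedSpace ℝ G] (e : C(T, G)) (he : ∀ q, e q ≠ 0) (a : Fin n → ℝ)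
    (ha : Function.Injective a) (q : T) (k : Fin n) : (lineConf e he a ha q).1 k = a k • e q := rfl

/-- Configurations on orthogonal lines are homotopic, in any two orders. -/
theorem homotopic_lineConf_of_orthogonal [InnerProductSpace ℝ G] (e e' : C(T, G))
    (he : ∀ q, e q ≠ 0) (he' : ∀ q, e' q ≠ 0) (h : ∀ q, inner ℝ (e q) (e' q) = 0)
    (a b : Fin n → ℝ) (ha : Function.Injective a) (hb : Function.Injective b) :
    (lineConf e he a ha).Homotopic (lineConf e' he' b hb) := by
  refine homotopic_of_inner _ _ fun q k l hkl => ?_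
  refine ⟨(a k - a l) • e q + (b k - b l) • e' q, ?_, ?_⟩
  · have h1 : 0 < (a k - a l) ^ 2 := by have := sub_ne_zero.2 (ha.ne hkl); positivity
    have h2 : 0 < inner ℝ (e q) (e q) := real_inner_self_pos.2 (he q)
    have h3 : inner ℝ (e' q) (e q) = 0 := by rw [real_inner_comm, h q]
    rw [lineConf_apply, lineConf_apply, ← sub_smul, inner_smul_right, inner_add_left,
      inner_smul_left, inner_smul_left, h3]
    simp only [conj_trivial]
    nlinarith [mul_pos h1 h2]
  · have h1 : 0 < (b k - b l) ^ 2 := by have := sub_ne_zero.2 (hb.ne hkl); positivity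
    have h2 : 0 < inner ℝ (e' q) (e' q) := real_inner_self_pos.2 (he' q)
    rw [lineConf_apply, lineConf_apply, ← sub_smul, inner_smul_right, inner_add_left,
      inner_smul_left, inner_smul_left, h q]
    simp only [conj_trivial]
    nlinarith [mul_pos h1 h2]

/-- Lines with nowhere antipodal directions are rotated into each other. -/
theorem homotopic_lineConf_of_ne_neg [InnerProductSpace ℝ G] (e e' : C(T, G))
    (he : ∀ q, ‖e q‖ = 1) (he' : ∀ q, ‖e' q‖ = 1) (h : ∀ q, e q ≠ - e' q)
    (he0 : ∀ q, e q ≠ 0) (he0' : ∀ q, e' q ≠ 0)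
    (a : Fin n → ℝ) (ha : Function.Injective a) :
    (lineConf e he0 a ha).Homotopic (lineConf e' he0' a ha) := by
  refine homotopic_of_segment _ _ fun q k l hkl t ht h0 => ?_
  have h1 : (a k - a l) • ((1 - t) • e q + t • e' q) = 0 := by
    rw [← h0, lineConf_apply, lineConf_apply, lineConf_apply, lineConf_apply]; module
  have h2 := (smul_eq_zero.1 h1).resolve_left (sub_ne_zero.2 (ha.ne hkl))
  exact h q (eq_neg_of_combination (he q) (he' q) (by linarith [ht.2]) ht.1 (by linarith) h2).2

/-- The component of `x` orthogonal to a unit vector `e`. -/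
noncomputable def perp [InnerProductSpace ℝ G] (e x : G) : G := x - inner ℝ e x • e

/-- If points of `f` with different `c` have heights along `e` in the order given by `c`, and points
with equal `c` differ orthogonally to `e`, then `f` is homotopic to a fixed configuration on the
line along `e`: first change the heights to `a`, then shrink the orthogonal components. -/
theorem homotopic_collapse [InnerProductSpace ℝ G] (f : C(T, Conf G n)) (e : C(T, G))
    (he : ∀ q, ‖e q‖ = 1) (he0 : ∀ q, e q ≠ 0) (c : Fin n → ℕ)
    (hc : ∀ q k l, c k < c l → inner ℝ (e q) ((f q).1 k) < inner ℝ (e q) ((f q).1 l))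
    (hc' : ∀ q k l, c k = c l → k ≠ l → perp (e q) ((f q).1 k) ≠ perp (e q) ((f q).1 l))
    (a : Fin n → ℝ) (ha : Function.Injective a) (hca : ∀ k l, c k < c l → a k < a l) :
    f.Homotopic (lineConf e he0 a ha) := by
  have hee : ∀ q, inner ℝ (e q) (e q) = (1:ℝ) := fun q => by
    rw [real_inner_self_eq_norm_sq, he]; norm_num
  have hperp : ∀ q x, inner ℝ (e q) (perp (e q) x) = (0:ℝ) := fun q x => by
    rw [perp, inner_sub_right, inner_smul_right, hee]; ring
  -- the intermediate configuration keeps the components orthogonal to `e`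
  have hm : ∀ q k l, perp (e q) ((f q).1 k) + a k • e q = perp (e q) ((f q).1 l) + a l • e q →
      k = l := by
    intro q k l h
    have := congrArg (inner ℝ (e q)) h
    rw [inner_add_right, inner_add_right, hperp, hperp, inner_smul_right, inner_smul_right, hee]
      at this
    exact ha (by linarith)
  have hf : ∀ k, Continuous fun q => (f q).1 k := fun k =>
    (continuous_apply k).comp (continuous_subtype_val.comp f.continuous)
  let m : C(T, Conf G n) := ⟨fun q => ⟨fun k => perp (e q) ((f q).1 k) + a k • e q,
    fun k l h => hm q k l h⟩, by
      refine Continuous.subtype_mk (continuous_pi fun k => ?_) _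
      have := hf k
      unfold perp
      fun_prop⟩
  have hmk : ∀ q k, (m q).1 k = perp (e q) ((f q).1 k) + a k • e q := fun q k => rfl
  have hminner : ∀ q k l, inner ℝ (e q) ((m q).1 k - (m q).1 l) = a k - a l := by
    intro q k l
    rw [hmk, hmk, inner_sub_right, inner_add_right, inner_add_right, hperp, hperp,
      inner_smul_right, inner_smul_right, hee]
    ring
  refine ContinuousMap.Homotopic.trans (g := m) (homotopic_of_inner _ _ fun q k l hkl => ?_)
    (homotopic_of_inner _ _ fun q k l hkl => ?_)
  · rcases lt_trichotomy (c k) (c l) with h | h | h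
    · refine ⟨-e q, ?_, ?_⟩
      · rw [inner_neg_left, inner_sub_right]; linarith [hc q k l h]
      · rw [inner_neg_left, hminner]; linarith [hca k l h]
    · have hne := sub_ne_zero.2 (hc' q k l h hkl)
      have hpos := real_inner_self_pos.2 hne
      set v := perp (e q) ((f q).1 k) - perp (e q) ((f q).1 l) with hv
      have hve : inner ℝ v (e q) = (0:ℝ) := by
        rw [real_inner_comm, hv, inner_sub_right, hperp, hperp, sub_zero]
      refine ⟨v, ?_, ?_⟩
      · have : (f q).1 k - (f q).1 l = v + (inner ℝ (e q) ((f q).1 k) -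
            inner ℝ (e q) ((f q).1 l)) • e q := by
          rw [hv, perp, perp]; module
        rw [this, inner_add_right, inner_smul_right, hve]
        linarith
      · have : (m q).1 k - (m q).1 l = v + (a k - a l) • e q := by
          rw [hmk, hmk, hv]; module
        rw [this, inner_add_right, inner_smul_right, hve]
        linarith
    · refine ⟨e q, ?_, ?_⟩
      · rw [inner_sub_right]; linarith [hc q l k h]
      · rw [hminner]; linarith [hca l k h]
  · have hpos : 0 < (a k - a l) ^ 2 := by have := sub_ne_zero.2 (ha.ne hkl); positivity
    refine ⟨(a k - a l) • e q, ?_, ?_⟩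
    · rw [inner_smul_left, hminner, conj_trivial]; nlinarith
    · rw [inner_smul_left, lineConf_apply, lineConf_apply, ← sub_smul, inner_smul_right, hee,
        conj_trivial]
      nlinarith

end homotopies

/-! ### The upper bounds -/

/-- The number of entries of `p` strictly below the `k`-th one. -/
noncomputable def below {n : ℕ} (p : Fin n → ℝ) (k : Fin n) : ℕ :=
  (Finset.univ.filter fun l => p l < p k).card

theorem below_mono {n : ℕ} (p : Fin n → ℝ) {k l : Fin n} (h : p k ≤ p l) :
    below p k ≤ below p l :=
  Finset.card_le_card fun m hm => by
    simp only [Finset.mem_filter, Finset.mem_univ, true_and] at hm ⊢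
    exact hm.trans_le h

theorem below_lt {n : ℕ} (p : Fin n → ℝ) {k l : Fin n} : below p k < below p l ↔ p k < p l := by
  refine ⟨fun h => ?_, fun h => ?_⟩
  · by_contra! h'
    exact absurd (below_mono p h') (by omega)
  · refine Finset.card_lt_card ((Finset.ssubset_iff_of_subset fun m hm => ?_).2 ⟨k, ?_, ?_⟩)
    · simp only [Finset.mem_filter, Finset.mem_univ, true_and] at hm ⊢
      exact hm.trans h
    · simpa using h
    · simp

theorem below_eq {n : ℕ} (p : Fin n → ℝ) {k l : Fin n} : below p k = below p l ↔ p k = p l := by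
  have h1 := below_lt p (k := k) (l := l)
  have h2 := below_lt p (k := l) (l := k)
  constructor
  · intro h
    exact le_antisymm (not_lt.1 fun h' => by have := h2.2 h'; omega)
      (not_lt.1 fun h' => by have := h1.2 h'; omega)
  · intro h
    exact le_antisymm (below_mono p h.le) (below_mono p h.ge)

/-- The number of distinct values of `p`. -/
noncomputable def levels {n : ℕ} (p : Fin n → ℕ) : ℕ := (Finset.univ.image p).card

/-- A perturbation of `p` can only split levels; if it splits none, the preorder on the
indices is unchanged. -/
theorem levels_below_le {n : ℕ} (p p' : Fin n → ℝ) (h : ∀ k l, p k < p l → p' k < p' l) :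
    levels (below p) ≤ levels (below p') ∧
      (levels (below p') = levels (below p) → below p' = below p) := by
  have hf : Function.FactorsThrough (below p) (below p') := by
    intro k l hkl
    rw [below_eq] at hkl ⊢
    rcases lt_trichotomy (p k) (p l) with h' | h' | h'
    · exact absurd hkl (h _ _ h').ne
    · exact h'
    · exact absurd hkl (h _ _ h').ne'
  obtain ⟨g, hg⟩ := (Function.factorsThrough_iff _).1 hf
  have himg : (Finset.univ.image (below p')).image g = Finset.univ.image (below p) := by
    rw [Finset.image_image, ← hg]
  refine ⟨?_, fun hc => ?_⟩
  · rw [levels, ← himg]; exact Finset.card_image_le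
  · have hinj : Set.InjOn g (Finset.univ.image (below p')) := by
      rw [← Finset.card_image_iff, himg]; exact hc.symm
    have hiff : ∀ k l, p' k < p' l ↔ p k < p l := by
      refine fun k l => ⟨fun h' => ?_, h k l⟩
      rcases lt_trichotomy (p k) (p l) with h'' | h'' | h''
      · exact h''
      · rw [← below_eq, hg] at h''
        have := hinj (by simp) (by simp) h''
        rw [below_eq] at this
        exact absurd this h'.ne
      · exact absurd (h _ _ h'') h'.asymm
    funext k
    unfold below
    simp only [hiff]

theorem one_le_levels {n : ℕ} (hn : 0 < n) (p : Fin n → ℕ) : 1 ≤ levels p :=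
  Finset.card_pos.2 ⟨p ⟨0, hn⟩, Finset.mem_image_of_mem _ (Finset.mem_univ _)⟩

theorem two_le_levels {n : ℕ} (p : Fin n → ℕ) {k l : Fin n} (h : p k ≠ p l) : 2 ≤ levels p :=
  Finset.one_lt_card.2 ⟨p k, by simp, p l, by simp, h⟩

theorem levels_le {n : ℕ} (p : Fin n → ℕ) : levels p ≤ n :=
  Finset.card_image_le.trans (by simp)

section upper
variable {G : Type*} [NormedAddCommGroup G] [InnerProductSpace ℝ G] {n : ℕ}

/-- The heights of the points of a configuration in the direction `E z`. -/
noncomputable def height (E : C(Conf G n, G)) (z : Conf G n) (k : Fin n) : ℝ :=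
  inner ℝ (E z) (z.1 k)

theorem continuous_height (E : C(Conf G n, G)) (k : Fin n) :
    Continuous fun z => height E z k := by
  have h : Continuous fun z : Conf G n => z.1 k :=
    (continuous_apply k).comp continuous_subtype_val
  exact E.continuous.inner h

/-- The configurations whose heights are ordered at least as `c` prescribes, and whose points
with equal `c` have distinct projections along `E z`. -/
def goodSet (E : C(Conf G n, G)) (c : Fin n → ℕ) : Set (Conf G n) :=
  {z | ∀ k l, (c k < c l → height E z k < height E z l) ∧
    (c k = c l → k ≠ l → perp (E z) (z.1 k) ≠ perp (E z) (z.1 l))}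

theorem isOpen_goodSet (E : C(Conf G n, G)) (c : Fin n → ℕ) : IsOpen (goodSet E c) := by
  have hp : ∀ k, Continuous fun z : Conf G n => perp (E z) (z.1 k) := by
    intro k
    have h : Continuous fun z : Conf G n => z.1 k :=
      (continuous_apply k).comp continuous_subtype_val
    exact h.sub ((continuous_height E k).smul E.continuous)
  simp only [goodSet, Set.ofPred_forall, Set.ofPred_and]
  refine isOpen_iInter_of_finite fun k => isOpen_iInter_of_finite fun l => IsOpen.inter ?_ ?_
  · exact isOpen_iInter_of_finite fun _ => isOpen_lt (continuous_height E k) (continuous_height E l)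
  · exact isOpen_iInter_of_finite fun _ => isOpen_iInter_of_finite fun _ =>
      isOpen_ne_fun (hp k) (hp l)

theorem mem_goodSet (E : C(Conf G n, G)) (z : Conf G n) : z ∈ goodSet E (below (height E z)) := by
  refine fun k l => ⟨fun h => (below_lt _).1 h, fun h hkl h' => hkl (z.2 ?_)⟩
  rw [below_eq] at h
  unfold height at h
  rw [perp, perp, h] at h'
  exact sub_left_injective h'

/-- The value of `E` at the first configuration of a pair in `S`. -/
def pairFst (E : C(Conf G n, G)) (S : Set (Conf G n × Conf G n)) : C(S, G) :=
  E.comp ⟨fun q => q.1.1, by fun_prop⟩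

/-- The value of `E` at the second configuration of a pair in `S`. -/
def pairSnd (E : C(Conf G n, G)) (S : Set (Conf G n × Conf G n)) : C(S, G) :=
  E.comp ⟨fun q => q.1.2, by fun_prop⟩

/-- The planner built from a unit vector field `E` on configurations, a nonvanishing field `Ep`
orthogonal to it, and a bit `B` selecting how lines in the directions `E z.1` and `E z.2` are
joined. The rank of a pair is the number of levels of both configurations plus the bit. -/
theorem upper_bound_generic (E Ep : C(Conf G n, G)) (hE : ∀ z, ‖E z‖ = 1) (hE0 : ∀ z, E z ≠ 0)
    (hEp : ∀ z, Ep z ≠ 0) (hEEp : ∀ z, inner ℝ (E z) (Ep z) = 0)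
    (B : Conf G n × Conf G n → Bool) (hB : IsOpen {z | B z = true})
    (hW : ∀ b, ∃ W : Set (Conf G n × Conf G n), IsOpen W ∧ (∀ z, B z = b → z ∈ W) ∧
      ∀ S, S ⊆ W → ∀ (a : Fin n → ℝ) (ha : Function.Injective a),
        (lineConf (pairFst E S) (fun q => hE0 q.1.1) a ha).Homotopic
          (lineConf (pairSnd E S) (fun q => hE0 q.1.2) a ha))
    (lo N : ℕ) (hrk : ∀ z : Conf G n × Conf G n,
      lo ≤ levels (below (height E z.1)) + levels (below (height E z.2)) + (B z).toNat ∧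
      levels (below (height E z.1)) + levels (below (height E z.2)) + (B z).toNat < lo + N) :
    ∃ U : Fin N → Set (Conf G n × Conf G n), (∀ i, IsOpen (U i)) ∧ (⋃ i, U i) = univ ∧
      ∀ i, HasMotionPlanner (U i) := by
  refine exists_cover_of_rank
    (fun z => (below (height E z.1), below (height E z.2), B z))
    (fun c : (Fin n → ℕ) × (Fin n → ℕ) × Bool => levels c.1 + levels c.2.1 + c.2.2.toNat)
    lo N hrk (fun z => ?_) (fun c => ?_)
  · have hlt : ∀ w : Conf G n, ∀ᶠ w' in 𝓝 w, ∀ k l,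
        height E w k < height E w l → height E w' k < height E w' l := fun w =>
      Filter.eventually_all.2 fun k => Filter.eventually_all.2 fun l => by
        by_cases h : height E w k < height E w l
        · filter_upwards [(isOpen_lt (continuous_height E k) (continuous_height E l)).mem_nhds h]
            with w' hw' _ using hw'
        · exact Filter.Eventually.of_forall fun w' h' => absurd h' h
    have hBz : ∀ᶠ z' in 𝓝 z, B z = true → B z' = true := by
      by_cases h : B z = true
      · filter_upwards [hB.mem_nhds h] with z' hz' _ using hz'
      · exact Filter.Eventually.of_forall fun w' h' => absurd h' h
    filter_upwards [continuous_fst.continuousAt.eventually (hlt z.1),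
      continuous_snd.continuousAt.eventually (hlt z.2), hBz] with z' h1 h2 h3 hr
    obtain ⟨h4, h5⟩ := levels_below_le _ _ h1
    obtain ⟨h6, h7⟩ := levels_below_le _ _ h2
    have h8 : (B z).toNat ≤ (B z').toNat := by
      rcases h : B z with _ | _
      · simp
      · simp [h3 h]
    rw [Prod.mk.injEq, Prod.mk.injEq]
    refine ⟨h5 (by omega), h7 (by omega), ?_⟩
    have h9 : (B z').toNat = (B z).toNat := by omega
    revert h9
    cases B z' <;> cases B z <;> simp
  · obtain ⟨c, c', b⟩ := c
    obtain ⟨W, hWo, hWb, hWh⟩ := hW b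
    let O : Set (Conf G n × Conf G n) :=
      (Prod.fst ⁻¹' goodSet E c ∩ Prod.snd ⁻¹' goodSet E c') ∩ W
    refine ⟨O, (((isOpen_goodSet E c).preimage continuous_fst).inter
      ((isOpen_goodSet E c').preimage continuous_snd)).inter hWo, fun z hz => ?_, ?_⟩
    · simp only [Prod.mk.injEq] at hz
      refine ⟨⟨?_, ?_⟩, hWb z hz.2.2⟩
      · rw [← hz.1]; exact mem_goodSet E z.1
      · rw [← hz.2.1]; exact mem_goodSet E z.2
    · -- `n * c k + k` orders the indices by `c`, breaking ties by the index itself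
      let a : (Fin n → ℕ) → Fin n → ℝ := fun c k => ((n * c k + k : ℕ) : ℝ)
      have ha : ∀ c, Function.Injective (a c) := by
        intro c k l h
        have h1 : n * c k + k = n * c l + l := Nat.cast_injective h
        have h2 := congrArg (· % n) h1
        simp only [Nat.mul_add_mod, Nat.mod_eq_of_lt k.2, Nat.mod_eq_of_lt l.2] at h2
        exact Fin.ext h2
      have hca : ∀ c : Fin n → ℕ, ∀ k l, c k < c l → a c k < a c l := by
        intro c k l h
        refine Nat.cast_lt.2 ?_
        have h1 := Nat.mul_le_mul_left n (Nat.succ_le_of_lt h)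
        rw [Nat.mul_succ] at h1
        have := k.2
        omega
      refine hasMotionPlanner_of_homotopic ⟨fun q : O => q.1.1, by fun_prop⟩
        ⟨fun q : O => q.1.2, by fun_prop⟩ (fun _ => rfl) (fun _ => rfl) ?_
      have s1 := homotopic_collapse (⟨fun q : O => q.1.1, by fun_prop⟩ : C(O, Conf G n))
        (pairFst E O) (fun q => hE q.1.1) (fun q => hE0 q.1.1) c
        (fun q k l h => (q.2.1.1 k l).1 h) (fun q k l h => (q.2.1.1 k l).2 h) (a c) (ha c) (hca c)
      have s2 := homotopic_collapse (⟨fun q : O => q.1.2, by fun_prop⟩ : C(O, Conf G n))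
        (pairSnd E O) (fun q => hE q.1.2) (fun q => hE0 q.1.2) c'
        (fun q k l h => (q.2.1.2 k l).1 h) (fun q k l h => (q.2.1.2 k l).2 h) (a c') (ha c')
        (hca c')
      -- a quarter turn through the orthogonal direction reorders the points on the line
      have s3 : ∀ c, (lineConf (pairSnd E O) (fun q => hE0 q.1.2) (a c) (ha c)).Homotopic
          (lineConf (pairSnd Ep O) (fun q => hEp q.1.2) (a 0) (ha 0)) := fun c =>
        homotopic_lineConf_of_orthogonal _ _ _ _ (fun q => hEEp q.1.2) _ _ _ _
      exact (s1.trans (hWh O inter_subset_right (a c) (ha c))).trans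
        (((s3 c).trans (s3 c').symm).trans s2.symm)

/-- `TC (Conf G n) ≤ 2n - 1`, by a constant direction. -/
theorem upper_bound_const {e e' : G} (he : ‖e‖ = 1) (he' : e' ≠ 0) (hee : inner ℝ e e' = 0)
    (hn : 0 < n) :
    ∃ U : Fin (2 * n - 1) → Set (Conf G n × Conf G n), (∀ i, IsOpen (U i)) ∧ (⋃ i, U i) = univ ∧
      ∀ i, HasMotionPlanner (U i) := by
  have he0 : e ≠ 0 := fun h => by simp [h] at he
  refine upper_bound_generic (ContinuousMap.const _ e) (ContinuousMap.const _ e') (fun _ => he)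
    (fun _ => he0) (fun _ => he') (fun _ => hee) (fun _ => false) (by simp)
    (fun b => ⟨univ, isOpen_univ, fun _ _ => mem_univ _, fun S _ a ha =>
      ContinuousMap.Homotopic.refl _⟩) 2 _ fun z => ?_
  have h1 := one_le_levels hn (below (height (ContinuousMap.const _ e) z.1))
  have h2 := one_le_levels hn (below (height (ContinuousMap.const _ e) z.2))
  have h3 := levels_le (below (height (ContinuousMap.const _ e) z.1))
  have h4 := levels_le (below (height (ContinuousMap.const _ e) z.2))
  simp only [Bool.toNat_false]
  omega

/-- `TC (Conf G n) ≤ 2n - 2` with `n = N + 2`, if `G` carries an isometry `J` with `J x ⟂ x`, by the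
direction from the zeroth to the first point. -/
theorem upper_bound_rotation (J : G →L[ℝ] G) (hJ : ∀ x, ‖J x‖ = ‖x‖)
    (hJo : ∀ x, inner ℝ x (J x) = 0) {N : ℕ} :
    ∃ U : Fin (2 * N + 2) → Set (Conf G (N + 2) × Conf G (N + 2)), (∀ i, IsOpen (U i)) ∧
      (⋃ i, U i) = univ ∧ ∀ i, HasMotionPlanner (U i) := by
  classical
  have hsub : ∀ z : Conf G (N + 2), z.1 1 - z.1 0 ≠ 0 := fun z =>
    sub_ne_zero.2 (z.2.ne (by simp))
  have hk : ∀ k, Continuous fun z : Conf G (N + 2) => z.1 k := fun k =>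
    (continuous_apply k).comp continuous_subtype_val
  let E : C(Conf G (N + 2), G) := ⟨fun z => ‖z.1 1 - z.1 0‖⁻¹ • (z.1 1 - z.1 0),
    (((hk 1).sub (hk 0)).norm.inv₀ fun z => norm_ne_zero_iff.2 (hsub z)).smul
      ((hk 1).sub (hk 0))⟩
  have hEz : ∀ z, E z = ‖z.1 1 - z.1 0‖⁻¹ • (z.1 1 - z.1 0) := fun z => rfl
  have hE : ∀ z, ‖E z‖ = 1 := fun z => by
    rw [hEz, norm_smul, norm_inv, norm_norm, inv_mul_cancel₀ (norm_ne_zero_iff.2 (hsub z))]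
  have ne0 : ∀ {x : G}, ‖x‖ = 1 → x ≠ 0 := fun h h' => by simp [h'] at h
  let Ep : C(Conf G (N + 2), G) := ⟨fun z => J (E z), J.continuous.comp E.continuous⟩
  have hEp : ∀ z, ‖Ep z‖ = 1 := fun z => (hJ _).trans (hE z)
  have h01 : ∀ z, below (height E z) 0 ≠ below (height E z) 1 := by
    intro z
    rw [Ne, below_eq]
    intro h
    have h1 : inner ℝ (E z) (z.1 1 - z.1 0) = 0 := by
      rw [inner_sub_right]; unfold height at h; rw [h, sub_self]
    rw [hEz, inner_smul_left, conj_trivial] at h1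
    have h2 := real_inner_self_pos.2 (hsub z)
    have h3 := norm_pos_iff.2 (hsub z)
    have : 0 < ‖z.1 1 - z.1 0‖⁻¹ * inner ℝ (z.1 1 - z.1 0) (z.1 1 - z.1 0) := by positivity
    linarith
  have hEc1 : Continuous fun z : Conf G (N + 2) × Conf G (N + 2) => E z.1 := by fun_prop
  have hEc2 : Continuous fun z : Conf G (N + 2) × Conf G (N + 2) => E z.2 := by fun_prop
  refine upper_bound_generic E Ep hE (fun z => ne0 (hE z)) (fun z => ne0 (hEp z))
    (fun z => hJo _) (fun z => decide (E z.1 ≠ - E z.2)) ?_ (fun b => ?_) 4 _ fun z => ?_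
  · simp only [decide_eq_true_eq]
    exact isOpen_ne_fun hEc1 hEc2.neg
  · cases b
    · -- antipodal directions are joined through the rotated direction
      refine ⟨{z | E z.2 ≠ - J (E z.1)}, isOpen_ne_fun hEc2 (J.continuous.comp hEc1).neg,
        fun z hz h => ?_, fun S hS a ha => ?_⟩
      · have hz' : E z.1 = - E z.2 := by simpa using hz
        have h1 : J (E z.1) = E z.1 := by rw [hz', ← neg_inj, ← hz', ← h, hz', neg_neg]
        have h2 := hJo (E z.1)
        rw [h1, real_inner_self_eq_norm_sq, hE] at h2
        norm_num at h2
      · refine (homotopic_lineConf_of_orthogonal _ (pairFst Ep S) _ (fun q => ne0 (hEp q.1.1))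
          (fun q => hJo _) a a ha ha).trans ?_
        refine (homotopic_lineConf_of_ne_neg _ _ (fun q => hE q.1.2) (fun q => hEp q.1.1)
          (fun q => hS q.2) _ _ a ha).symm
    · refine ⟨{z | E z.1 ≠ - E z.2}, isOpen_ne_fun hEc1 hEc2.neg, fun z hz => by simpa using hz,
        fun S hS a ha => ?_⟩
      exact homotopic_lineConf_of_ne_neg _ _ (fun q => hE q.1.1) (fun q => hE q.1.2)
        (fun q => hS q.2) _ _ a ha
  · have h1 := two_le_levels _ (h01 z.1)
    have h2 := two_le_levels _ (h01 z.2)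
    have h3 := levels_le (below (height E z.1))
    have h4 := levels_le (below (height E z.2))
    have h5 := Bool.toNat_le (decide (E z.1 ≠ - E z.2))
    omega

end upper

/-- An even-dimensional Euclidean space carries a complex structure. -/
theorem exists_rotation {d : ℕ} (hd : Even d) :
    ∃ J : EuclideanSpace ℝ (Fin d) →L[ℝ] EuclideanSpace ℝ (Fin d),
      (∀ x, ‖J x‖ = ‖x‖) ∧ ∀ x, inner ℝ x (J x) = 0 := by
  obtain ⟨m, rfl⟩ := hd
  -- exchange the two halves of the coordinates, with a sign on one of them
  let f : Fin (m + m) → Fin (m + m) := fun i =>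
    if h : (i : ℕ) < m then ⟨i + m, by omega⟩ else ⟨i - m, by omega⟩
  have hf : Function.Involutive f := by
    intro i
    ext
    by_cases h : (i : ℕ) < m
    · simp [f, h]
    · have : (i : ℕ) - m < m := by omega
      simp [f, h, this]
      omega
  let τ : Fin (m + m) ≃ Fin (m + m) := hf.toPerm
  have hτ : ∀ i, τ (τ i) = i := hf
  let s : Fin (m + m) → ℝ := fun i => if (i : ℕ) < m then 1 else -1
  have hs : ∀ i, s (τ i) = - s i := by
    intro i
    change s (f i) = - s i
    by_cases h : (i : ℕ) < m
    · simp [s, f, h]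
    · have : (i : ℕ) - m < m := by omega
      simp [s, f, h, this]
  have hs2 : ∀ i, s i ^ 2 = 1 := by
    intro i
    by_cases h : (i : ℕ) < m <;> simp [s, h]
  let J : EuclideanSpace ℝ (Fin (m + m)) →ₗ[ℝ] EuclideanSpace ℝ (Fin (m + m)) :=
    { toFun := fun x => WithLp.toLp 2 fun i => s i * x (τ i)
      map_add' := fun x y => by ext i; simp [mul_add]
      map_smul' := fun c x => by ext i; simp; ring }
  have hJ : ∀ x i, J x i = s i * x (τ i) := fun x i => rfl
  refine ⟨J.toContinuousLinearMap, fun x => ?_, fun x => ?_⟩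
  · rw [LinearMap.coe_toContinuousLinearMap', EuclideanSpace.norm_eq, EuclideanSpace.norm_eq]
    congr 1
    rw [← τ.sum_comp fun i => ‖x i‖ ^ 2]
    refine Finset.sum_congr rfl fun i _ => ?_
    rw [hJ, Real.norm_eq_abs, Real.norm_eq_abs, sq_abs, sq_abs, mul_pow, hs2, one_mul]
  · rw [LinearMap.coe_toContinuousLinearMap', PiLp.inner_apply]
    have h : ∑ i, inner ℝ (x i) (J x i) = - ∑ i, inner ℝ (x i) (J x i) := by
      conv_lhs => rw [← τ.sum_comp]
      rw [← Finset.sum_neg_distrib]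
      refine Finset.sum_congr rfl fun i _ => ?_
      rw [hJ, hJ, hs, hτ]
      simp only [RCLike.inner_apply, conj_trivial]
      ring
    linarith

end

/-- Farber–Yuzvinsky, Farber–Grant: the topological complexity of the configuration
space of `n` distinct ordered points in `ℝ^d` equals `2n - 1` for `d ≥ 3` odd and
`2n - 2` for `d ≥ 2` even. -/
theorem TC_conf_euclidean (d n : ℕ) (hd : 2 ≤ d) (hn : 2 ≤ n) :
    topologicalComplexity (Conf (EuclideanSpace ℝ (Fin d)) n) =
      if Odd d then (2 * n - 1 : ℕ) else (2 * n - 2 : ℕ) := by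
  let e : EuclideanSpace ℝ (Fin d) := EuclideanSpace.single ⟨0, by omega⟩ 1
  let e' : EuclideanSpace ℝ (Fin d) := EuclideanSpace.single ⟨1, by omega⟩ 1
  have he : ‖e‖ = 1 := by simp [e]
  have he' : ‖e'‖ = 1 := by simp [e']
  have hee : inner ℝ e e' = 0 := by
    rw [EuclideanSpace.inner_single_left, PiLp.single_apply]; simp
  refine le_antisymm (sInf_le ?_) (le_sInf ?_)
  · split_ifs with h
    · exact ⟨_, rfl, upper_bound_const he (fun h0 => by simp [h0] at he') hee (by omega)⟩
    · obtain ⟨J, hJ, hJo⟩ := exists_rotation (Nat.not_odd_iff_even.1 h)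
      obtain ⟨N, rfl⟩ := Nat.exists_eq_add_of_le' hn
      exact ⟨_, rfl, upper_bound_rotation J hJ hJo (N := N)⟩
  · rintro _ ⟨k, rfl, U, hUo, hUc, hUp⟩
    split_ifs with h
    · obtain ⟨N, rfl⟩ := Nat.exists_eq_add_of_le' (show 1 ≤ n by omega)
      have := lower_bound_odd (by simpa using h) (by simpa using hd) he U hUo hUc hUp
      exact Nat.cast_le.2 (by omega)
    · obtain ⟨N, rfl⟩ := Nat.exists_eq_add_of_le' hn
      have := lower_bound_general he U hUo hUc hUp
      exact Nat.cast_le.2 (by omega)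
end
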